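/- Let T = S² \ ⋃ᵢ Dᵢ be a Sierpiński curve realized in S² (so each Dᵢ is the interior in S² of a closed disk, the closures D̄ᵢ are pairwise disjoint, diam(Dᵢ) → 0, and ⋃ᵢ D̄ᵢ is dense in S²), and let S ⊆ T be a subset which, in the subspace topology, is a Sierpiński curve entwined in T. Then there exist subsets Sᵢ ⊆ T, each a Sierpiński curve in the subspace topology, with the following properties: (1) T = S ∪ ⋃ᵢ Sᵢ; (2) each intersection Sᵢ ∩ S is a peripheral circle of S and also a peripheral circle of Sᵢ, and every peripheral circle of S equals Sᵢ ∩ S for some i; (3) Sᵢ ∩ Sⱼ = ∅ for i ≠ j; (4) diam(Sᵢ) → 0, where diameters are measured in the metric on T induced from the Euclidean metric of ℝ³. -/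

import Mathlib

open Set Metric Filter Topology

/-- The unit sphere S² in ℝ³. -/
abbrev Sphere2 : Set (EuclideanSpace ℝ (Fin 3)) := Metric.sphere 0 1

/-- The closed unit disk in ℝ². -/
abbrev UnitDisk2 : Set (EuclideanSpace ℝ (Fin 2)) := Metric.closedBall 0 1

/-- The unit circle in ℝ². -/
abbrev UnitCircle : Set (EuclideanSpace ℝ (Fin 2)) := Metric.sphere 0 1

/-- A closed disk in S²: a subset homeomorphic to the closed unit disk in ℝ². -/
def IsClosedDisk (E : Set ↥Sphere2) : Prop := Nonempty (↥E ≃ₜ ↥UnitDisk2)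

/-- A family of open sets in S² realizing a Sierpiński curve as `S² \ ⋃ᵢ Dᵢ`:
each `Dᵢ` is the interior of a closed disk, the closures are pairwise disjoint,
the diameters tend to `0`, and the union of the closures is dense. -/
def IsSierpinskiFamily (D : ℕ → Set ↥Sphere2) : Prop :=
  (∀ i, ∃ E : Set ↥Sphere2, IsClosedDisk E ∧ D i = interior E) ∧
  (Pairwise fun i j => Disjoint (closure (D i)) (closure (D j))) ∧
  Tendsto (fun i => Metric.diam (D i)) atTop (𝓝 0) ∧
  Dense (⋃ i, closure (D i))

/-- A Sierpiński curve: a space homeomorphic to `S² \ ⋃ᵢ Dᵢ` for some Sierpiński family. -/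
def IsSierpinskiCurve (X : Type*) [TopologicalSpace X] : Prop :=
  ∃ D : ℕ → Set ↥Sphere2, IsSierpinskiFamily D ∧ Nonempty (X ≃ₜ ↥((⋃ i, D i)ᶜ))

/-- A peripheral circle of the space `X`: a subspace homeomorphic to the circle whose
complement is connected. -/
def IsPeriphCircle (X : Type*) [TopologicalSpace X] (γ : Set X) : Prop :=
  Nonempty (↥γ ≃ₜ ↥UnitCircle) ∧ IsConnected γᶜ

/-- `γ` is a peripheral circle of the subset `S` (with its subspace topology). -/
def IsPeriphCircleIn {X : Type*} [TopologicalSpace X] (S γ : Set X) : Prop :=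
  γ ⊆ S ∧ IsPeriphCircle ↥S (Subtype.val ⁻¹' γ)

/-!
A continuous logarithm of `z - p` exists on a closed plane set exactly when that set does not
separate `p` from infinity. This turns separation questions on the sphere into gluing questions for
logarithms, and gives Janiszewski's theorem and the Jordan curve theorem. The Schoenflies theorem
follows by extending the Riemann map of a Jordan domain to the boundary circle.

Let `S` be the image of a standard curve `(⋃ Dᵢ)ᶜ` under an embedding `η`. Each `η (∂Dᵢ)` is a
Jordan curve `Jᵢ`; let `Vᵢ` be the component of its complement that does not meet `S`. By
Schoenflies, `closure Vᵢ` is a closed disk, so `η` extends over `Dᵢ`; as the disks form a null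
sequence, these extensions patch to an injection of the sphere into itself, which is onto by
invariance of domain. Hence the sphere is the union of `S` and the disks `closure Vᵢ`. Since `S` is
entwined in `T`, each disk removed from the sphere to form `T` lies either in `Vᵢ` or off its
closure, so `Sᵢ = T ∩ closure Vᵢ` is the sphere with a null sequence of open disks removed, one of
them the other side of `Jᵢ`.
-/

instance fact_finrank_euclideanSpace_three :
    Fact (Module.finrank ℝ (EuclideanSpace ℝ (Fin 3)) = 2 + 1) := ⟨by simp⟩

instance preconnectedSpace_sphere2 : PreconnectedSpace ↥Sphere2 :=
  Subtype.preconnectedSpace (isPreconnected_sphere (by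
    rw [← Module.finrank_eq_rank, finrank_euclideanSpace_fin]
    norm_num) 0 1)

instance locallyConnectedSpace_sphere2 : LocallyConnectedSpace ↥Sphere2 :=
  ChartedSpace.locallyConnectedSpace (EuclideanSpace ℝ (Fin 2)) _

/-! ### General topology -/

section Components

variable {X : Type*} [TopologicalSpace X]

lemma closure_connectedComponentIn_inter_subset {F : Set X} {p : X} :
    closure (connectedComponentIn F p) ∩ F ⊆ connectedComponentIn F p := by
  rintro x ⟨hx, hxF⟩
  by_cases hp : p ∈ F
  · have : IsPreconnected (insert x (connectedComponentIn F p)) :=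
      isPreconnected_connectedComponentIn.subset_closure (subset_insert _ _)
        (insert_subset hx subset_closure)
    exact this.subset_connectedComponentIn (mem_insert_of_mem _ (mem_connectedComponentIn hp))
      (insert_subset hxF (connectedComponentIn_subset F p)) (mem_insert _ _)
  · simp [connectedComponentIn_eq_empty hp] at hx

lemma frontier_connectedComponentIn_compl_subset [LocallyConnectedSpace X] {K : Set X}
    (hK : IsClosed K) {p : X} : frontier (connectedComponentIn Kᶜ p) ⊆ K := by
  intro x hx
  by_contra hxK
  rw [hK.isOpen_compl.connectedComponentIn.frontier_eq] at hx
  exact hx.2 (closure_connectedComponentIn_inter_subset ⟨hx.1, hxK⟩)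

end Components

section InvFunOn

variable {X Y : Type*} [TopologicalSpace X] [TopologicalSpace Y]

lemma continuousOn_invFunOn_of_isCompact [Nonempty X] [T2Space Y] {φ : X → Y} {s : Set X}
    (hs : IsCompact s) (hφ : ContinuousOn φ s) (hi : InjOn φ s) :
    ContinuousOn (Function.invFunOn φ s) (φ '' s) := by
  have hinv : ∀ x ∈ s, Function.invFunOn φ s (φ x) = x := fun x hx => hi.leftInvOn_invFunOn hx
  rw [continuousOn_iff_isClosed]
  intro t ht
  refine ⟨φ '' (t ∩ s), ((hs.inter_left ht).image_of_continuousOn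
    (hφ.mono inter_subset_right)).isClosed, Subset.antisymm ?_ ?_⟩
  · rintro _ ⟨hy, x, hx, rfl⟩
    rw [mem_preimage, hinv x hx] at hy
    exact ⟨⟨x, ⟨hy, hx⟩, rfl⟩, x, hx, rfl⟩
  · rintro _ ⟨⟨x, ⟨hxt, hx⟩, rfl⟩, -⟩
    exact ⟨by rwa [mem_preimage, hinv x hx], x, hx, rfl⟩

lemma exists_continuousOn_lift {Z : Type*} [TopologicalSpace Z] [Nonempty X] [T2Space Y]
    {φ : X → Y} {s : Set X} {g : Z → Y} {t : Set Z} (hs : IsCompact s)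
    (hφ : ContinuousOn φ s) (hi : InjOn φ s) (hg : ContinuousOn g t) (hm : MapsTo g t (φ '' s)) :
    ∃ h : Z → X, ContinuousOn h t ∧ MapsTo h t s ∧ EqOn (φ ∘ h) g t :=
  ⟨Function.invFunOn φ s ∘ g, (continuousOn_invFunOn_of_isCompact hs hφ hi).comp hg hm,
    fun _ hx => Function.invFunOn_mem (hm hx), fun _ hx => Function.invFunOn_eq (hm hx)⟩

end InvFunOn

section DomRestrict

variable {X Y : Type*} [TopologicalSpace X] [TopologicalSpace Y]

lemma isClosedEmbedding_domRestrict [T2Space Y] {f : X → Y} {s : Set X} (hs : IsCompact s)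
    (hf : ContinuousOn f s) (hi : InjOn f s) : IsClosedEmbedding (s.domRestrict f) :=
  have := isCompact_iff_compactSpace.1 hs
  (continuousOn_iff_continuous_domRestrict.1 hf).isClosedEmbedding (injOn_iff_injective.1 hi)

lemma exists_continuousOn_injOn_image_eq [Nonempty Y] {s : Set X} {t : Set Y} (e : ↥s ≃ₜ ↥t) :
    ∃ f : X → Y, ContinuousOn f s ∧ InjOn f s ∧ f '' s = t := by
  obtain ⟨f, hf⟩ : ∃ f : X → Y, s.domRestrict f = Subtype.val ∘ e :=
    ⟨Function.extend Subtype.val (Subtype.val ∘ e) fun _ => Classical.arbitrary Y,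
      funext fun x => Subtype.val_injective.extend_apply _ _ x⟩
  refine ⟨f, continuousOn_iff_continuous_domRestrict.2 ?_, injOn_iff_injective.2 ?_, ?_⟩
  · exact hf ▸ continuous_subtype_val.comp e.continuous
  · exact hf ▸ Subtype.val_injective.comp e.injective
  · rw [← range_domRestrict, hf, e.surjective.range_comp, Subtype.range_val]

end DomRestrict

lemma exists_continuous_eqOn_of_isClosed.{u, v} {X : Type u} {Y : Type v} [TopologicalSpace X]
    [NormalSpace X] [TopologicalSpace Y] [TietzeExtension.{u, v} Y] {K : Set X} (hK : IsClosed K)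
    {g : X → Y} (hg : ContinuousOn g K) : ∃ G : X → Y, Continuous G ∧ EqOn G g K := by
  obtain ⟨G, hG⟩ := ContinuousMap.exists_restrict_eq hK
    ⟨K.domRestrict g, continuousOn_iff_continuous_domRestrict.1 hg⟩
  exact ⟨G, G.continuous, fun x hx => by simpa using DFunLike.congr_fun hG ⟨x, hx⟩⟩

/-! ### Continuous logarithms -/

/-- `f` has a continuous logarithm on `s`, that is, it lifts through `Complex.exp`. In particular
`f` has no zero on `s`. -/
def HasLogOn {X : Type*} [TopologicalSpace X] (f : X → ℂ) (s : Set X) : Prop :=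
  ∃ g : X → ℂ, ContinuousOn g s ∧ ∀ x ∈ s, Complex.exp (g x) = f x

namespace HasLogOn

variable {X Y : Type*} [TopologicalSpace X] [TopologicalSpace Y] {f f₁ f₂ : X → ℂ} {s t : Set X}

lemma mono (h : HasLogOn f t) (hst : s ⊆ t) : HasLogOn f s := by
  obtain ⟨g, hg, he⟩ := h
  exact ⟨g, hg.mono hst, fun x hx => he x (hst hx)⟩

lemma congr (h : HasLogOn f₁ s) (hf : EqOn f₂ f₁ s) : HasLogOn f₂ s := by
  obtain ⟨g, hg, he⟩ := h
  exact ⟨g, hg, fun x hx => (he x hx).trans (hf hx).symm⟩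

lemma mul (h₁ : HasLogOn f₁ s) (h₂ : HasLogOn f₂ s) : HasLogOn (fun x => f₁ x * f₂ x) s := by
  obtain ⟨g₁, hg₁, he₁⟩ := h₁
  obtain ⟨g₂, hg₂, he₂⟩ := h₂
  exact ⟨fun x => g₁ x + g₂ x, hg₁.add hg₂, fun x hx => by
    rw [Complex.exp_add, he₁ x hx, he₂ x hx]⟩

lemma zpow (h : HasLogOn f s) (n : ℤ) : HasLogOn (fun x => f x ^ n) s := by
  obtain ⟨g, hg, he⟩ := h
  exact ⟨fun x => n * g x, continuousOn_const.mul hg, fun x hx => by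
    rw [Complex.exp_int_mul, he x hx]⟩

lemma inv (h : HasLogOn f s) : HasLogOn (fun x => (f x)⁻¹) s := by
  simpa using h.zpow (-1)

lemma div (h₁ : HasLogOn f₁ s) (h₂ : HasLogOn f₂ s) : HasLogOn (fun x => f₁ x / f₂ x) s := by
  simpa [div_eq_mul_inv] using h₁.mul h₂.inv

lemma comp {f : Y → ℂ} {t : Set Y} (h : HasLogOn f t) {φ : X → Y} (hφ : ContinuousOn φ s)
    (hm : MapsTo φ s t) : HasLogOn (fun x => f (φ x)) s := by
  obtain ⟨g, hg, he⟩ := h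
  exact ⟨fun x => g (φ x), hg.comp hφ hm, fun x hx => he _ (hm hx)⟩

lemma const {c : ℂ} (hc : c ≠ 0) : HasLogOn (fun _ : X => c) s :=
  ⟨fun _ => Complex.log c, continuousOn_const, fun _ _ => Complex.exp_log hc⟩

lemma of_mem_slitPlane (hf : ContinuousOn f s) (h : ∀ x ∈ s, f x ∈ Complex.slitPlane) :
    HasLogOn f s :=
  ⟨fun x => Complex.log (f x), hf.clog h, fun x hx =>
    Complex.exp_log (Complex.slitPlane_ne_zero (h x hx))⟩

lemma of_norm_sub_one_lt (hf : ContinuousOn f s) (h : ∀ x ∈ s, ‖f x - 1‖ < 1) : HasLogOn f s :=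
  of_mem_slitPlane hf fun x hx => Complex.ball_one_subset_slitPlane (by
    simpa [dist_eq_norm] using h x hx)

end HasLogOn

lemma exists_int_of_exp_eq {X : Type*} [TopologicalSpace X] {g₁ g₂ : X → ℂ} {C : Set X}
    (hC : IsPreconnected C) (h₁ : ContinuousOn g₁ C) (h₂ : ContinuousOn g₂ C)
    (he : ∀ x ∈ C, Complex.exp (g₁ x) = Complex.exp (g₂ x)) :
    ∃ n : ℤ, ∀ x ∈ C, g₁ x = g₂ x + n * (2 * Real.pi * Complex.I) := by
  rcases C.eq_empty_or_nonempty with rfl | ⟨x₀, hx₀⟩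
  · exact ⟨0, by simp⟩
  have hm : MapsTo (fun x => g₁ x - g₂ x) C
      (AddSubgroup.zmultiples (2 * Real.pi * Complex.I) : Set ℂ) := by
    intro x hx
    obtain ⟨n, hn⟩ := Complex.exp_eq_exp_iff_exists_int.1 (he x hx)
    refine ⟨n, ?_⟩
    simp [hn]
  obtain ⟨n, hn⟩ := Complex.exp_eq_exp_iff_exists_int.1 (he x₀ hx₀)
  refine ⟨n, fun x hx => ?_⟩
  have := hC.constant_of_mapsTo (T := (AddSubgroup.zmultiples (2 * Real.pi * Complex.I) : Set ℂ))
    ⟨NormedSpace.discreteTopology_zmultiples _⟩ (h₁.sub h₂) hm hx hx₀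
  have h' : g₁ x - g₂ x = g₁ x₀ - g₂ x₀ := this
  linear_combination h' + hn

namespace HasLogOn

variable {X Y : Type*} [TopologicalSpace X] [TopologicalSpace Y] {f f₁ f₂ : X → ℂ} {s t : Set X}

lemma glue_of_eqOn {g₁ g₂ : X → ℂ}
    (hU : ∀ g : X → ℂ, ContinuousOn g s → ContinuousOn g t → ContinuousOn g (s ∪ t))
    (h₁ : ContinuousOn g₁ s) (h₂ : ContinuousOn g₂ t)
    (e₁ : ∀ x ∈ s, Complex.exp (g₁ x) = f x) (e₂ : ∀ x ∈ t, Complex.exp (g₂ x) = f x)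
    (hg : ∀ x ∈ s ∩ t, g₁ x = g₂ x) : HasLogOn f (s ∪ t) := by
  classical
  refine ⟨s.piecewise g₁ g₂, hU _ ?_ ?_, ?_⟩
  · exact h₁.congr (piecewise_eqOn s g₁ g₂)
  · refine h₂.congr fun x hx => ?_
    by_cases hs : x ∈ s
    · simp [hs, hg x ⟨hs, hx⟩]
    · simp [hs]
  · intro x hx
    by_cases hs : x ∈ s
    · simp [hs, e₁ x hs]
    · simp [hs, e₂ x (hx.resolve_left hs)]

lemma union_of_eqOn (hs : IsClosed s) (ht : IsClosed t) {g₁ g₂ : X → ℂ}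
    (h₁ : ContinuousOn g₁ s) (h₂ : ContinuousOn g₂ t)
    (e₁ : ∀ x ∈ s, Complex.exp (g₁ x) = f x) (e₂ : ∀ x ∈ t, Complex.exp (g₂ x) = f x)
    (hg : ∀ x ∈ s ∩ t, g₁ x = g₂ x) : HasLogOn f (s ∪ t) :=
  glue_of_eqOn (fun _ a b => a.union_of_isClosed b hs ht) h₁ h₂ e₁ e₂ hg

lemma union_of_continuousOn_union
    (hU : ∀ g : X → ℂ, ContinuousOn g s → ContinuousOn g t → ContinuousOn g (s ∪ t))
    (hc : IsPreconnected (s ∩ t)) (h₁ : HasLogOn f s) (h₂ : HasLogOn f t) :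
    HasLogOn f (s ∪ t) := by
  obtain ⟨g₁, hg₁, e₁⟩ := h₁
  obtain ⟨g₂, hg₂, e₂⟩ := h₂
  obtain ⟨n, hn⟩ := exists_int_of_exp_eq hc (hg₁.mono inter_subset_left)
    (hg₂.mono inter_subset_right) fun x hx => (e₁ x hx.1).trans (e₂ x hx.2).symm
  refine glue_of_eqOn (g₂ := fun x => g₂ x + n * (2 * Real.pi * Complex.I)) hU hg₁
    (hg₂.add continuousOn_const) e₁ (fun x hx => ?_) hn
  rw [Complex.exp_add, Complex.exp_int_mul_two_pi_mul_I, mul_one, e₂ x hx]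

lemma union_of_isClosed (hs : IsClosed s) (ht : IsClosed t) (hc : IsPreconnected (s ∩ t))
    (h₁ : HasLogOn f s) (h₂ : HasLogOn f t) : HasLogOn f (s ∪ t) :=
  union_of_continuousOn_union (fun _ a b => a.union_of_isClosed b hs ht) hc h₁ h₂

lemma union_of_isOpen (hs : IsOpen s) (ht : IsOpen t) (hc : IsPreconnected (s ∩ t))
    (h₁ : HasLogOn f s) (h₂ : HasLogOn f t) : HasLogOn f (s ∪ t) :=
  union_of_continuousOn_union (fun _ a b => a.union_of_isOpen b hs ht) hc h₁ h₂

lemma of_homotopy {F : ℝ → X → ℂ}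
    (hF : ContinuousOn (fun p : ℝ × X => F p.1 p.2) (Icc 0 1 ×ˢ s))
    (h0 : ∀ t ∈ Icc (0 : ℝ) 1, ∀ x ∈ s, F t x ≠ 0) (h : HasLogOn (F 0) s) :
    HasLogOn (F 1) s := by
  classical
  obtain ⟨g, hg, he⟩ := h
  let H : C(unitInterval × s, {z : ℂ // z ≠ 0}) :=
    ⟨fun p => ⟨F p.1 p.2, h0 _ p.1.2 _ p.2.2⟩, by
      refine Continuous.subtype_mk ?_ _
      refine hF.comp_continuous (f := fun p : unitInterval × s => ((p.1 : ℝ), (p.2 : X)))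
        (by fun_prop) fun p => ⟨p.1.2, p.2.2⟩⟩
  let f₀ : C(s, ℂ) := ⟨s.domRestrict g, continuousOn_iff_continuous_domRestrict.1 hg⟩
  have H0 : ∀ a, H (0, a) = (⟨_, Complex.exp_ne_zero (f₀ a)⟩ : {z : ℂ // z ≠ 0}) := fun a =>
    Subtype.ext (he a a.2).symm
  let G := Complex.isCoveringMap_exp.liftHomotopy H f₀ H0
  refine ⟨fun x => if hx : x ∈ s then G (1, ⟨x, hx⟩) else 0, ?_, fun x hx => ?_⟩
  · rw [continuousOn_iff_continuous_domRestrict]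
    have : Continuous fun a : s => G (1, a) := by fun_prop
    convert this using 1
    ext a
    simp
  · have := congrFun (Complex.isCoveringMap_exp.liftHomotopy_lifts H f₀ H0) (1, ⟨x, hx⟩)
    have h2 : Complex.exp (G (1, ⟨x, hx⟩)) = F 1 x := congrArg Subtype.val this
    simpa only [hx, dif_pos] using h2

lemma of_convex {E : Type*} [NormedAddCommGroup E] [NormedSpace ℝ E] {s : Set E}
    (hs : Convex ℝ s) {f : E → ℂ} (hf : ContinuousOn f s) (h0 : ∀ x ∈ s, f x ≠ 0) :
    HasLogOn f s := by
  rcases s.eq_empty_or_nonempty with rfl | ⟨x₀, hx₀⟩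
  · exact ⟨0, by simp⟩
  have hm : ∀ t ∈ Icc (0 : ℝ) 1, ∀ x ∈ s, x₀ + t • (x - x₀) ∈ s := fun t ht x hx =>
    hs.add_smul_sub_mem hx₀ hx ht
  have := of_homotopy (s := s) (F := fun t x => f (x₀ + t • (x - x₀)))
    (hf.comp (by fun_prop) fun p hp => hm _ hp.1 _ hp.2)
    (fun t ht x hx => h0 _ (hm t ht x hx)) (by simpa using const (h0 _ hx₀))
  simpa using this

lemma image_iff [T2Space Y] {φ : X → Y} (hs : IsCompact s) (hφ : ContinuousOn φ s)
    (hi : InjOn φ s) {f : Y → ℂ} : HasLogOn f (φ '' s) ↔ HasLogOn (fun x => f (φ x)) s := by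
  refine ⟨fun h => h.comp hφ (mapsTo_image φ s), fun ⟨g, hg, he⟩ => ?_⟩
  rcases s.eq_empty_or_nonempty with rfl | ⟨x₀, -⟩
  · exact ⟨0, by simp⟩
  have : Nonempty X := ⟨x₀⟩
  have hinv : ∀ x ∈ s, Function.invFunOn φ s (φ x) = x := fun x hx => hi.leftInvOn_invFunOn hx
  refine ⟨fun y => g (Function.invFunOn φ s y),
    hg.comp (continuousOn_invFunOn_of_isCompact hs hφ hi) ?_, ?_⟩
  · rintro _ ⟨x, hx, rfl⟩
    rwa [hinv x hx]
  · rintro _ ⟨x, hx, rfl⟩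
    simp only [hinv x hx, he x hx]

end HasLogOn

/-- A set on which every continuous nonvanishing function has a continuous logarithm: the
substitute for simple connectedness that makes sense for arbitrary compact sets. -/
def LogAcyclic {X : Type*} [TopologicalSpace X] (s : Set X) : Prop :=
  ∀ f : X → ℂ, ContinuousOn f s → (∀ x ∈ s, f x ≠ 0) → HasLogOn f s

lemma LogAcyclic.image_of_convex {X E : Type*} [TopologicalSpace X] [T2Space X]
    [NormedAddCommGroup E] [NormedSpace ℝ E] {s : Set E} (hs : Convex ℝ s) (hc : IsCompact s)
    {φ : E → X} (hφ : ContinuousOn φ s) (hi : InjOn φ s) : LogAcyclic (φ '' s) := fun _ hf h0 =>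
  (HasLogOn.image_iff hc hφ hi).2 (HasLogOn.of_convex hs (hf.comp hφ (mapsTo_image φ s))
    fun _ hx => h0 _ (mem_image_of_mem φ hx))

lemma eq_zero_of_hasLogOn_zpow_sphere {p : ℂ} {r : ℝ} (hr : 0 < r) {n : ℤ}
    (h : HasLogOn (fun z => (z - p) ^ n) (sphere p r)) : n = 0 := by
  obtain ⟨g, hg, he⟩ := h
  have hm : ∀ t : ℝ, circleMap p r t ∈ sphere p r := circleMap_mem_sphere p hr.le
  have hgc : Continuous fun t : ℝ => g (circleMap p r t) :=
    hg.comp_continuous (continuous_circleMap p r) hm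
  obtain ⟨k, hk⟩ := exists_int_of_exp_eq (C := (univ : Set ℝ)) isPreconnected_univ
    hgc.continuousOn (g₂ := fun t : ℝ => n * (Complex.log r + t * Complex.I)) (by fun_prop)
    (fun t _ => by
      rw [he _ (hm t), Complex.exp_int_mul, Complex.exp_add, Complex.exp_log (by simp [hr.ne'])]
      simp [circleMap])
  have h0 := hk 0 (mem_univ _)
  have h1 := hk (2 * Real.pi) (mem_univ _)
  have hper : circleMap p r (2 * Real.pi) = circleMap p r 0 := by
    simpa using (periodic_circleMap p r) 0
  rw [hper, h0] at h1
  have : (n : ℂ) * (2 * Real.pi * Complex.I) = 0 := by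
    push_cast at h1
    linear_combination -h1
  simpa [Real.pi_ne_zero] using this

lemma eq_zero_of_eqOn_zpow_compl {F : ℂ → ℂ} (hF : Continuous F) (hF0 : ∀ z, F z ≠ 0) {O : Set ℂ}
    (hO : Bornology.IsBounded O) {p : ℂ} {n : ℤ} (hFO : EqOn F (fun z => (z - p) ^ n) Oᶜ) :
    n = 0 := by
  obtain ⟨R, hRpos, hR⟩ := hO.subset_ball_lt 0 p
  refine eq_zero_of_hasLogOn_zpow_sphere hRpos
    (((HasLogOn.of_convex convex_univ hF.continuousOn fun z _ => hF0 z).mono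
      (subset_univ (sphere p R))).congr fun z hz => (hFO fun hzO => ?_).symm)
  exact (mem_ball.1 (hR hzO)).ne (mem_sphere.1 hz)

/-- A form of Eilenberg's criterion. The factor `u` allows one to treat several powers
`(z - pᵢ) ^ nᵢ` at once, the other `pᵢ` lying off `O ∪ K`. -/
lemma eq_zero_of_hasLogOn_zpow_mul {K O : Set ℂ} (hK : IsClosed K) (hO : IsOpen O)
    (hOb : Bornology.IsBounded O) (hOK : frontier O ⊆ K) {p : ℂ} (hp : p ∈ O) {n : ℤ}
    {u : ℂ → ℂ} (hu : ContinuousOn u (O ∪ K)) (hu0 : ∀ z ∈ O ∪ K, u z ≠ 0)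
    (h : HasLogOn (fun z => (z - p) ^ n * u z) (K ∩ closure O)) : n = 0 := by
  classical
  obtain ⟨g, hg, he⟩ := h
  obtain ⟨L, hL, hLg⟩ := exists_continuous_eqOn_of_isClosed (hK.inter isClosed_closure) hg
  have hcl : closure O ⊆ O ∪ K := by
    rw [closure_eq_self_union_frontier]
    exact union_subset_union_right _ hOK
  have hne : ∀ z ∉ O, z - p ≠ 0 := fun z hz => sub_ne_zero.2 fun h => hz (h ▸ hp)
  let F : ℂ → ℂ := O.piecewise (fun z => Complex.exp (L z) / u z) fun z => (z - p) ^ n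
  have hF : Continuous F := by
    refine continuous_piecewise (fun z hz => ?_) ?_ ?_
    · have hzc := frontier_subset_closure hz
      rw [hLg ⟨hOK hz, hzc⟩, he z ⟨hOK hz, hzc⟩, mul_div_cancel_right₀ _ (hu0 z (Or.inr (hOK hz)))]
    · exact (Complex.continuous_exp.comp hL).continuousOn.div (hu.mono hcl)
        fun z hz => hu0 z (hcl hz)
    · rw [hO.isClosed_compl.closure_eq]
      exact ContinuousOn.zpow₀ (by fun_prop) n fun z hz => Or.inl (hne z hz)
  refine eq_zero_of_eqOn_zpow_compl hF (fun z => ?_) hOb (piecewise_eqOn_compl O _ _)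
  by_cases hz : z ∈ O
  · simp only [F, piecewise_eq_of_mem _ _ _ hz]
    exact div_ne_zero (Complex.exp_ne_zero _) (hu0 z (Or.inl hz))
  · simp only [F, piecewise_eq_of_notMem _ _ _ hz]
    exact zpow_ne_zero _ (hne z hz)

lemma hasLogOn_sub_of_norm_lt {K : Set ℂ} {p : ℂ} (h : ∀ z ∈ K, ‖z‖ < ‖p‖) :
    HasLogOn (fun z => z - p) K := by
  rcases eq_or_ne p 0 with rfl | hp
  · exact ⟨0, by fun_prop, fun z hz => absurd (h z hz) (by simp)⟩
  have h1 : HasLogOn (fun z => 1 - z / p) K := by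
    refine HasLogOn.of_norm_sub_one_lt (by fun_prop) fun z hz => ?_
    have : (1 - z / p - 1) = -(z / p) := by ring
    rw [this, norm_neg, norm_div, div_lt_one (norm_pos_iff.2 hp)]
    exact h z hz
  refine (h1.mul (HasLogOn.const (neg_ne_zero.2 hp))).congr fun z _ => ?_
  field_simp
  ring

lemma HasLogOn.sub_of_dist_lt {K : Set ℂ} {p q : ℂ} (h : HasLogOn (fun z => z - p) K)
    (hpq : ∀ z ∈ K, dist p q < dist z p) : HasLogOn (fun z => z - q) K := by
  have hne : ∀ z ∈ K, z - p ≠ 0 := fun z hz h0 => by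
    have := hpq z hz
    rw [sub_eq_zero.1 h0, dist_self] at this
    exact absurd dist_nonneg this.not_ge
  have h1 : HasLogOn (fun z => (z - q) / (z - p)) K := by
    refine HasLogOn.of_norm_sub_one_lt (ContinuousOn.div (by fun_prop) (by fun_prop) hne)
      fun z hz => ?_
    have : (z - q) / (z - p) - 1 = (p - q) / (z - p) := by
      field_simp [hne z hz]
      ring
    rw [this, norm_div, div_lt_one (norm_pos_iff.2 (hne z hz))]
    simpa [dist_eq_norm] using hpq z hz
  exact (h1.mul h).congr fun z hz => by simp [div_mul_cancel₀ _ (hne z hz)]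

lemma eventually_hasLogOn_sub_iff {K : Set ℂ} (hK : IsClosed K) {p : ℂ} (hp : p ∉ K) :
    ∀ᶠ q in 𝓝 p, (HasLogOn (fun z => z - p) K ↔ HasLogOn (fun z => z - q) K) := by
  obtain ⟨ε, hε, hb⟩ := Metric.isOpen_iff.1 hK.isOpen_compl p hp
  have hd : ∀ z ∈ K, ε ≤ dist z p := fun z hz => le_of_not_gt fun hlt => hb hlt hz
  filter_upwards [ball_mem_nhds p (half_pos hε)] with q hq
  rw [mem_ball] at hq
  refine ⟨fun h => h.sub_of_dist_lt fun z hz => ?_, fun h => h.sub_of_dist_lt fun z hz => ?_⟩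
  · rw [dist_comm]
    linarith [hd z hz]
  · linarith [hd z hz, dist_triangle z q p]

lemma eventually_cobounded_hasLogOn_sub {K : Set ℂ} (hK : Bornology.IsBounded K) :
    ∀ᶠ p in Bornology.cobounded ℂ, HasLogOn (fun z => z - p) K := by
  obtain ⟨R, hR⟩ := hK.subset_ball 0
  filter_upwards [eventually_cobounded_le_norm R] with p hp
  exact hasLogOn_sub_of_norm_lt fun z hz => (mem_ball_zero_iff.1 (hR hz)).trans_le hp

/-! ### Separation of points of the sphere -/

/-- Stereographic projection from `q`, with values in the complex plane. -/
noncomputable def sphereChart (q : ↥Sphere2) : OpenPartialHomeomorph ↥Sphere2 ℂ :=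
  (stereographic' 2 q).transHomeomorph Complex.orthonormalBasisOneI.repr.symm.toHomeomorph

section SphereChart

variable (q : ↥Sphere2)

@[simp] lemma sphereChart_source : (sphereChart q).source = {q}ᶜ := by
  simp [sphereChart]

@[simp] lemma sphereChart_target : (sphereChart q).target = univ := by
  simp [sphereChart]

lemma continuousOn_sphereChart : ContinuousOn (sphereChart q) {q}ᶜ := by
  simpa using (sphereChart q).continuousOn

lemma continuous_sphereChart_symm : Continuous (sphereChart q).symm := by
  simpa [continuousOn_univ] using (sphereChart q).continuousOn_symm

lemma sphereChart_symm_ne (z : ℂ) : (sphereChart q).symm z ≠ q := by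
  simpa using (sphereChart q).map_target (x := z) (by simp)

@[simp] lemma sphereChart_right_inv (z : ℂ) : sphereChart q ((sphereChart q).symm z) = z :=
  (sphereChart q).right_inv (by simp)

variable {q}

lemma sphereChart_left_inv {x : ↥Sphere2} (hx : x ≠ q) :
    (sphereChart q).symm (sphereChart q x) = x :=
  (sphereChart q).left_inv (by simpa using hx)

lemma injOn_sphereChart : InjOn (sphereChart q) {q}ᶜ := by
  simpa using (sphereChart q).injOn

lemma injective_sphereChart_symm : Function.Injective (sphereChart q).symm := fun z w h => by
  rw [← sphereChart_right_inv q z, h, sphereChart_right_inv]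

lemma isCompact_sphereChart_image {K : Set ↥Sphere2} (hK : IsClosed K) (hq : q ∉ K) :
    IsCompact (sphereChart q '' K) :=
  hK.isCompact.image_of_continuousOn
    ((continuousOn_sphereChart q).mono (subset_compl_singleton_iff.2 hq))

lemma sphereChart_image_eq {K : Set ↥Sphere2} (hq : q ∉ K) :
    sphereChart q '' K = (sphereChart q).symm ⁻¹' K := by
  ext z
  constructor
  · rintro ⟨x, hx, rfl⟩
    rwa [mem_preimage, sphereChart_left_inv (ne_of_mem_of_not_mem hx hq)]
  · exact fun hz => ⟨_, hz, sphereChart_right_inv q z⟩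

lemma sphereChart_mem_image_iff {K : Set ↥Sphere2} (hq : q ∉ K) {x : ↥Sphere2} (hx : x ≠ q) :
    sphereChart q x ∈ sphereChart q '' K ↔ x ∈ K := by
  rw [sphereChart_image_eq hq, mem_preimage, sphereChart_left_inv hx]

lemma isOpen_sphereChart_symm_image {A : Set ℂ} (hA : IsOpen A) :
    IsOpen ((sphereChart q).symm '' A) :=
  (sphereChart q).symm.isOpen_image_of_subset_source hA (by simp)

lemma tendsto_sphereChart_cobounded :
    Tendsto (sphereChart q) (𝓝[≠] q) (Bornology.cobounded ℂ) := by
  refine (Metric.hasBasis_cobounded_compl_closedBall 0).tendsto_right_iff.2 fun R _ => ?_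
  have hK : IsClosed ((sphereChart q).symm '' closedBall 0 R) :=
    ((isCompact_closedBall 0 R).image (continuous_sphereChart_symm q)).isClosed
  have hq : q ∉ (sphereChart q).symm '' closedBall 0 R := by
    rintro ⟨z, -, hz⟩
    exact sphereChart_symm_ne q z hz
  filter_upwards [mem_nhdsWithin_of_mem_nhds (hK.isOpen_compl.mem_nhds hq), self_mem_nhdsWithin]
    with x hx hxq hxR
  exact hx ⟨_, hxR, sphereChart_left_inv hxq⟩

lemma mem_connectedComponentIn_of_hasLogOn {K : Set ↥Sphere2} (hK : IsClosed K) {p : ↥Sphere2}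
    (hp : p ∉ K) (hq : q ∉ K) (hpq : p ≠ q)
    (h : HasLogOn (fun z => sphereChart q z - sphereChart q p) K) :
    q ∈ connectedComponentIn Kᶜ p := by
  by_contra hqO
  set O := connectedComponentIn Kᶜ p
  have hOo : IsOpen O := hK.isOpen_compl.connectedComponentIn
  have hqc : q ∉ closure O := fun hc => hqO (closure_connectedComponentIn_inter_subset ⟨hc, hq⟩)
  have hc := continuous_sphereChart_symm q
  have hfr : frontier ((sphereChart q).symm ⁻¹' O) ⊆ (sphereChart q).symm ⁻¹' K :=
    (hc.frontier_preimage_subset O).trans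
      (preimage_mono (frontier_connectedComponentIn_compl_subset hK))
  have hb : Bornology.IsBounded ((sphereChart q).symm ⁻¹' O) := by
    refine (isCompact_sphereChart_image isClosed_closure hqc).isBounded.subset ?_
    rw [sphereChart_image_eq hqc]
    exact preimage_mono subset_closure
  have hpO : sphereChart q p ∈ (sphereChart q).symm ⁻¹' O := by
    rw [mem_preimage, sphereChart_left_inv hpq]
    exact mem_connectedComponentIn hp
  refine one_ne_zero (eq_zero_of_hasLogOn_zpow_mul (n := 1) (u := fun _ => 1) (hK.preimage hc)
    (hOo.preimage hc) hb hfr hpO continuousOn_const (by simp) ?_)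
  exact ((h.comp hc.continuousOn (mapsTo_preimage _ _)).mono inter_subset_left).congr
    fun z _ => by simp

lemma hasLogOn_of_mem_connectedComponentIn {K : Set ↥Sphere2} (hK : IsClosed K) {p : ↥Sphere2}
    (hp : p ∉ K) (hpq : p ≠ q) (h : q ∈ connectedComponentIn Kᶜ p) :
    HasLogOn (fun z => sphereChart q z - sphereChart q p) K := by
  have hq : q ∉ K := connectedComponentIn_subset _ _ h
  have hqK : K ⊆ {q}ᶜ := subset_compl_singleton_iff.2 hq
  have hKc := isCompact_sphereChart_image hK hq
  rw [← HasLogOn.image_iff (f := fun z => z - sphereChart q p) hK.isCompact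
    ((continuousOn_sphereChart q).mono hqK) (injOn_sphereChart.mono hqK)]
  let G : ↥Sphere2 → Prop := fun x =>
    x = q ∨ HasLogOn (fun z => z - sphereChart q x) (sphereChart q '' K)
  have hlocal : ∀ x ∈ connectedComponentIn Kᶜ p,
      ∀ᶠ y in 𝓝[connectedComponentIn Kᶜ p] x, (G x ↔ G y) := by
    refine fun x hx => eventually_nhdsWithin_of_eventually_nhds ?_
    rcases eq_or_ne x q with rfl | hxq
    · filter_upwards [eventually_nhdsWithin_iff.1 (tendsto_sphereChart_cobounded.eventually
        (eventually_cobounded_hasLogOn_sub hKc.isBounded))] with y hy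
      exact iff_of_true (Or.inl rfl) (or_iff_not_imp_left.2 hy)
    · have hxK : sphereChart q x ∉ sphereChart q '' K :=
        (sphereChart_mem_image_iff hq hxq).not.2 (connectedComponentIn_subset _ _ hx)
      have hcx : ContinuousAt (sphereChart q) x :=
        (continuousOn_sphereChart q).continuousAt (isOpen_compl_singleton.mem_nhds hxq)
      filter_upwards [hcx.eventually (eventually_hasLogOn_sub_iff hKc.isClosed hxK),
        isOpen_compl_singleton.mem_nhds hxq] with y hy hyq
      simpa only [G, hxq, mem_compl_singleton_iff.1 hyq, false_or] using hy
  have hGpq : G p ↔ G q := isPreconnected_connectedComponentIn.induction₂ (fun x y => G x ↔ G y)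
    hlocal (fun _ _ _ _ _ _ => Iff.trans) (fun _ _ _ _ => Iff.symm) (mem_connectedComponentIn hp) h
  exact (hGpq.2 (Or.inl rfl)).resolve_left hpq

/-- Janiszewski's theorem. -/
theorem mem_connectedComponentIn_compl_union {A B : Set ↥Sphere2} (hA : IsClosed A)
    (hB : IsClosed B) (hAB : IsPreconnected (A ∩ B)) {p q : ↥Sphere2} (hpA : p ∉ A)
    (hpB : p ∉ B) (h₁ : q ∈ connectedComponentIn Aᶜ p) (h₂ : q ∈ connectedComponentIn Bᶜ p) :
    q ∈ connectedComponentIn (A ∪ B)ᶜ p := by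
  have hp : p ∉ A ∪ B := not_or.2 ⟨hpA, hpB⟩
  rcases eq_or_ne p q with rfl | hpq
  · exact mem_connectedComponentIn hp
  have hq : q ∉ A ∪ B := not_or.2
    ⟨connectedComponentIn_subset _ _ h₁, connectedComponentIn_subset _ _ h₂⟩
  exact mem_connectedComponentIn_of_hasLogOn (hA.union hB) hp hq hpq
    (HasLogOn.union_of_isClosed hA hB hAB (hasLogOn_of_mem_connectedComponentIn hA hpA hpq h₁)
      (hasLogOn_of_mem_connectedComponentIn hB hpB hpq h₂))

lemma LogAcyclic.mem_connectedComponentIn_compl {K : Set ↥Sphere2} (h : LogAcyclic K)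
    (hK : IsClosed K) {p q : ↥Sphere2} (hp : p ∉ K) (hq : q ∉ K) :
    q ∈ connectedComponentIn Kᶜ p := by
  rcases eq_or_ne p q with rfl | hpq
  · exact mem_connectedComponentIn hp
  have hqK : K ⊆ {q}ᶜ := subset_compl_singleton_iff.2 hq
  refine mem_connectedComponentIn_of_hasLogOn hK hp hq hpq
    (h _ (((continuousOn_sphereChart q).mono hqK).sub continuousOn_const) fun x hx h0 => ?_)
  exact hp (injOn_sphereChart (hqK hx) hpq (sub_eq_zero.1 h0) ▸ hx)

lemma LogAcyclic.isPreconnected_compl {K : Set ↥Sphere2} (h : LogAcyclic K)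
    (hK : IsClosed K) : IsPreconnected Kᶜ :=
  isPreconnected_of_forall_pair fun _ hx _ hy => ⟨_, connectedComponentIn_subset _ _,
    mem_connectedComponentIn hx, h.mem_connectedComponentIn_compl hK hx hy,
    isPreconnected_connectedComponentIn⟩

end SphereChart

/-! ### The Jordan curve theorem -/

/-- A set homeomorphic to the unit circle. -/
abbrev IsJordanCurve {X : Type*} [TopologicalSpace X] (J : Set X) : Prop :=
  Nonempty (↥J ≃ₜ ↥UnitCircle)

lemma isJordanCurve_image_iff {X Y : Type*} [TopologicalSpace X] [TopologicalSpace Y]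
    {f : X → Y} (hf : IsEmbedding f) {J : Set X} : IsJordanCurve (f '' J) ↔ IsJordanCurve J :=
  ⟨fun ⟨e⟩ => ⟨(hf.homeomorphImage J).trans e⟩, fun ⟨e⟩ => ⟨(hf.homeomorphImage J).symm.trans e⟩⟩

lemma isJordanCurve_preimage_val_iff {X : Type*} [TopologicalSpace X] {S J : Set X} (h : J ⊆ S) :
    IsJordanCurve (Subtype.val ⁻¹' J : Set ↥S) ↔ IsJordanCurve J := by
  rw [← isJordanCurve_image_iff IsEmbedding.subtypeVal, Subtype.image_preimage_val,
    inter_eq_right.2 h]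

lemma isJordanCurve_image_iff_of_isCompact {X Y : Type*} [TopologicalSpace X] [TopologicalSpace Y]
    [T2Space Y] {f : X → Y} {K : Set X} (hK : IsCompact K) (hf : ContinuousOn f K)
    (hi : InjOn f K) {J : Set X} (hJ : J ⊆ K) : IsJordanCurve (f '' J) ↔ IsJordanCurve J := by
  have himage : f '' J = K.domRestrict f '' (Subtype.val ⁻¹' J) := by
    rw [image_domRestrict, inter_eq_left.2 hJ]
  rw [himage, isJordanCurve_image_iff (isClosedEmbedding_domRestrict hK hf hi).isEmbedding,
    isJordanCurve_preimage_val_iff hJ]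

/-- The sets `V` and `O` are the two complementary components of the Jordan curve `J`. -/
structure IsJordanSplit (J V O : Set ↥Sphere2) : Prop where
  isJordanCurve : IsJordanCurve J
  isOpen_left : IsOpen V
  isOpen_right : IsOpen O
  isConnected_left : IsConnected V
  isConnected_right : IsConnected O
  disjoint : Disjoint V O
  union_eq : V ∪ O = Jᶜ
  frontier_left : frontier V = J
  frontier_right : frontier O = J

namespace IsJordanSplit

variable {J V O : Set ↥Sphere2}

lemma symm (h : IsJordanSplit J V O) : IsJordanSplit J O V :=
  ⟨h.1, h.3, h.2, h.5, h.4, h.6.symm, by rw [union_comm, h.7], h.9, h.8⟩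

lemma disjoint_curve (h : IsJordanSplit J V O) : Disjoint V J := by
  rw [← subset_compl_iff_disjoint_right, ← h.union_eq]
  exact subset_union_left

lemma closure_left_eq_union (h : IsJordanSplit J V O) : closure V = V ∪ J := by
  rw [closure_eq_self_union_frontier, h.frontier_left]

lemma closure_left (h : IsJordanSplit J V O) : closure V = Oᶜ := by
  rw [h.closure_left_eq_union, ← compl_compl J, ← h.union_eq, compl_union, union_inter_distrib_left,
    union_compl_self, univ_inter, union_eq_right]
  exact h.disjoint.subset_compl_right

lemma closure_right (h : IsJordanSplit J V O) : closure O = Vᶜ := h.symm.closure_left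

lemma interior_closure_left (h : IsJordanSplit J V O) : interior (closure V) = V := by
  rw [h.closure_left, interior_compl, h.closure_right, compl_compl]

lemma subset_or_subset (h : IsJordanSplit J V O) {A : Set ↥Sphere2} (hA : IsPreconnected A)
    (hAJ : Disjoint A J) : A ⊆ V ∨ A ⊆ O := by
  have hs : A ⊆ V ∪ O := by
    rw [h.union_eq]
    exact subset_compl_iff_disjoint_right.2 hAJ
  by_cases hV : A ⊆ V
  · exact Or.inl hV
  · obtain ⟨x, hx, hxV⟩ := not_subset.1 hV
    exact Or.inr (hA.subset_right_of_subset_union h.isOpen_left h.isOpen_right h.disjoint hs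
      ⟨x, hx, (hs hx).resolve_left hxV⟩)

end IsJordanSplit

/-- A parametrization of a Jordan curve by the real line, injective modulo the period `1`. -/
structure IsJordanParam {X : Type*} [TopologicalSpace X] (c : ℝ → X) : Prop where
  continuous : Continuous c
  eq_iff : ∀ s t, c s = c t ↔ ∃ n : ℤ, s - t = n

/-- The identification of the complex plane with `ℝ²`. -/
noncomputable abbrev complexToPlane : ℂ ≃ₗᵢ[ℝ] EuclideanSpace ℝ (Fin 2) :=
  Complex.orthonormalBasisOneI.repr

/-- The complex unit circle as the unit circle of `ℝ²`. -/
noncomputable def circleHomeomorph : Circle ≃ₜ ↥UnitCircle :=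
  complexToPlane.toHomeomorph.subtype fun z => by
    simp [Submonoid.unitSphere]

lemma IsJordanCurve.exists_isJordanParam {X : Type*} [TopologicalSpace X] {J : Set X}
    (h : IsJordanCurve J) : ∃ c : ℝ → X, IsJordanParam c ∧ range c = J := by
  obtain ⟨e⟩ := h
  let φ : UnitAddCircle ≃ₜ ↥J :=
    ((AddCircle.homeomorphCircle one_ne_zero).trans circleHomeomorph).trans e.symm
  refine ⟨fun t => φ (t : UnitAddCircle), ⟨?_, fun s t => ?_⟩, ?_⟩
  · exact continuous_subtype_val.comp (φ.continuous.comp (AddCircle.continuous_mk' 1))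
  · rw [Subtype.coe_inj, φ.injective.eq_iff, ← sub_eq_zero, ← AddCircle.coe_sub,
      AddCircle.coe_eq_zero_iff]
    simp [eq_comm]
  · refine Subset.antisymm (range_subset_iff.2 fun t => (φ t).2) fun x hx => ?_
    obtain ⟨t, ht⟩ := QuotientAddGroup.mk_surjective (φ.symm ⟨x, hx⟩)
    exact ⟨t, by simp only [ht, φ.apply_symm_apply]⟩

lemma IsJordanCurve.isConnected {X : Type*} [TopologicalSpace X] {J : Set X}
    (h : IsJordanCurve J) : IsConnected J := by
  obtain ⟨c, hc, rfl⟩ := h.exists_isJordanParam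
  exact isConnected_range hc.continuous

namespace IsJordanParam

section

variable {X : Type*} [TopologicalSpace X] {c : ℝ → X}

lemma add_int (hc : IsJordanParam c) (t : ℝ) (n : ℤ) : c (t + n) = c t :=
  (hc.eq_iff _ _).2 ⟨n, by ring⟩

lemma add_one (hc : IsJordanParam c) (t : ℝ) : c (t + 1) = c t := by
  simpa using hc.add_int t 1

lemma injOn_Ico (hc : IsJordanParam c) (a : ℝ) : InjOn c (Ico a (a + 1)) := by
  intro s hs t ht h
  obtain ⟨n, hn⟩ := (hc.eq_iff _ _).1 h
  have h1 : n < 1 := by exact_mod_cast (by linarith [hs.2, ht.1] : (n : ℝ) < 1)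
  have h2 : -1 < n := by exact_mod_cast (by linarith [hs.1, ht.2] : (-1 : ℝ) < n)
  obtain rfl : n = 0 := by lia
  simpa [sub_eq_zero] using hn

lemma injOn_Icc (hc : IsJordanParam c) {a b : ℝ} (hab : b < a + 1) : InjOn c (Icc a b) :=
  (hc.injOn_Ico a).mono (Icc_subset_Ico_right hab)

lemma exists_mem_Ico (hc : IsJordanParam c) (a : ℝ) {x : X} (hx : x ∈ range c) :
    ∃ t ∈ Ico a (a + 1), c t = x := by
  obtain ⟨t, rfl⟩ := hx
  refine ⟨toIcoMod one_pos a t, toIcoMod_mem_Ico one_pos a t,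
    (hc.eq_iff _ _).2 ⟨-toIcoDiv one_pos a t, ?_⟩⟩
  simp [toIcoMod]

lemma range_eq (hc : IsJordanParam c) {a b : ℝ} (h1 : a ≤ b) (h2 : b ≤ a + 1) :
    range c = c '' Icc a b ∪ c '' Icc b (a + 1) := by
  rw [← image_union, Icc_union_Icc_eq_Icc h1 h2]
  refine Subset.antisymm (fun x hx => ?_) (image_subset_range _ _)
  obtain ⟨t, ht, rfl⟩ := hc.exists_mem_Ico a hx
  exact ⟨t, ⟨ht.1, ht.2.le⟩, rfl⟩

lemma inter_eq (hc : IsJordanParam c) {a b : ℝ} (h1 : a ≤ b) (h2 : b ≤ a + 1) :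
    c '' Icc a b ∩ c '' Icc b (a + 1) = {c a, c b} := by
  apply Subset.antisymm
  · rintro _ ⟨⟨s, hs, rfl⟩, t, ht, hst⟩
    rcases hs.2.eq_or_lt with rfl | hsb
    · simp
    rcases ht.2.eq_or_lt with rfl | hta
    · rw [← hst, hc.add_one]
      simp
    have := hc.injOn_Ico a ⟨h1.trans ht.1, hta⟩ ⟨hs.1, hsb.trans_le h2⟩ hst
    linarith [ht.1]
  · rintro _ (rfl | rfl)
    · exact ⟨⟨a, ⟨le_rfl, h1⟩, rfl⟩, a + 1, ⟨h2, le_rfl⟩, hc.add_one a⟩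
    · exact ⟨⟨b, ⟨h1, le_rfl⟩, rfl⟩, b, ⟨le_rfl, h2⟩, rfl⟩

lemma range_eq_union_halves (hc : IsJordanParam c) :
    range c = c '' Icc 0 (1 / 2) ∪ c '' Icc (1 / 2) 1 := by
  simpa using hc.range_eq (a := 0) (b := 1 / 2) (by norm_num) (by norm_num)

lemma inter_halves (hc : IsJordanParam c) :
    c '' Icc 0 (1 / 2) ∩ c '' Icc (1 / 2) 1 = {c 0, c (1 / 2)} := by
  simpa using hc.inter_eq (a := 0) (b := 1 / 2) (by norm_num) (by norm_num)

lemma isCompact_range (hc : IsJordanParam c) : IsCompact (range c) := by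
  rw [hc.range_eq_union_halves, ← image_union]
  exact (isCompact_Icc.union isCompact_Icc).image hc.continuous

lemma isPreconnected_image_Icc (hc : IsJordanParam c) (a b : ℝ) :
    IsPreconnected (c '' Icc a b) :=
  isPreconnected_Icc.image _ hc.continuous.continuousOn

lemma exists_sdiff_subset_image_Icc (hc : IsJordanParam c) {U : Set X} (hU : IsOpen U) {s : ℝ}
    (hs : c s ∈ U) : ∃ a b, b < a + 1 ∧ range c \ U ⊆ c '' Icc a b := by
  obtain ⟨δ, hδ, hb⟩ := Metric.isOpen_iff.1 (hU.preimage hc.continuous) s hs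
  refine ⟨s + δ / 2, s - δ / 2 + 1, by linarith, fun x hx => ?_⟩
  obtain ⟨t, ht, rfl⟩ := hc.exists_mem_Ico (s - δ / 2) hx.1
  refine ⟨t, ⟨?_, by linarith [ht.2]⟩, rfl⟩
  by_contra! hlt
  refine hx.2 (hb (a := t) ?_)
  rw [mem_ball, Real.dist_eq, abs_lt]
  constructor <;> linarith [ht.1]

variable [T2Space X]

lemma isClosed_range (hc : IsJordanParam c) : IsClosed (range c) := hc.isCompact_range.isClosed

lemma isClosed_image_Icc (hc : IsJordanParam c) (a b : ℝ) : IsClosed (c '' Icc a b) :=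
  (isCompact_Icc.image hc.continuous).isClosed

lemma logAcyclic (hc : IsJordanParam c) {a b : ℝ} (hab : b < a + 1) :
    LogAcyclic (c '' Icc a b) :=
  LogAcyclic.image_of_convex (convex_Icc a b) isCompact_Icc hc.continuous.continuousOn
    (hc.injOn_Icc hab)

lemma exists_log_on_halves (hc : IsJordanParam c) {f : X → ℂ} (hf : ContinuousOn f (range c))
    (hf0 : ∀ x ∈ range c, f x ≠ 0) :
    ∃ (u v : X → ℂ) (d : ℤ), ContinuousOn u (c '' Icc 0 (1 / 2)) ∧
      ContinuousOn v (c '' Icc (1 / 2) 1) ∧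
      (∀ x ∈ c '' Icc 0 (1 / 2), Complex.exp (u x) = f x) ∧
      (∀ x ∈ c '' Icc (1 / 2) 1, Complex.exp (v x) = f x) ∧
      u (c 0) = v (c 0) ∧ u (c (1 / 2)) = v (c (1 / 2)) + d * (2 * Real.pi * Complex.I) := by
  have hlog : ∀ a b : ℝ, b < a + 1 → HasLogOn f (c '' Icc a b) := fun a b hab =>
    hc.logAcyclic hab f (hf.mono (image_subset_range _ _))
      fun x hx => hf0 x (image_subset_range _ _ hx)
  obtain ⟨u, hu, hue⟩ := hlog 0 (1 / 2) (by norm_num)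
  obtain ⟨v, hv, hve⟩ := hlog (1 / 2) 1 (by norm_num)
  have hdefect : ∀ x ∈ c '' Icc 0 (1 / 2) ∩ c '' Icc (1 / 2) 1, ∃ k : ℤ,
      u x = v x + k * (2 * Real.pi * Complex.I) := fun x hx =>
    Complex.exp_eq_exp_iff_exists_int.1 ((hue x hx.1).trans (hve x hx.2).symm)
  rw [hc.inter_halves] at hdefect
  obtain ⟨k, hk⟩ := hdefect (c 0) (mem_insert _ _)
  obtain ⟨l, hl⟩ := hdefect (c (1 / 2)) (mem_insert_of_mem _ rfl)
  refine ⟨u, fun x => v x + k * (2 * Real.pi * Complex.I), l - k, hu, by fun_prop, hue,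
    fun x hx => ?_, hk, ?_⟩
  · rw [Complex.exp_add, hve x hx, Complex.exp_int_mul_two_pi_mul_I, mul_one]
  · rw [hl]
    push_cast
    ring

lemma exists_hasLogOn_zpow_mul (hc : IsJordanParam c) {f g : X → ℂ}
    (hf : ContinuousOn f (range c)) (hf0 : ∀ x ∈ range c, f x ≠ 0)
    (hg : ContinuousOn g (range c)) (hg0 : ∀ x ∈ range c, g x ≠ 0) :
    ∃ m n : ℤ, (m ≠ 0 ∨ n ≠ 0) ∧ HasLogOn (fun x => f x ^ m * g x ^ n) (range c) := by
  obtain ⟨u, v, d, hu, hv, hue, hve, h0, h1⟩ := hc.exists_log_on_halves hf hf0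
  obtain ⟨u', v', d', hu', hv', hue', hve', h0', h1'⟩ := hc.exists_log_on_halves hg hg0
  obtain ⟨m, n, hmn, hd⟩ : ∃ m n : ℤ, (m ≠ 0 ∨ n ≠ 0) ∧ m * d + n * d' = 0 := by
    by_cases h : d = 0
    · exact ⟨1, 0, by simp, by simp [h]⟩
    · exact ⟨d', -d, by simp [h], by ring⟩
  refine ⟨m, n, hmn, ?_⟩
  rw [hc.range_eq_union_halves]
  refine HasLogOn.union_of_eqOn (hc.isClosed_image_Icc _ _) (hc.isClosed_image_Icc _ _)
    (g₁ := fun x => m * u x + n * u' x) (g₂ := fun x => m * v x + n * v' x)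
    (by fun_prop) (by fun_prop) (fun x hx => ?_) (fun x hx => ?_) ?_
  · rw [Complex.exp_add, Complex.exp_int_mul, Complex.exp_int_mul, hue x hx, hue' x hx]
  · rw [Complex.exp_add, Complex.exp_int_mul, Complex.exp_int_mul, hve x hx, hve' x hx]
  · rw [hc.inter_halves]
    have hd' : (m : ℂ) * d + n * d' = 0 := by exact_mod_cast hd
    rintro x (rfl | rfl)
    · simp only [h0, h0']
    · simp only [h1, h1']
      linear_combination (2 * Real.pi * Complex.I) * hd'

end

end IsJordanParam

lemma isPreconnected_sdiff_singleton {O : Set ↥Sphere2} (h : IsPreconnected O)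
    (hO : IsOpen O) (q : ↥Sphere2) : IsPreconnected (O \ {q}) := by
  have hq : LogAcyclic ({q} : Set ↥Sphere2) := fun f _ h0 =>
    (HasLogOn.const (h0 q rfl)).congr fun x hx => by rw [mem_singleton_iff.1 hx]
  refine isPreconnected_of_forall_pair fun x hx y hy => ?_
  have hd : IsPreconnected (Oᶜ ∩ {q}) :=
    (subsingleton_singleton.anti inter_subset_right).isPreconnected
  have hyO : y ∈ connectedComponentIn Oᶜᶜ x := by
    rw [compl_compl]
    exact h.subset_connectedComponentIn hx.1 Subset.rfl hy.1
  have hxy := mem_connectedComponentIn_compl_union (B := {q}) hO.isClosed_compl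
    isClosed_singleton hd (by simpa using hx.1) hx.2 hyO
    (hq.mem_connectedComponentIn_compl isClosed_singleton hx.2 hy.2)
  have hunion : (Oᶜ ∪ {q})ᶜ = O \ {q} := by rw [compl_union, compl_compl, sdiff_eq]
  rw [hunion] at hxy
  exact ⟨_, connectedComponentIn_subset _ _, mem_connectedComponentIn hx, hxy,
    isPreconnected_connectedComponentIn⟩

lemma hasLogOn_div_sub_compl_image_uIcc {γ : ℝ → ℂ} (hγ : Continuous γ) (s₀ s₁ : ℝ) :
    HasLogOn (fun z => (z - γ s₁) / (z - γ s₀)) (γ '' uIcc s₀ s₁)ᶜ := by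
  have hmem : ∀ t ∈ Icc (0 : ℝ) 1, s₀ + t * (s₁ - s₀) ∈ uIcc s₀ s₁ := fun t ht => by
    simpa using (convex_uIcc s₀ s₁).add_smul_sub_mem left_mem_uIcc right_mem_uIcc ht
  have hne : ∀ z ∈ (γ '' uIcc s₀ s₁)ᶜ, ∀ t ∈ uIcc s₀ s₁, z - γ t ≠ 0 := fun z hz t ht h =>
    hz ⟨t, ht, (sub_eq_zero.1 h).symm⟩
  have h₁ := HasLogOn.of_homotopy (s := (γ '' uIcc s₀ s₁)ᶜ)
    (F := fun t z => (z - γ (s₀ + t * (s₁ - s₀))) / (z - γ s₀))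
    (ContinuousOn.div (by fun_prop) (by fun_prop) fun p hp => hne _ hp.2 _ left_mem_uIcc)
    (fun t ht z hz => div_ne_zero (hne z hz _ (hmem t ht)) (hne z hz _ left_mem_uIcc))
    ((HasLogOn.const one_ne_zero).congr fun z hz => by
      simp only [zero_mul, add_zero]
      exact div_self (hne z hz _ left_mem_uIcc))
  simpa using h₁

lemma not_hasLogOn_div_sub_compl_pair {a b : ℂ} (hab : a ≠ b) :
    ¬ HasLogOn (fun z => (z - a) / (z - b)) {a, b}ᶜ := by
  intro h
  have hd : 0 < dist a b := dist_pos.2 hab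
  have hball : ∀ z ∈ closedBall a (dist a b / 2), z - b ≠ 0 := by
    intro z hz hzb
    rw [sub_eq_zero.1 hzb, mem_closedBall, dist_comm] at hz
    linarith
  have hsub : sphere a (dist a b / 2) ⊆ {a, b}ᶜ := by
    rintro z hz (rfl | rfl)
    · rw [mem_sphere, dist_self] at hz
      linarith
    · exact hball _ (sphere_subset_closedBall hz) (sub_self _)
  have hlogb := (HasLogOn.of_convex (convex_closedBall a (dist a b / 2))
    (f := fun z => z - b) (by fun_prop) hball).mono sphere_subset_closedBall
  have hloga : HasLogOn (fun z => (z - a) ^ (1 : ℤ)) (sphere a (dist a b / 2)) :=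
    ((h.mono hsub).mul hlogb).congr fun z hz => by
      simp only [zpow_one, div_mul_cancel₀ _ (hball z (sphere_subset_closedBall hz))]
  exact one_ne_zero (eq_zero_of_hasLogOn_zpow_sphere (half_pos hd) hloga)

lemma IsJordanParam.not_isPreconnected_compl_complex {γ : ℝ → ℂ} (hγ : IsJordanParam γ) :
    ¬ IsPreconnected (range γ)ᶜ := by
  intro hpc
  have hne : γ 0 ≠ γ (1 / 2) := fun h => by
    have := hγ.injOn_Icc (a := 0) (b := 1 / 2) (by norm_num) (by norm_num) (by norm_num) h
    norm_num at this
  have hA : HasLogOn (fun z => (z - γ 0) / (z - γ (1 / 2))) (γ '' Icc 0 (1 / 2))ᶜ := by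
    have := hasLogOn_div_sub_compl_image_uIcc hγ.continuous (1 / 2) 0
    rwa [uIcc_of_ge (by norm_num)] at this
  have hB : HasLogOn (fun z => (z - γ 0) / (z - γ (1 / 2))) (γ '' Icc (1 / 2) 1)ᶜ := by
    have := hasLogOn_div_sub_compl_image_uIcc hγ.continuous (1 / 2) 1
    rwa [uIcc_of_le (by norm_num), show γ 1 = γ 0 by simpa using hγ.add_one 0] at this
  have hlog := HasLogOn.union_of_isOpen (hγ.isClosed_image_Icc _ _).isOpen_compl
    (hγ.isClosed_image_Icc _ _).isOpen_compl
    (by rwa [← compl_union, ← hγ.range_eq_union_halves]) hA hB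
  rw [← compl_inter, hγ.inter_halves] at hlog
  exact not_hasLogOn_div_sub_compl_pair hne hlog

lemma sphereChart_image_compl_sdiff_singleton {K : Set ↥Sphere2} {q : ↥Sphere2} (hq : q ∉ K) :
    sphereChart q '' (Kᶜ \ {q}) = (sphereChart q '' K)ᶜ := by
  rw [sphereChart_image_eq hq]
  ext z
  constructor
  · rintro ⟨x, ⟨hx, hxq⟩, rfl⟩
    rwa [mem_compl_iff, mem_preimage, sphereChart_left_inv hxq]
  · exact fun hz => ⟨(sphereChart q).symm z, ⟨hz, sphereChart_symm_ne q z⟩,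
      sphereChart_right_inv q z⟩

lemma eq_zero_of_hasLogOn_zpow_mul_sphereChart {K : Set ↥Sphere2} (hK : IsClosed K)
    {p p' q : ↥Sphere2} (hp : p ∉ K) (hp' : p' ∉ K) (hq : q ∉ K) (hp'q : p' ≠ q)
    (hqp : q ∉ connectedComponentIn Kᶜ p) (hpp : p' ∉ connectedComponentIn Kᶜ p) {m n : ℤ}
    (h : HasLogOn (fun x => (sphereChart q x - sphereChart q p) ^ m *
      (sphereChart q x - sphereChart q p') ^ n) K) : m = 0 := by
  set O := connectedComponentIn Kᶜ p
  have hpO : p ∈ O := mem_connectedComponentIn hp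
  have hqc : q ∉ closure O := fun h => hqp (closure_connectedComponentIn_inter_subset ⟨h, hq⟩)
  have hsc := continuous_sphereChart_symm q
  have hu0 : ∀ z ∈ (sphereChart q).symm ⁻¹' O ∪ (sphereChart q).symm ⁻¹' K,
      z - sphereChart q p' ≠ 0 := by
    rintro z hz h
    rw [sub_eq_zero.1 h, ← preimage_union, mem_preimage, sphereChart_left_inv hp'q] at hz
    exact hz.elim hpp hp'
  refine eq_zero_of_hasLogOn_zpow_mul (K := (sphereChart q).symm ⁻¹' K)
    (O := (sphereChart q).symm ⁻¹' O) (p := sphereChart q p)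
    (u := fun z => (z - sphereChart q p') ^ n) (hK.preimage hsc)
    (hK.isOpen_compl.connectedComponentIn.preimage hsc) ?_ (fun z hz => ?_) ?_
    (ContinuousOn.zpow₀ (by fun_prop) n fun z hz => Or.inl (hu0 z hz))
    (fun z hz => zpow_ne_zero _ (hu0 z hz)) ?_
  · refine (isCompact_sphereChart_image isClosed_closure hqc).isBounded.subset ?_
    rw [sphereChart_image_eq hqc]
    exact preimage_mono subset_closure
  · exact frontier_connectedComponentIn_compl_subset hK (hsc.frontier_preimage_subset O hz)
  · rwa [mem_preimage, sphereChart_left_inv (ne_of_mem_of_not_mem hpO hqp)]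
  · refine ((h.comp hsc.continuousOn (mapsTo_preimage _ _)).mono inter_subset_left).congr ?_
    intro z _
    simp

lemma compl_subset_connectedComponentIn_compl {X : Type*} [TopologicalSpace X]
    [LocallyConnectedSpace X] {K R : Set X} (hK : IsPreconnected Kᶜ) (hR : IsClosed R)
    (hKR : K ⊆ R) {p : X} (hp : p ∉ R)
    (h : Disjoint (closure (connectedComponentIn Rᶜ p)) (R \ K)) :
    Kᶜ ⊆ connectedComponentIn Rᶜ p := by
  refine hK.subset_left_of_subset_union hR.isOpen_compl.connectedComponentIn
    isClosed_closure.isOpen_compl (disjoint_compl_right.mono_left subset_closure)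
    (fun x hx => ?_) ⟨p, fun hpK => hp (hKR hpK), mem_connectedComponentIn hp⟩
  by_cases hxc : x ∈ closure (connectedComponentIn Rᶜ p)
  · refine Or.inl (closure_connectedComponentIn_inter_subset ⟨hxc, fun hxR => ?_⟩)
    exact Set.disjoint_left.1 h hxc ⟨hxR, hx⟩
  · exact Or.inr hxc

namespace IsJordanParam

variable {c : ℝ → ↥Sphere2}

lemma range_ne_univ (hc : IsJordanParam c) : range c ≠ univ := by
  intro hu
  have hpc : IsPreconnected ({c 0, c (1 / 2)}ᶜ : Set ↥Sphere2) := by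
    have := isPreconnected_sdiff_singleton (isPreconnected_sdiff_singleton isPreconnected_univ
      isOpen_univ (c 0)) (isOpen_univ.sdiff isClosed_singleton) (c (1 / 2))
    rwa [sdiff_sdiff, ← compl_eq_univ_sdiff, singleton_union] at this
  have h1 : c (1 / 4) ∉ ({c 0, c (1 / 2)} : Set ↥Sphere2) := by
    have hi : ∀ t ∈ Icc (0 : ℝ) (1 / 2), 1 / 4 ≠ t → c (1 / 4) ≠ c t := fun t ht =>
      (hc.injOn_Icc (by norm_num)).ne (by norm_num) ht
    exact not_or.2 ⟨hi _ (by norm_num) (by norm_num), hi _ (by norm_num) (by norm_num)⟩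
  have h3 : c (3 / 4) ∉ ({c 0, c (1 / 2)} : Set ↥Sphere2) := by
    have hi : ∀ t ∈ Icc (1 / 2 : ℝ) 1, 3 / 4 ≠ t → c (3 / 4) ≠ c t := fun t ht =>
      (hc.injOn_Icc (by norm_num)).ne (by norm_num) ht
    rw [show c 0 = c 1 by simpa using (hc.add_one 0).symm]
    exact not_or.2 ⟨hi _ (by norm_num) (by norm_num), hi _ (by norm_num) (by norm_num)⟩
  rw [← hc.inter_halves] at hpc h1 h3
  have m1 : c (1 / 4) ∈ c '' Icc 0 (1 / 2) := ⟨_, by norm_num, rfl⟩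
  have m3 : c (3 / 4) ∈ c '' Icc (1 / 2) 1 := ⟨_, by norm_num, rfl⟩
  rw [compl_inter] at hpc
  obtain ⟨x, -, hx⟩ := hpc _ _ (hc.isClosed_image_Icc _ _).isOpen_compl
    (hc.isClosed_image_Icc _ _).isOpen_compl Subset.rfl
    ⟨_, Or.inl fun h => h3 ⟨h, m3⟩, fun h => h3 ⟨h, m3⟩⟩
    ⟨_, Or.inr fun h => h1 ⟨m1, h⟩, fun h => h1 ⟨m1, h⟩⟩
  have hxr : x ∈ range c := hu ▸ mem_univ x
  rw [hc.range_eq_union_halves] at hxr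
  exact hxr.elim hx.1 hx.2

lemma not_isPreconnected_compl (hc : IsJordanParam c) : ¬ IsPreconnected (range c)ᶜ := by
  intro hpc
  obtain ⟨q, hq⟩ := (ne_univ_iff_exists_notMem _).1 hc.range_ne_univ
  have hcq : ∀ t, c t ≠ q := fun t h => hq ⟨t, h⟩
  have hγ : IsJordanParam fun t => sphereChart q (c t) :=
    ⟨(continuousOn_sphereChart q).comp_continuous hc.continuous hcq, fun s t => by
      rw [injOn_sphereChart.eq_iff (hcq s) (hcq t), hc.eq_iff]⟩
  refine hγ.not_isPreconnected_compl_complex ?_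
  have hrange : range (fun t => sphereChart q (c t)) = sphereChart q '' range c :=
    range_comp _ _
  rw [hrange, ← sphereChart_image_compl_sdiff_singleton hq]
  exact (isPreconnected_sdiff_singleton hpc hc.isClosed_range.isOpen_compl q).image _
    ((continuousOn_sphereChart q).mono fun x hx => hx.2)

lemma mem_connectedComponentIn_of_notMem (hc : IsJordanParam c) {p₁ p₂ q : ↥Sphere2}
    (h1 : p₁ ∉ range c) (h2 : p₂ ∉ range c) (hq : q ∉ range c)
    (h12 : p₂ ∉ connectedComponentIn (range c)ᶜ p₁)
    (h1q : q ∉ connectedComponentIn (range c)ᶜ p₁) :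
    q ∈ connectedComponentIn (range c)ᶜ p₂ := by
  by_contra h2q
  have hqne : ∀ p ∉ range c, q ∉ connectedComponentIn (range c)ᶜ p → p ≠ q := by
    rintro p hp hqp rfl
    exact hqp (mem_connectedComponentIn hp)
  have hcont : ContinuousOn (sphereChart q) (range c) :=
    (continuousOn_sphereChart q).mono (subset_compl_singleton_iff.2 hq)
  have hne : ∀ p ∉ range c, q ∉ connectedComponentIn (range c)ᶜ p → ∀ x ∈ range c,
      sphereChart q x - sphereChart q p ≠ 0 := by
    intro p hp hqp x hx h
    have := injOn_sphereChart (subset_compl_singleton_iff.2 hq hx) (hqne p hp hqp)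
      (sub_eq_zero.1 h)
    exact hp (this ▸ hx)
  obtain ⟨m, n, hmn, hlog⟩ := hc.exists_hasLogOn_zpow_mul
    (f := fun x => sphereChart q x - sphereChart q p₁)
    (g := fun x => sphereChart q x - sphereChart q p₂)
    (by fun_prop) (hne p₁ h1 h1q) (by fun_prop) (hne p₂ h2 h2q)
  have h21 : p₁ ∉ connectedComponentIn (range c)ᶜ p₂ := fun h => h12 (by
    rw [← connectedComponentIn_eq h]
    exact mem_connectedComponentIn h2)
  have hm : m = 0 := eq_zero_of_hasLogOn_zpow_mul_sphereChart hc.isClosed_range h1 h2 hq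
    (hqne p₂ h2 h2q) h1q h12 hlog
  have hn : n = 0 := eq_zero_of_hasLogOn_zpow_mul_sphereChart hc.isClosed_range h2 h1 hq
    (hqne p₁ h1 h1q) h2q h21 (hlog.congr fun x _ => mul_comm _ _)
  exact hmn.elim (fun h => h hm) fun h => h hn

lemma frontier_connectedComponentIn (hc : IsJordanParam c) {p : ↥Sphere2} (hp : p ∉ range c) :
    frontier (connectedComponentIn (range c)ᶜ p) = range c := by
  have hR := hc.isClosed_range
  refine Subset.antisymm (frontier_connectedComponentIn_compl_subset hR) ?_
  rintro _ ⟨s, rfl⟩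
  rw [hR.isOpen_compl.connectedComponentIn.frontier_eq]
  refine ⟨?_, fun h => connectedComponentIn_subset _ _ h ⟨s, rfl⟩⟩
  by_contra hs
  obtain ⟨a, b, hab, hK⟩ := hc.exists_sdiff_subset_image_Icc isClosed_closure.isOpen_compl hs
  have hKR : c '' Icc a b ⊆ range c := image_subset_range _ _
  have hsub := compl_subset_connectedComponentIn_compl
    ((hc.logAcyclic hab).isPreconnected_compl (hc.isClosed_image_Icc a b)) hR hKR hp
    (Set.disjoint_left.2 fun x hx hxR => hxR.2 (hK ⟨hxR.1, fun h => h hx⟩))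
  refine hc.not_isPreconnected_compl ?_
  rw [((compl_subset_compl.2 hKR).trans hsub).antisymm (connectedComponentIn_subset _ _)]
  exact isPreconnected_connectedComponentIn

end IsJordanParam

namespace IsJordanCurve

variable {J : Set ↥Sphere2}

theorem exists_isJordanSplit (hJ : IsJordanCurve J) : ∃ V O, IsJordanSplit J V O := by
  obtain ⟨c, hc, rfl⟩ := hJ.exists_isJordanParam
  have hO := hc.isClosed_range.isOpen_compl
  obtain ⟨p, hp⟩ := (ne_univ_iff_exists_notMem _).1 hc.range_ne_univ
  obtain ⟨q, hq, hpq⟩ : ∃ q ∉ range c, q ∉ connectedComponentIn (range c)ᶜ p := by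
    by_contra! h
    refine hc.not_isPreconnected_compl ?_
    have hsub : (range c)ᶜ ⊆ connectedComponentIn (range c)ᶜ p := h
    rw [hsub.antisymm (connectedComponentIn_subset _ _)]
    exact isPreconnected_connectedComponentIn
  refine ⟨connectedComponentIn (range c)ᶜ p, connectedComponentIn (range c)ᶜ q, hJ,
    hO.connectedComponentIn, hO.connectedComponentIn, isConnected_connectedComponentIn_iff.2 hp,
    isConnected_connectedComponentIn_iff.2 hq, Set.disjoint_left.2 fun x hx hx' => hpq ?_,
    Subset.antisymm (union_subset (connectedComponentIn_subset _ _)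
      (connectedComponentIn_subset _ _)) fun x hx => or_iff_not_imp_left.2 fun h =>
        hc.mem_connectedComponentIn_of_notMem hp hq hx hpq h,
    hc.frontier_connectedComponentIn hp, hc.frontier_connectedComponentIn hq⟩
  rw [connectedComponentIn_eq hx, ← connectedComponentIn_eq hx']
  exact mem_connectedComponentIn hq

lemma exists_isJordanSplit_of_isPreconnected (hJ : IsJordanCurve J) {A : Set ↥Sphere2}
    (hA : IsPreconnected A) (hAJ : Disjoint A J) : ∃ V O, IsJordanSplit J V O ∧ A ⊆ O := by
  obtain ⟨V, O, h⟩ := hJ.exists_isJordanSplit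
  rcases h.subset_or_subset hA hAJ with h' | h'
  · exact ⟨_, _, h.symm, h'⟩
  · exact ⟨_, _, h, h'⟩

end IsJordanCurve

/-! ### Closed disks in the sphere -/

lemma isClosedDisk_iff {E : Set ↥Sphere2} :
    IsClosedDisk E ↔ ∃ ψ : EuclideanSpace ℝ (Fin 2) → ↥Sphere2,
      ContinuousOn ψ UnitDisk2 ∧ InjOn ψ UnitDisk2 ∧ ψ '' UnitDisk2 = E := by
  constructor
  · rintro ⟨e⟩
    have : Nonempty ↥Sphere2 := ⟨(e.symm ⟨0, by simp⟩ : ↥E)⟩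
    exact exists_continuousOn_injOn_image_eq e.symm
  · rintro ⟨ψ, hψ, hi, rfl⟩
    have e := (isClosedEmbedding_domRestrict (isCompact_closedBall _ _) hψ hi).toHomeomorph
    rw [range_domRestrict] at e
    exact ⟨e.symm⟩

section DiskImage

variable {ψ : EuclideanSpace ℝ (Fin 2) → ↥Sphere2}

lemma isPreconnected_compl_image_unitDisk (hψ : ContinuousOn ψ UnitDisk2)
    (hi : InjOn ψ UnitDisk2) : IsPreconnected (ψ '' UnitDisk2)ᶜ :=
  (LogAcyclic.image_of_convex (convex_closedBall _ _) (isCompact_closedBall _ _)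
    hψ hi).isPreconnected_compl ((isCompact_closedBall _ _).image_of_continuousOn hψ).isClosed

lemma isJordanSplit_image_unitDisk (hψ : ContinuousOn ψ UnitDisk2) (hi : InjOn ψ UnitDisk2) :
    IsJordanSplit (ψ '' UnitCircle) (ψ '' ball 0 1) (ψ '' UnitDisk2)ᶜ := by
  have hJ : IsJordanCurve (ψ '' UnitCircle) := (isJordanCurve_image_iff_of_isCompact
    (isCompact_closedBall _ _) hψ hi sphere_subset_closedBall).2 ⟨Homeomorph.refl _⟩
  have hball : Disjoint (ψ '' ball 0 1) (ψ '' UnitCircle) := by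
    rw [Set.disjoint_iff_inter_eq_empty, ← hi.image_inter ball_subset_closedBall
      sphere_subset_closedBall, (sphere_disjoint_ball.symm).inter_eq, image_empty]
  have hdisk : ψ '' UnitDisk2 = ψ '' ball 0 1 ∪ ψ '' UnitCircle := by
    rw [← image_union, ball_union_sphere]
  obtain ⟨V, O, h, hO⟩ := hJ.exists_isJordanSplit_of_isPreconnected
    ((convex_ball _ _).isPreconnected.image ψ (hψ.mono ball_subset_closedBall)) hball
  have hVsub : V ⊆ (ψ '' UnitDisk2)ᶜ := by
    rw [hdisk, compl_union]
    exact subset_inter (h.disjoint.mono_right hO).subset_compl_right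
      h.disjoint_curve.subset_compl_right
  have hV : V = (ψ '' UnitDisk2)ᶜ := by
    refine hVsub.antisymm ((isPreconnected_compl_image_unitDisk hψ hi).subset_left_of_subset_union
      h.isOpen_left h.isOpen_right h.disjoint ?_ ?_)
    · rw [h.union_eq, compl_subset_compl]
      exact image_mono sphere_subset_closedBall
    · simpa only [inter_eq_right.2 hVsub] using h.isConnected_left.nonempty
  have hO' : O = ψ '' ball 0 1 := by
    refine Subset.antisymm (fun x hx => ?_) hO
    have hxD : x ∈ ψ '' UnitDisk2 := by
      rw [← compl_compl (ψ '' UnitDisk2), ← hV]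
      exact h.disjoint.notMem_of_mem_right hx
    rw [hdisk] at hxD
    exact hxD.resolve_right (h.symm.disjoint_curve.notMem_of_mem_left hx)
  exact hV ▸ hO' ▸ h.symm

lemma closure_image_ball (hψ : ContinuousOn ψ UnitDisk2) (hi : InjOn ψ UnitDisk2) :
    closure (ψ '' ball 0 1) = ψ '' UnitDisk2 := by
  rw [(isJordanSplit_image_unitDisk hψ hi).closure_left, compl_compl]

lemma interior_image_unitDisk (hψ : ContinuousOn ψ UnitDisk2) (hi : InjOn ψ UnitDisk2) :
    interior (ψ '' UnitDisk2) = ψ '' ball 0 1 := by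
  rw [← closure_image_ball hψ hi, (isJordanSplit_image_unitDisk hψ hi).interior_closure_left]

end DiskImage

/-! ### The Riemann mapping theorem -/

lemma differentiableOn_of_exp_eq {W : Set ℂ} (hW : IsOpen W) {L h : ℂ → ℂ}
    (hL : ContinuousOn L W) (hh : DifferentiableOn ℂ h W)
    (he : ∀ z ∈ W, Complex.exp (L z) = h z) : DifferentiableOn ℂ L W := by
  intro z₀ hz₀
  have hlog : DifferentiableAt ℂ (fun z => Complex.log (h z / h z₀) + L z₀) z₀ := by
    refine DifferentiableAt.add_const _ (DifferentiableAt.clog ?_ ?_)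
    · exact ((hh z₀ hz₀).differentiableAt (hW.mem_nhds hz₀)).div_const _
    · simp [div_self (he z₀ hz₀ ▸ Complex.exp_ne_zero _ : h z₀ ≠ 0)]
  refine (hlog.congr_of_eventuallyEq ?_).differentiableWithinAt
  have hLz₀ : ContinuousAt L z₀ := hL.continuousAt (hW.mem_nhds hz₀)
  filter_upwards [hW.mem_nhds hz₀, hLz₀ (ball_mem_nhds _ Real.pi_pos)] with z hz hzb
  rw [mem_preimage, mem_ball, dist_eq_norm] at hzb
  have him := abs_lt.1 ((Complex.abs_im_le_norm _).trans_lt hzb)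
  rw [← he z hz, ← he z₀ hz₀, ← Complex.exp_sub, Complex.log_exp him.1 him.2.le,
    sub_add_cancel]

lemma HasLogOn.exists_differentiableOn_sq_eq {W : Set ℂ} (hW : IsOpen W) {h : ℂ → ℂ}
    (hlog : HasLogOn h W) (hh : DifferentiableOn ℂ h W) :
    ∃ s : ℂ → ℂ, DifferentiableOn ℂ s W ∧ ∀ z ∈ W, s z ^ 2 = h z := by
  obtain ⟨L, hL, he⟩ := hlog
  refine ⟨fun z => Complex.exp (L z / 2),
    ((differentiableOn_of_exp_eq hW hL hh he).div_const 2).cexp, fun z hz => ?_⟩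
  rw [← he z hz, ← Complex.exp_nat_mul, Nat.cast_ofNat, mul_div_cancel₀ _ two_ne_zero]

lemma equicontinuousOn_of_mapsTo_ball {ι : Type*} {W : Set ℂ} (hW : IsOpen W) {g : ι → ℂ → ℂ}
    (hg : ∀ i, DifferentiableOn ℂ (g i) W) (hm : ∀ i, MapsTo (g i) W (ball 0 1)) :
    EquicontinuousOn g W := by
  intro z hz
  obtain ⟨r, hr, hrW⟩ := Metric.isOpen_iff.1 hW z hz
  refine (Metric.equicontinuousAt_of_continuity_modulus (fun x => 2 / r * dist x z) ?_ g
    ?_).equicontinuousWithinAt W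
  · exact Continuous.tendsto' (by fun_prop) _ _ (by simp)
  · filter_upwards [ball_mem_nhds z hr] with x hx i
    rw [dist_comm]
    refine Complex.dist_le_div_mul_dist_of_mapsTo_ball ((hg i).mono hrW) (fun y hy => ?_) hx
    have hy0 := mem_ball.1 (hm i (hrW hy))
    have hz0 := mem_ball.1 (hm i hz)
    rw [mem_closedBall]
    linarith [dist_triangle_right (g i y) (g i z) 0]

theorem exists_tendstoLocallyUniformlyOn_of_mapsTo_ball {ι : Type*} {W : Set ℂ} (hW : IsOpen W)
    {g : ι → ℂ → ℂ} (hg : ∀ i, DifferentiableOn ℂ (g i) W)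
    (hm : ∀ i, MapsTo (g i) W (ball 0 1)) (𝒰 : Ultrafilter ι) :
    ∃ f : ℂ → ℂ, TendstoLocallyUniformlyOn g f 𝒰 W := by
  have hpointwise : ∀ z, ∃ w, z ∈ W → Tendsto (fun i => g i z) 𝒰 (𝓝 w) := by
    intro z
    by_cases hz : z ∈ W
    · obtain ⟨w, -, hw⟩ := (isCompact_closedBall (0 : ℂ) 1).ultrafilter_le_nhds
        (𝒰.map fun i => g i z) (le_principal_iff.2 (Filter.mem_map.2
          (Filter.univ_mem' fun i => ball_subset_closedBall (hm i hz))))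
      exact ⟨w, fun _ => hw⟩
    · exact ⟨0, fun h => absurd h hz⟩
  choose f hf using hpointwise
  refine ⟨f, (tendstoLocallyUniformlyOn_iff_forall_isCompact hW).2 fun K hKW hK => ?_⟩
  have hequi := (equicontinuousOn_of_mapsTo_ball hW hg hm).mono hKW
  have h := (EquicontinuousOn.tendsto_uniformOnFun_iff_pi' (𝔖 := {K}) (by simpa using hK)
    (by simpa using hequi) 𝒰 f).2 (tendsto_pi_nhds.2 fun ⟨z, hz⟩ => hf z (hKW (by simpa using hz)))
  exact UniformOnFun.tendsto_iff_tendstoUniformlyOn.1 h K rfl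

lemma exists_closedBall_subset_forall_sphere_le_dist {W : Set ℂ} (hW : IsOpen W) {f : ℂ → ℂ}
    (hf : ContinuousOn f W) {a : ℂ} (ha : a ∈ W) (h : ∀ᶠ z in 𝓝[≠] a, f z ≠ f a) :
    ∃ r > 0, closedBall a r ⊆ W ∧ ∃ ε > 0, ∀ z ∈ sphere a r, ε ≤ dist (f z) (f a) := by
  obtain ⟨r, hr, hrW⟩ := nhds_basis_closedBall.mem_iff.1
    ((eventually_nhdsWithin_iff.1 h).and (hW.mem_nhds ha))
  have hne : ∀ z ∈ sphere a r, f z ≠ f a := fun z hz =>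
    (hrW (sphere_subset_closedBall hz)).1 (ne_of_mem_sphere hz hr.ne')
  have hfr : ContinuousOn f (sphere a r) :=
    hf.mono fun z hz => (hrW (sphere_subset_closedBall hz)).2
  obtain ⟨z, hz, hmin⟩ := (isCompact_sphere a r).exists_isMinOn
    (f := fun z => dist (f z) (f a)) (NormedSpace.sphere_nonempty.2 hr.le) (by fun_prop)
  exact ⟨r, hr, fun z hz => (hrW hz).2, _, dist_pos.2 (hne z hz), fun y hy => hmin hy⟩

lemma ball_subset_image_closedBall_of_injOn {g : ℂ → ℂ} {a : ℂ} {r ε : ℝ} (hr : 0 < r)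
    (hg : DifferentiableOn ℂ g (closedBall a r)) (hi : InjOn g (closedBall a r))
    (h : ∀ z ∈ sphere a r, ε ≤ dist (g z) (g a)) : ball (g a) (ε / 2) ⊆ g '' closedBall a r := by
  refine DiffContOnCl.ball_subset_image_closedBall (DifferentiableOn.diffContOnCl ?_) hr
    (fun z hz => (h z hz).trans_eq (dist_eq_norm _ _)) ?_
  · rwa [closure_ball a hr.ne']
  · refine Eventually.frequently (f := 𝓝[≠] a) ?_ |>.filter_mono nhdsWithin_le_nhds
    filter_upwards [mem_nhdsWithin_of_mem_nhds (closedBall_mem_nhds a hr), self_mem_nhdsWithin]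
      with z hz hza h
    exact hza (hi hz (mem_closedBall_self hr.le) h)

section Hurwitz

variable {W : Set ℂ} {ι : Type*} {g : ι → ℂ → ℂ} {f : ℂ → ℂ} {l : Filter ι} [l.NeBot]

lemma ne_of_tendstoLocallyUniformlyOn_of_injOn (hW : IsOpen W)
    (hg : ∀ i, DifferentiableOn ℂ (g i) W) (hi : ∀ i, InjOn (g i) W)
    (hlim : TendstoLocallyUniformlyOn g f l W) {a b : ℂ} (ha : a ∈ W) (hb : b ∈ W) (hba : b ≠ a)
    (hfa : ∀ᶠ z in 𝓝[≠] a, f z ≠ f a) : f b ≠ f a := by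
  intro hab
  have hf : DifferentiableOn ℂ f W := hlim.differentiableOn (Eventually.of_forall hg) hW
  obtain ⟨r, hr, hrW, ε, hε, hεf⟩ := exists_closedBall_subset_forall_sphere_le_dist
    (hW.sdiff isClosed_singleton) (hf.continuousOn.mono sdiff_subset) ⟨ha, hba.symm⟩ hfa
  have hrW' : closedBall a r ⊆ W := hrW.trans sdiff_subset
  have hu := (tendstoLocallyUniformlyOn_iff_forall_isCompact hW).1 hlim _
    (insert_subset hb hrW') ((isCompact_closedBall a r).insert b)
  obtain ⟨n, hn⟩ := (Metric.tendstoUniformlyOn_iff.1 hu (ε / 8) (by positivity)).exists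
  have hna := hn a (Or.inr (mem_closedBall_self hr.le))
  have hnb := hn b (Or.inl rfl)
  have himage := ball_subset_image_closedBall_of_injOn (ε := ε / 2) hr ((hg n).mono hrW')
    ((hi n).mono hrW') fun z hz => by
      have hnz := hn z (Or.inr (sphere_subset_closedBall hz))
      linarith [hεf z hz, dist_triangle4_right (f z) (f a) (g n z) (g n a)]
  obtain ⟨z, hz, hzb⟩ := himage (a := g n b) (by
    rw [mem_ball]
    rw [hab] at hnb
    linarith [dist_triangle_left (g n b) (g n a) (f a)])
  exact (hrW hz).2 (hi n (hrW' hz) hb hzb)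

theorem injOn_of_tendstoLocallyUniformlyOn (hW : IsOpen W) (hWc : IsPreconnected W)
    (hg : ∀ i, DifferentiableOn ℂ (g i) W) (hi : ∀ i, InjOn (g i) W)
    (hlim : TendstoLocallyUniformlyOn g f l W) {z₀ : ℂ} (hz₀ : z₀ ∈ W) (hd : deriv f z₀ ≠ 0) :
    InjOn f W := by
  have hf : DifferentiableOn ℂ f W := hlim.differentiableOn (Eventually.of_forall hg) hW
  intro a ha b hb hab
  by_contra hne
  refine ne_of_tendstoLocallyUniformlyOn_of_injOn hW hg hi hlim ha hb (Ne.symm hne) ?_ hab.symm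
  refine ((hf.analyticOnNhd hW a ha).eventually_eq_or_eventually_ne
    analyticAt_const).resolve_left fun h => hd ?_
  have hconst := (hf.analyticOnNhd hW).eqOn_of_preconnected_of_eventuallyEq analyticOnNhd_const
    hWc ha h
  rw [(hconst.eventuallyEq_of_mem (hW.mem_nhds hz₀)).deriv_eq, deriv_const]

end Hurwitz

/-- The Blaschke factor of `c`, an automorphism of the unit disk carrying `c` to `0`. -/
noncomputable def blaschke (c w : ℂ) : ℂ := (w - c) / (1 - (starRingEnd ℂ) c * w)

@[simp] lemma blaschke_self (c : ℂ) : blaschke c c = 0 := by simp [blaschke]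

@[simp] lemma blaschke_zero (c : ℂ) : blaschke c 0 = -c := by simp [blaschke]

lemma one_sub_conj_mul_ne_zero {c w : ℂ} (hc : ‖c‖ < 1) (hw : ‖w‖ < 1) :
    1 - (starRingEnd ℂ) c * w ≠ 0 := by
  intro h
  have hnorm : ‖(starRingEnd ℂ) c * w‖ = 1 := by rw [← sub_eq_zero.1 h, norm_one]
  rw [norm_mul, RCLike.norm_conj] at hnorm
  nlinarith [norm_nonneg c, norm_nonneg w]

lemma norm_one_sub_conj_mul_self {c : ℂ} (hc : ‖c‖ ≤ 1) :
    ‖1 - (starRingEnd ℂ) c * c‖ = 1 - ‖c‖ ^ 2 := by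
  rw [Complex.conj_mul', ← Complex.ofReal_pow, ← Complex.ofReal_one, ← Complex.ofReal_sub,
    Complex.norm_real, Real.norm_of_nonneg (by nlinarith [norm_nonneg c])]

lemma norm_blaschke_lt_one {c w : ℂ} (hc : ‖c‖ < 1) (hw : ‖w‖ < 1) : ‖blaschke c w‖ < 1 := by
  rw [blaschke, norm_div, div_lt_one (norm_pos_iff.2 (one_sub_conj_mul_ne_zero hc hw))]
  refine lt_of_pow_lt_pow_left₀ 2 (norm_nonneg _) ?_
  -- `|1 - c̄w|² - |w - c|² = (1 - |c|²) (1 - |w|²)`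
  have hsq := mul_pos (sub_pos.2 ((sq_lt_one_iff₀ (norm_nonneg c)).2 hc))
    (sub_pos.2 ((sq_lt_one_iff₀ (norm_nonneg w)).2 hw))
  simp only [← Complex.normSq_eq_norm_sq, Complex.normSq_apply, Complex.sub_re, Complex.sub_im,
    Complex.mul_re, Complex.mul_im, Complex.conj_re, Complex.conj_im, Complex.one_re,
    Complex.one_im] at hsq ⊢
  linarith

lemma injOn_blaschke {c : ℂ} (hc : ‖c‖ < 1) : InjOn (blaschke c) (ball 0 1) := by
  intro w hw v hv h
  rw [mem_ball_zero_iff] at hw hv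
  rw [blaschke, blaschke, div_eq_div_iff (one_sub_conj_mul_ne_zero hc hw)
    (one_sub_conj_mul_ne_zero hc hv)] at h
  refine sub_eq_zero.1 (mul_right_cancel₀ (one_sub_conj_mul_ne_zero hc hc) ?_)
  linear_combination h

lemma hasDerivAt_blaschke {c w : ℂ} (hc : ‖c‖ < 1) (hw : ‖w‖ < 1) :
    HasDerivAt (blaschke c) ((1 - (starRingEnd ℂ) c * c) / (1 - (starRingEnd ℂ) c * w) ^ 2) w := by
  have hden : HasDerivAt (fun w => 1 - (starRingEnd ℂ) c * w) (-((starRingEnd ℂ) c * 1)) w :=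
    ((hasDerivAt_id w).const_mul _).const_sub 1
  refine (((hasDerivAt_id w).sub_const c).div hden
    (one_sub_conj_mul_ne_zero hc hw)).congr_deriv ?_
  congr 1
  simp only [id_eq]
  ring

lemma differentiableOn_blaschke_comp {W : Set ℂ} {c : ℂ} {f : ℂ → ℂ} (hc : ‖c‖ < 1)
    (hf : DifferentiableOn ℂ f W) (hfm : MapsTo f W (ball 0 1)) :
    DifferentiableOn ℂ (fun z => blaschke c (f z)) W := fun z hz =>
  DifferentiableAt.comp_differentiableWithinAt z
    (hasDerivAt_blaschke hc (mem_ball_zero_iff.1 (hfm hz))).differentiableAt (hf z hz)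

lemma norm_deriv_blaschke_comp_of_eq_zero {c z f' : ℂ} {f : ℂ → ℂ} (hc : ‖c‖ < 1)
    (hf : HasDerivAt f f' z) (hz : f z = 0) :
    ‖deriv (fun z => blaschke c (f z)) z‖ = (1 - ‖c‖ ^ 2) * ‖f'‖ := by
  have h := (hasDerivAt_blaschke hc (w := f z) (by simp [hz])).comp z hf
  rw [HasDerivAt.deriv (f := fun z => blaschke c (f z)) h]
  simp [hz, norm_one_sub_conj_mul_self hc.le]

lemma norm_deriv_blaschke_comp_self {z s' : ℂ} {s : ℂ → ℂ} (hs : HasDerivAt s s' z)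
    (hz : ‖s z‖ < 1) :
    ‖deriv (fun w => blaschke (s z) (s w)) z‖ = ‖s'‖ / (1 - ‖s z‖ ^ 2) := by
  have h := (hasDerivAt_blaschke hz hz).comp z hs
  have hpos : 0 < 1 - ‖s z‖ ^ 2 := sub_pos.2 ((sq_lt_one_iff₀ (norm_nonneg _)).2 hz)
  rw [HasDerivAt.deriv (f := fun w => blaschke (s z) (s w)) h, norm_mul, norm_div, norm_pow,
    norm_one_sub_conj_mul_self hz.le]
  field_simp

/-- The maps `f : W → ℂ` competing in the extremal problem of the Riemann mapping theorem, which
asks for a maximal `‖deriv f z₀‖`. -/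
structure IsDiskEmbedding (W : Set ℂ) (z₀ : ℂ) (f : ℂ → ℂ) : Prop where
  differentiableOn : DifferentiableOn ℂ f W
  injOn : InjOn f W
  mapsTo : MapsTo f W (ball 0 1)
  map_basepoint : f z₀ = 0

lemma isOpen_image_of_injOn {W : Set ℂ} (hW : IsOpen W) {f : ℂ → ℂ} (hf : DifferentiableOn ℂ f W)
    (hfi : InjOn f W) : IsOpen (f '' W) := by
  rw [isOpen_iff_mem_nhds]
  rintro _ ⟨z, hz, rfl⟩
  rcases (hf.analyticOnNhd hW z hz).eventually_constant_or_nhds_le_map_nhds with hconst | hopen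
  · obtain ⟨x, hx, y, hy, hxy⟩ :=
      (infinite_of_mem_nhds z (hconst.and (hW.mem_nhds hz))).nontrivial
    exact absurd (hfi hx.2 hy.2 (hx.1.trans hy.1.symm)) hxy
  · exact hopen (image_mem_map (hW.mem_nhds hz))

namespace IsDiskEmbedding

variable {W : Set ℂ} {z₀ : ℂ} {f : ℂ → ℂ}

lemma norm_lt_one (hf : IsDiskEmbedding W z₀ f) {z : ℂ} (hz : z ∈ W) : ‖f z‖ < 1 :=
  mem_ball_zero_iff.1 (hf.mapsTo hz)

lemma exists_deriv_ne_zero_of_isBounded (hWb : Bornology.IsBounded W)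
    (hz₀ : z₀ ∈ W) : ∃ f, IsDiskEmbedding W z₀ f ∧ deriv f z₀ ≠ 0 := by
  obtain ⟨R, hR⟩ := hWb.subset_ball z₀
  have hR0 : 0 < R := pos_of_mem_ball (hR hz₀)
  have hRc : (R : ℂ) ≠ 0 := Complex.ofReal_ne_zero.2 hR0.ne'
  refine ⟨fun z => (z - z₀) / R, ⟨by fun_prop, fun z _ w _ h => ?_, fun z hz => ?_, by simp⟩, ?_⟩
  · simpa [div_left_inj' hRc] using h
  · have hzR := mem_ball_iff_norm.1 (hR hz)
    rwa [mem_ball_zero_iff, norm_div, Complex.norm_real, Real.norm_of_nonneg hR0.le,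
      div_lt_one hR0]
  · simp [hRc]

lemma norm_deriv_le (hf : IsDiskEmbedding W z₀ f) {r : ℝ} (hr : 0 < r) (hrW : ball z₀ r ⊆ W) :
    ‖deriv f z₀‖ ≤ 1 / r := by
  refine Complex.norm_deriv_le_div_of_mapsTo_ball (hf.differentiableOn.mono hrW) ?_ hr
  rw [hf.map_basepoint]
  exact (hf.mapsTo.mono_left hrW).mono_right ball_subset_closedBall

lemma of_tendstoLocallyUniformlyOn {ι : Type*} {l : Filter ι} [l.NeBot] {g : ι → ℂ → ℂ}
    (hW : IsOpen W) (hWc : IsPreconnected W) (hz₀ : z₀ ∈ W) (hg : ∀ i, IsDiskEmbedding W z₀ (g i))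
    (hlim : TendstoLocallyUniformlyOn g f l W) (hd : deriv f z₀ ≠ 0) :
    IsDiskEmbedding W z₀ f := by
  have hf : DifferentiableOn ℂ f W :=
    hlim.differentiableOn (Eventually.of_forall fun i => (hg i).differentiableOn) hW
  have hfi : InjOn f W := injOn_of_tendstoLocallyUniformlyOn hW hWc
    (fun i => (hg i).differentiableOn) (fun i => (hg i).injOn) hlim hz₀ hd
  refine ⟨hf, hfi, ?_, ?_⟩
  · have hclosed : f '' W ⊆ closedBall 0 1 := by
      rintro _ ⟨z, hz, rfl⟩
      exact isClosed_closedBall.mem_of_tendsto (hlim.tendsto_at hz)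
        (Eventually.of_forall fun i => ball_subset_closedBall ((hg i).mapsTo hz))
    rw [← interior_closedBall _ one_ne_zero]
    exact mapsTo_iff_image_subset.2
      (interior_maximal hclosed (isOpen_image_of_injOn hW hf hfi))
  · refine tendsto_nhds_unique (hlim.tendsto_at hz₀) ?_
    simp [(hg _).map_basepoint]

lemma exists_forall_norm_deriv_le (hW : IsOpen W) (hWc : IsPreconnected W)
    (hWb : Bornology.IsBounded W) (hz₀ : z₀ ∈ W) : ∃ f, IsDiskEmbedding W z₀ f ∧
      deriv f z₀ ≠ 0 ∧ ∀ g, IsDiskEmbedding W z₀ g → ‖deriv g z₀‖ ≤ ‖deriv f z₀‖ := by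
  let A : Set ℝ := (fun g => ‖deriv g z₀‖) '' {g | IsDiskEmbedding W z₀ g}
  obtain ⟨r, hr, hrW⟩ := Metric.isOpen_iff.1 hW z₀ hz₀
  have hA : BddAbove A := ⟨1 / r, forall_mem_image.2 fun g hg => hg.norm_deriv_le hr hrW⟩
  have hle : ∀ g, IsDiskEmbedding W z₀ g → ‖deriv g z₀‖ ≤ sSup A := fun g hg =>
    le_csSup hA (mem_image_of_mem _ hg)
  obtain ⟨h, hh, hh'⟩ := exists_deriv_ne_zero_of_isBounded hWb hz₀
  obtain ⟨u, -, hu, huA⟩ := exists_seq_tendsto_sSup ⟨_, mem_image_of_mem _ hh⟩ hA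
  choose g hg hgu using huA
  obtain ⟨f, hlim⟩ := exists_tendstoLocallyUniformlyOn_of_mapsTo_ball hW
    (fun n => (hg n).differentiableOn) (fun n => (hg n).mapsTo) (hyperfilter ℕ)
  have hderiv : ‖deriv f z₀‖ = sSup A := by
    have hlim' := (hlim.deriv (Eventually.of_forall fun n => (hg n).differentiableOn) hW).tendsto_at
      hz₀
    refine tendsto_nhds_unique hlim'.norm ((hu.mono_left ?_).congr fun n => (hgu n).symm)
    exact Nat.cofinite_eq_atTop ▸ hyperfilter_le_cofinite
  have hd : deriv f z₀ ≠ 0 :=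
    norm_pos_iff.1 (((norm_pos_iff.2 hh').trans_le (hle h hh)).trans_eq hderiv.symm)
  exact ⟨f, of_tendstoLocallyUniformlyOn hW hWc hz₀ hg hlim hd, hd, hderiv ▸ hle⟩

lemma blaschke_comp_of_sq_eq {c : ℂ} {s : ℂ → ℂ} (hf : IsDiskEmbedding W z₀ f) (hz₀ : z₀ ∈ W)
    (hc : ‖c‖ < 1) (hs : DifferentiableOn ℂ s W) (hsq : ∀ z ∈ W, s z ^ 2 = blaschke c (f z)) :
    IsDiskEmbedding W z₀ fun z => blaschke (s z₀) (s z) := by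
  have hs1 : ∀ z ∈ W, ‖s z‖ < 1 := fun z hz => by
    rw [← sq_lt_one_iff₀ (norm_nonneg _), ← norm_pow, hsq z hz]
    exact norm_blaschke_lt_one hc (hf.norm_lt_one hz)
  have hsm : MapsTo s W (ball 0 1) := fun z hz => mem_ball_zero_iff.2 (hs1 z hz)
  refine ⟨differentiableOn_blaschke_comp (hs1 z₀ hz₀) hs hsm, ?_, fun z hz =>
    mem_ball_zero_iff.2 (norm_blaschke_lt_one (hs1 z₀ hz₀) (hs1 z hz)), blaschke_self _⟩
  intro z hz w hw hzw
  have hszw : s z = s w := injOn_blaschke (hs1 z₀ hz₀) (hsm hz) (hsm hw) hzw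
  refine hf.injOn hz hw (injOn_blaschke hc (hf.mapsTo hz) (hf.mapsTo hw) ?_)
  rw [← hsq z hz, ← hsq w hw, hszw]

/-- Koebe's square root trick. -/
lemma exists_norm_deriv_lt {c : ℂ} (hW : IsOpen W) (hf : IsDiskEmbedding W z₀ f) (hz₀ : z₀ ∈ W)
    (hd : deriv f z₀ ≠ 0) (hc : ‖c‖ < 1) (hlog : HasLogOn (fun z => f z - c) W) :
    ∃ g, IsDiskEmbedding W z₀ g ∧ ‖deriv f z₀‖ < ‖deriv g z₀‖ := by
  have hlog' : HasLogOn (fun z => blaschke c (f z)) W := by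
    refine hlog.div (HasLogOn.of_norm_sub_one_lt ?_ fun z hz => ?_)
    · have := hf.differentiableOn.continuousOn
      fun_prop
    · have hfz := hf.norm_lt_one hz
      simp only [sub_sub_cancel_left, norm_neg, norm_mul, RCLike.norm_conj]
      nlinarith [norm_nonneg c, norm_nonneg (f z)]
  obtain ⟨s, hs, hsq⟩ := hlog'.exists_differentiableOn_sq_eq hW
    (differentiableOn_blaschke_comp hc hf.differentiableOn hf.mapsTo)
  refine ⟨_, hf.blaschke_comp_of_sq_eq hz₀ hc hs hsq, ?_⟩
  have hsz₀ : ‖s z₀‖ ^ 2 = ‖c‖ := by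
    rw [← norm_pow, hsq z₀ hz₀, hf.map_basepoint, blaschke_zero, norm_neg]
  have hs1 : ‖s z₀‖ < 1 := (sq_lt_one_iff₀ (norm_nonneg _)).1 (hsz₀ ▸ hc)
  have hs' : HasDerivAt s (deriv s z₀) z₀ :=
    ((hs z₀ hz₀).differentiableAt (hW.mem_nhds hz₀)).hasDerivAt
  have hf' : HasDerivAt f (deriv f z₀) z₀ :=
    ((hf.differentiableOn z₀ hz₀).differentiableAt (hW.mem_nhds hz₀)).hasDerivAt
  have hderiv : 2 * ‖s z₀‖ * ‖deriv s z₀‖ = (1 - ‖c‖ ^ 2) * ‖deriv f z₀‖ := by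
    rw [← norm_deriv_blaschke_comp_of_eq_zero hc hf' hf.map_basepoint,
      ← EventuallyEq.deriv_eq (eventuallyEq_of_mem (hW.mem_nhds hz₀) hsq), (hs'.fun_pow 2).deriv]
    simp
  have hpos : 0 < 1 - ‖s z₀‖ ^ 2 := by rwa [hsz₀, sub_pos]
  have hpos' : 0 < ‖deriv f z₀‖ * ((1 - ‖s z₀‖ ^ 2) * (1 - ‖s z₀‖) ^ 2) :=
    mul_pos (norm_pos_iff.2 hd) (mul_pos hpos (pow_pos (sub_pos.2 hs1) 2))
  rw [norm_deriv_blaschke_comp_self hs' hs1, lt_div_iff₀ hpos]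
  refine lt_of_mul_lt_mul_left ?_ (by positivity : 0 ≤ 2 * ‖s z₀‖)
  rw [hderiv, ← hsz₀]
  linarith

end IsDiskEmbedding

theorem exists_bijOn_ball {W : Set ℂ} (hW : IsOpen W) (hWc : IsConnected W)
    (hWb : Bornology.IsBounded W)
    (hlog : ∀ f : ℂ → ℂ, DifferentiableOn ℂ f W → InjOn f W → ∀ c ∉ f '' W,
      HasLogOn (fun z => f z - c) W) :
    ∃ f : ℂ → ℂ, DifferentiableOn ℂ f W ∧ BijOn f W (ball 0 1) := by
  obtain ⟨z₀, hz₀⟩ := hWc.nonempty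
  obtain ⟨f, hf, hd, hmax⟩ :=
    IsDiskEmbedding.exists_forall_norm_deriv_le hW hWc.isPreconnected hWb hz₀
  refine ⟨f, hf.differentiableOn, hf.mapsTo, hf.injOn, fun c hc => ?_⟩
  by_contra hcf
  obtain ⟨g, hg, hlt⟩ := hf.exists_norm_deriv_lt hW hz₀ hd (mem_ball_zero_iff.1 hc)
    (hlog f hf.differentiableOn hf.injOn c hcf)
  exact hlt.not_ge (hmax g hg)

lemma eqOn_of_exp_eq {X : Type*} [TopologicalSpace X] {g₁ g₂ : X → ℂ} {C : Set X}
    (hC : IsPreconnected C) (h₁ : ContinuousOn g₁ C) (h₂ : ContinuousOn g₂ C)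
    (he : ∀ x ∈ C, Complex.exp (g₁ x) = Complex.exp (g₂ x)) {x₀ : X} (hx₀ : x₀ ∈ C)
    (h : g₁ x₀ = g₂ x₀) : EqOn g₁ g₂ C := by
  obtain ⟨n, hn⟩ := exists_int_of_exp_eq hC h₁ h₂ he
  have hn₀ := hn x₀ hx₀
  rw [h, left_eq_add] at hn₀
  exact fun x hx => by rw [hn x hx, hn₀, add_zero]

namespace HasLogOn

variable {X : Type*} [TopologicalSpace X] {f : X → ℂ} {s t : Set X}

lemma exists_apply_eq (h : HasLogOn f s) {x₀ : X} (hx₀ : x₀ ∈ s) {w₀ : ℂ}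
    (hw₀ : Complex.exp w₀ = f x₀) : ∃ g : X → ℂ, ContinuousOn g s ∧
      (∀ x ∈ s, Complex.exp (g x) = f x) ∧ g x₀ = w₀ := by
  obtain ⟨g, hg, he⟩ := h
  refine ⟨fun x => g x + (w₀ - g x₀), hg.add continuousOn_const, fun x hx => ?_,
    add_sub_cancel _ _⟩
  rw [Complex.exp_add, Complex.exp_sub, hw₀, he x₀ hx₀, he x hx,
    div_self (hw₀ ▸ Complex.exp_ne_zero _), mul_one]

lemma apply_eq_of_union (h : HasLogOn f (s ∪ t)) (hs : IsPreconnected s) (ht : IsPreconnected t)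
    {g₁ g₂ : X → ℂ} (h₁ : ContinuousOn g₁ s) (he₁ : ∀ x ∈ s, Complex.exp (g₁ x) = f x)
    (h₂ : ContinuousOn g₂ t) (he₂ : ∀ x ∈ t, Complex.exp (g₂ x) = f x) {x₀ : X}
    (hx₀ : x₀ ∈ s ∩ t) (hg : g₁ x₀ = g₂ x₀) {x : X} (hx : x ∈ s ∩ t) : g₁ x = g₂ x := by
  obtain ⟨G, hG, hGe, hG₀⟩ := h.exists_apply_eq (Or.inl hx₀.1) (he₁ x₀ hx₀.1)
  have hs' := eqOn_of_exp_eq hs (hG.mono subset_union_left) h₁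
    (fun y hy => (hGe y (Or.inl hy)).trans (he₁ y hy).symm) hx₀.1 hG₀
  have ht' := eqOn_of_exp_eq ht (hG.mono subset_union_right) h₂
    (fun y hy => (hGe y (Or.inr hy)).trans (he₂ y hy).symm) hx₀.2 (hG₀.trans hg)
  exact (hs' hx.1).symm.trans (ht' hx.2)

theorem of_forall_isCompact {E : Type*} [NormedAddCommGroup E] [NormedSpace ℝ E] [ProperSpace E]
    {W : Set E} (hW : IsOpen W) (hWc : IsConnected W) {f : E → ℂ}
    (h : ∀ Q ⊆ W, IsCompact Q → HasLogOn f Q) : HasLogOn f W := by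
  obtain ⟨x₀, hx₀⟩ := hWc.nonempty
  obtain ⟨w₀, hw₀⟩ : ∃ w, Complex.exp w = f x₀ := by
    obtain ⟨g, -, he⟩ := h {x₀} (singleton_subset_iff.2 hx₀) isCompact_singleton
    exact ⟨g x₀, he x₀ rfl⟩
  -- The value at `x` is the one reached by continuation along a path from `x₀`.
  have hpath : ∀ x, ∃ (Q : Set E) (g : E → ℂ), x ∈ W → Q ⊆ W ∧ IsCompact Q ∧ IsPreconnected Q ∧
      x₀ ∈ Q ∧ x ∈ Q ∧ ContinuousOn g Q ∧ (∀ y ∈ Q, Complex.exp (g y) = f y) ∧ g x₀ = w₀ := by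
    intro x
    by_cases hx : x ∈ W
    · obtain ⟨γ, hγ⟩ := (hW.isConnected_iff_isPathConnected.1 hWc).joinedIn x₀ hx₀ x hx
      have hx₀γ : x₀ ∈ range γ := ⟨0, γ.source⟩
      have hγW : range γ ⊆ W := range_subset_iff.2 hγ
      have hγc : IsCompact (range γ) := isCompact_range γ.continuous
      obtain ⟨g, hg⟩ := (h _ hγW hγc).exists_apply_eq hx₀γ hw₀
      exact ⟨_, g, fun _ => ⟨hγW, hγc, isPreconnected_range γ.continuous, hx₀γ, ⟨1, γ.target⟩, hg⟩⟩
    · exact ⟨∅, f, fun h => absurd h hx⟩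
  choose Q g hQ using hpath
  refine ⟨fun x => g x x, fun x hx => ?_, fun x hx => ?_⟩
  · obtain ⟨hQW, hQc, hQp, hx₀Q, hxQ, -⟩ := hQ x hx
    obtain ⟨r, hr, hrW⟩ := nhds_basis_closedBall.mem_iff.1 (hW.mem_nhds hx)
    have hBp : IsPreconnected (Q x ∪ closedBall x r) :=
      hQp.union x hxQ (mem_closedBall_self hr.le) (convex_closedBall x r).isPreconnected
    have hBc : IsCompact (Q x ∪ closedBall x r) := hQc.union (isCompact_closedBall x r)
    have hBW : Q x ∪ closedBall x r ⊆ W := union_subset hQW hrW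
    obtain ⟨G, hG, hGe, hG₀⟩ := (h _ hBW hBc).exists_apply_eq (Or.inl hx₀Q) hw₀
    have hGx : ContinuousAt G x := hG.continuousAt
      (mem_of_superset (closedBall_mem_nhds x hr) subset_union_right)
    refine (hGx.congr ?_).continuousWithinAt
    filter_upwards [closedBall_mem_nhds x hr] with y hy
    obtain ⟨hQW', hQc', hQp', hx₀Q', hyQ', hg', he', hg₀'⟩ := hQ y (hrW hy)
    exact (h _ (union_subset hBW hQW') (hBc.union hQc')).apply_eq_of_union hBp hQp' hG hGe hg' he'
      ⟨Or.inl hx₀Q, hx₀Q'⟩ (hG₀.trans hg₀'.symm) ⟨Or.inr hy, hyQ'⟩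
  · obtain ⟨-, -, -, -, hxQ, -, he, -⟩ := hQ x hx
    exact he x hxQ

end HasLogOn

lemma isPreconnected_sdiff_of_isPreconnected_compl {U F : Set ↥Sphere2} (hU : IsOpen U)
    (hUc : IsPreconnected U) (hF : IsClosed F) (hFc : IsPreconnected Fᶜ) (hFU : F ⊆ U) :
    IsPreconnected (U \ F) := by
  have he : (F ∪ Uᶜ)ᶜ = U \ F := by rw [compl_union, compl_compl, inter_comm, sdiff_eq]
  have hinter : F ∩ Uᶜ = ∅ := (disjoint_compl_right_iff_subset.2 hFU).inter_eq
  refine isPreconnected_of_forall_pair fun x hx y hy => ⟨connectedComponentIn (U \ F) x,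
    connectedComponentIn_subset _ _, mem_connectedComponentIn hx, ?_,
    isPreconnected_connectedComponentIn⟩
  rw [← he]
  refine mem_connectedComponentIn_compl_union hF hU.isClosed_compl (hinter ▸ isPreconnected_empty)
    hx.2 (not_not.2 hx.1) (hFc.subset_connectedComponentIn hx.2 Subset.rfl hy.2) ?_
  rw [compl_compl]
  exact hUc.subset_connectedComponentIn hx.1 Subset.rfl hy.1

lemma isPreconnected_compl_of_isPreconnected_sdiff {X : Type*} [TopologicalSpace X]
    [PreconnectedSpace X] [LocallyConnectedSpace X] {K V : Set X} (hK : IsClosed K)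
    (hV : IsOpen V) (hKV : K ⊆ V) (h : IsPreconnected (V \ K)) : IsPreconnected Kᶜ := by
  rcases K.eq_empty_or_nonempty with rfl | ⟨k, hk⟩
  · rw [compl_empty]
    exact isPreconnected_univ
  have hmeet : ∀ x ∈ Kᶜ, ∃ a ∈ connectedComponentIn Kᶜ x, a ∈ V \ K := by
    intro x hx
    have hne : connectedComponentIn Kᶜ x ≠ univ := fun h =>
      connectedComponentIn_subset Kᶜ x (h ▸ mem_univ k) hk
    obtain ⟨y, hy⟩ := nonempty_frontier_iff.2 ⟨⟨x, mem_connectedComponentIn hx⟩, hne⟩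
    obtain ⟨a, haV, ha⟩ := mem_closure_iff.1 (frontier_subset_closure hy) V hV
      (hKV (frontier_connectedComponentIn_compl_subset hK hy))
    exact ⟨a, ha, haV, connectedComponentIn_subset _ _ ha⟩
  refine isPreconnected_of_forall_pair fun x hx y hy => ?_
  obtain ⟨a, hax, ha⟩ := hmeet x hx
  obtain ⟨b, hby, hb⟩ := hmeet y hy
  have hab : b ∈ connectedComponentIn Kᶜ a :=
    h.subset_connectedComponentIn ha (fun z hz => hz.2) hb
  refine ⟨_, connectedComponentIn_subset _ x, mem_connectedComponentIn hx, ?_,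
    isPreconnected_connectedComponentIn⟩
  rw [connectedComponentIn_eq hax, connectedComponentIn_eq hab, ← connectedComponentIn_eq hby]
  exact mem_connectedComponentIn hy

-- `Q'` fills in those components of the complement of `Q` that miss the complement of `W`.
lemma exists_isCompact_isPreconnected_sdiff {q : ↥Sphere2} {W Q : Set ℂ} (hW : IsOpen W)
    (hWc : IsPreconnected W) (hC : IsPreconnected ((sphereChart q).symm '' W)ᶜ)
    (hQ : IsCompact Q) (hQW : Q ⊆ W) :
    ∃ Q', IsCompact Q' ∧ Q ⊆ Q' ∧ Q' ⊆ W ∧ IsPreconnected (W \ Q') := by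
  set ψ := (sphereChart q).symm
  have hψc : Continuous ψ := continuous_sphereChart_symm q
  have hψi : Function.Injective ψ := injective_sphereChart_symm
  have hqW : q ∈ (ψ '' W)ᶜ := fun ⟨z, _, hz⟩ => sphereChart_symm_ne q z hz
  set O := connectedComponentIn (ψ '' Q)ᶜ q
  have hO : IsOpen O := (hQ.image hψc).isClosed.isOpen_compl.connectedComponentIn
  have hOW : Oᶜ ⊆ ψ '' W := compl_subset_comm.1
    (hC.subset_connectedComponentIn hqW (compl_subset_compl.2 (image_mono hQW)))
  have hqO : q ∉ Oᶜ := fun h => hqW (hOW h)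
  have hOimage : ψ '' (ψ ⁻¹' Oᶜ) = Oᶜ :=
    image_preimage_eq_of_subset (hOW.trans (image_subset_range _ _))
  refine ⟨ψ ⁻¹' Oᶜ, ?_, fun z hz hzO => connectedComponentIn_subset _ _ hzO ⟨z, hz, rfl⟩,
    fun z hz => hψi.mem_set_image.1 (hOW hz), ?_⟩
  · rw [← sphereChart_image_eq hqO]
    exact isCompact_sphereChart_image hO.isClosed_compl hqO
  · have hsdiff : IsPreconnected (ψ '' (W \ ψ ⁻¹' Oᶜ)) := by
      rw [image_sdiff hψi, hOimage]
      exact isPreconnected_sdiff_of_isPreconnected_compl (isOpen_sphereChart_symm_image hW)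
        (hWc.image ψ hψc.continuousOn) hO.isClosed_compl
        ((compl_compl O).symm ▸ isPreconnected_connectedComponentIn) hOW
    have hmaps : ψ '' (W \ ψ ⁻¹' Oᶜ) ⊆ {q}ᶜ := by
      rintro _ ⟨z, -, rfl⟩
      exact sphereChart_symm_ne q z
    convert hsdiff.image _ ((continuousOn_sphereChart q).mono hmaps) using 1
    simp [image_image, ψ]

lemma hasLogOn_sub_of_injOn {q : ↥Sphere2} {W : Set ℂ} (hW : IsOpen W) (hWc : IsConnected W)
    (hC : IsPreconnected ((sphereChart q).symm '' W)ᶜ) {f : ℂ → ℂ} (hf : ContinuousOn f W)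
    (hfi : InjOn f W) (hfo : IsOpen (f '' W)) {c : ℂ} (hc : c ∉ f '' W) :
    HasLogOn (fun z => f z - c) W := by
  set ψ := (sphereChart q).symm
  have hψc : Continuous ψ := continuous_sphereChart_symm q
  have hψi : Function.Injective ψ := injective_sphereChart_symm
  refine HasLogOn.of_forall_isCompact hW hWc fun Q hQW hQ => ?_
  obtain ⟨Q', hQ', hQQ', hQ'W, hsdiff⟩ :=
    exists_isCompact_isPreconnected_sdiff hW hWc.isPreconnected hC hQ hQW
  refine HasLogOn.mono ?_ hQQ'
  have hfQ : ContinuousOn f Q' := hf.mono hQ'W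
  set K := ψ '' (f '' Q')
  have hK : IsClosed K := ((hQ'.image_of_continuousOn hfQ).image hψc).isClosed
  have hKc : IsPreconnected Kᶜ := by
    refine isPreconnected_compl_of_isPreconnected_sdiff hK (isOpen_sphereChart_symm_image hfo)
      (image_mono (image_mono hQ'W)) ?_
    rw [← image_sdiff hψi, ← hfi.image_sdiff_subset hQ'W]
    exact (hsdiff.image _ (hf.mono sdiff_subset)).image _ hψc.continuousOn
  have hqK : q ∈ Kᶜ := fun ⟨z, _, hz⟩ => sphereChart_symm_ne q z hz
  have hcK : ψ c ∈ Kᶜ := fun h => hc (image_mono hQ'W (hψi.mem_set_image.1 h))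
  have hlog := (hasLogOn_of_mem_connectedComponentIn hK hcK (sphereChart_symm_ne q c)
    (hKc.subset_connectedComponentIn hcK Subset.rfl hqK)).comp (φ := fun z => ψ (f z))
    (hψc.comp_continuousOn hfQ) fun z hz => ⟨_, ⟨z, hz, rfl⟩, rfl⟩
  simpa [ψ] using hlog

theorem exists_bijOn_ball_of_isPreconnected_compl {q : ↥Sphere2} {W : Set ℂ} (hW : IsOpen W)
    (hWc : IsConnected W) (hWb : Bornology.IsBounded W)
    (hC : IsPreconnected ((sphereChart q).symm '' W)ᶜ) :
    ∃ f : ℂ → ℂ, DifferentiableOn ℂ f W ∧ BijOn f W (ball 0 1) :=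
  exists_bijOn_ball hW hWc hWb fun _ hf hfi _ hc => hasLogOn_sub_of_injOn hW hWc hC hf.continuousOn
    hfi (isOpen_image_of_injOn hW hf hfi) hc

/-! ### Boundary values of conformal maps -/

section LengthArea

open MeasureTheory

lemma lintegral_norm_deriv_sq_eq_volume_image {Ω : Set ℂ} (hΩ : IsOpen Ω) {k : ℂ → ℂ}
    (hk : DifferentiableOn ℂ k Ω) (hi : InjOn k Ω) :
    ∫⁻ z in Ω, ENNReal.ofReal (‖deriv k z‖ ^ 2) = volume (k '' Ω) := by
  rw [← lintegral_abs_det_fderiv_eq_addHaar_image volume hΩ.measurableSet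
    (fun z hz => (((hk z hz).differentiableAt
      (hΩ.mem_nhds hz)).hasDerivAt.complexToReal_fderiv).hasFDerivWithinAt) hi]
  refine setLIntegral_congr_fun hΩ.measurableSet fun z _ => ?_
  have hdet : (deriv k z • (1 : ℂ →L[ℝ] ℂ)).det = ‖deriv k z‖ ^ 2 := by
    rw [← Complex.normSq_eq_norm_sq, ← Algebra.norm_complex_apply, Algebra.norm_apply,
      ContinuousLinearMap.det]
    congr 1
  simp only [hdet, abs_pow, abs_norm]

lemma continuous_complex_mk (s : ℝ) : Continuous fun θ : ℝ => (⟨s, θ⟩ : ℂ) :=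
  Complex.equivRealProdCLM.symm.continuous.comp (Continuous.prodMk_right s)

-- By Fubini, slices of energy at least `η` over a half-line would give an image of infinite area.
lemma exists_setLIntegral_norm_deriv_sq_lt {Ω : Set ℂ} (hΩ : IsOpen Ω) {k : ℂ → ℂ}
    (hk : DifferentiableOn ℂ k Ω) (hi : InjOn k Ω) (hb : Bornology.IsBounded (k '' Ω)) (s₀ : ℝ)
    {η : ℝ} (hη : 0 < η) : ∃ s < s₀,
      ∫⁻ θ in {θ : ℝ | (⟨s, θ⟩ : ℂ) ∈ Ω}, ENNReal.ofReal (‖deriv k ⟨s, θ⟩‖ ^ 2) <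
        ENNReal.ofReal η := by
  by_contra! hcon
  have harea := lintegral_norm_deriv_sq_eq_volume_image hΩ hk hi
  refine (harea.trans_lt hb.measure_lt_top).ne (top_unique ?_)
  let G : ℂ → ENNReal := Ω.indicator fun z => ENNReal.ofReal (‖deriv k z‖ ^ 2)
  have hG : Measurable G :=
    Measurable.indicator (by have := measurable_deriv k; fun_prop) hΩ.measurableSet
  let e := Complex.measurableEquivRealProd.symm
  calc (⊤ : ENNReal) = ∫⁻ _ in Iio s₀, ENNReal.ofReal η := by
        rw [setLIntegral_const, Real.volume_Iio, ENNReal.mul_top]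
        simpa using hη
    _ ≤ ∫⁻ s in Iio s₀, ∫⁻ θ, G (e (s, θ)) := by
        refine setLIntegral_mono' measurableSet_Iio fun s hs => (hcon s hs).trans ?_
        have hmeas : MeasurableSet {θ : ℝ | (⟨s, θ⟩ : ℂ) ∈ Ω} :=
          (hΩ.preimage (continuous_complex_mk s)).measurableSet
        rw [← lintegral_indicator hmeas]
        rfl
    _ ≤ ∫⁻ s, ∫⁻ θ, G (e (s, θ)) := setLIntegral_le_lintegral _ _
    _ = ∫⁻ p, G (e p) := (lintegral_prod _ (hG.comp e.measurable).aemeasurable).symm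
    _ = ∫⁻ z, G z := Complex.volume_preserving_equiv_real_prod.symm.lintegral_comp hG
    _ = ∫⁻ z in Ω, ENNReal.ofReal (‖deriv k z‖ ^ 2) := lintegral_indicator hΩ.measurableSet _

lemma norm_intervalIntegral_le_mul_of_integral_norm_sq_le {f : ℝ → ℂ} {a b η : ℝ} (hab : a ≤ b)
    (hη : 0 < η) (hf : ContinuousOn f (uIcc a b)) (h : ∫ θ in a..b, ‖f θ‖ ^ 2 ≤ η ^ 2) :
    ‖∫ θ in a..b, f θ‖ ≤ η * (b - a + 1) := by
  have hint : IntervalIntegrable (fun θ => η⁻¹ * ‖f θ‖ ^ 2) volume a b :=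
    (continuousOn_const.mul (hf.norm.pow 2)).intervalIntegrable
  -- AM-GM
  have hamgm : ∀ x : ℝ, x ≤ η + η⁻¹ * x ^ 2 := fun x => by
    have : η + η⁻¹ * x ^ 2 - x = η⁻¹ * ((x - η / 2) ^ 2 + 3 / 4 * η ^ 2) := by
      field_simp
      ring
    linarith [show 0 ≤ η⁻¹ * ((x - η / 2) ^ 2 + 3 / 4 * η ^ 2) by positivity]
  calc ‖∫ θ in a..b, f θ‖
      ≤ ∫ θ in a..b, (η + η⁻¹ * ‖f θ‖ ^ 2) :=
        intervalIntegral.norm_integral_le_of_norm_le hab (Eventually.of_forall fun θ _ => hamgm _)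
          (intervalIntegrable_const.add hint)
    _ = η * (b - a) + η⁻¹ * ∫ θ in a..b, ‖f θ‖ ^ 2 := by
        rw [intervalIntegral.integral_add intervalIntegrable_const hint,
          intervalIntegral.integral_const, intervalIntegral.integral_const_mul, smul_eq_mul,
          mul_comm]
    _ ≤ η * (b - a) + η⁻¹ * η ^ 2 := by gcongr
    _ = η * (b - a + 1) := by field_simp

lemma dist_le_mul_of_setLIntegral_norm_deriv_sq_lt {Ω : Set ℂ} (hΩ : IsOpen Ω) {k : ℂ → ℂ}
    (hk : DifferentiableOn ℂ k Ω) {s η : ℝ} (hη : 0 < η)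
    (h : ∫⁻ θ in {θ : ℝ | (⟨s, θ⟩ : ℂ) ∈ Ω}, ENNReal.ofReal (‖deriv k ⟨s, θ⟩‖ ^ 2) <
        ENNReal.ofReal (η ^ 2)) {a b : ℝ} (hab : a ≤ b)
    (hsub : ∀ θ ∈ Icc a b, (⟨s, θ⟩ : ℂ) ∈ Ω) :
    dist (k ⟨s, a⟩) (k ⟨s, b⟩) ≤ η * (b - a + 1) := by
  rw [← uIcc_of_le hab] at hsub
  have hline : ∀ θ : ℝ, HasDerivAt (fun θ : ℝ => (⟨s, θ⟩ : ℂ)) Complex.I θ := fun θ => by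
    simpa [Complex.mk_eq_add_mul_I] using
      ((hasDerivAt_id θ).ofReal_comp.mul_const Complex.I).const_add (s : ℂ)
  have hderiv : ∀ θ ∈ uIcc a b, HasDerivAt (fun θ : ℝ => k ⟨s, θ⟩)
      (deriv k ⟨s, θ⟩ * Complex.I) θ := fun θ hθ =>
    ((hk _ (hsub θ hθ)).differentiableAt (hΩ.mem_nhds (hsub θ hθ))).hasDerivAt.comp θ (hline θ)
  have hcont : ContinuousOn (fun θ : ℝ => deriv k ⟨s, θ⟩) (uIcc a b) :=
    (hk.deriv hΩ).continuousOn.comp (continuous_complex_mk s).continuousOn hsub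
  have hcont' : ContinuousOn (fun θ : ℝ => deriv k ⟨s, θ⟩ * Complex.I) (uIcc a b) :=
    hcont.mul continuousOn_const
  rw [dist_comm, dist_eq_norm,
    ← intervalIntegral.integral_eq_sub_of_hasDerivAt hderiv hcont'.intervalIntegrable]
  refine norm_intervalIntegral_le_mul_of_integral_norm_sq_le hab hη hcont' ?_
  simp only [norm_mul, Complex.norm_I, mul_one]
  have hint : IntegrableOn (fun θ : ℝ => ‖deriv k ⟨s, θ⟩‖ ^ 2) (Ioc a b) :=
    (intervalIntegrable_iff_integrableOn_Ioc_of_le hab).1 (hcont.norm.pow 2).intervalIntegrable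
  rw [intervalIntegral.integral_of_le hab, ← ENNReal.ofReal_le_ofReal_iff (by positivity),
    ofReal_integral_eq_lintegral_ofReal hint (Eventually.of_forall fun _ => by positivity)]
  refine (lintegral_mono_set fun θ hθ => hsub θ ?_).trans h.le
  exact uIcc_of_le hab ▸ Ioc_subset_Icc_self hθ

end LengthArea

lemma exists_forall_re_eq_dist_le {Ω : Set ℂ} (hΩ : IsOpen Ω) {k : ℂ → ℂ}
    (hk : DifferentiableOn ℂ k Ω) (hi : InjOn k Ω) (hb : Bornology.IsBounded (k '' Ω)) {C : ℝ}
    (him : ∀ z ∈ Ω, |z.im| < C) (hord : ∀ s : ℝ, OrdConnected {θ : ℝ | (⟨s, θ⟩ : ℂ) ∈ Ω})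
    (s₀ : ℝ) {ε : ℝ} (hε : 0 < ε) :
    ∃ s < s₀, ∀ z ∈ Ω, ∀ w ∈ Ω, z.re = s → w.re = s → dist (k z) (k w) ≤ ε := by
  have hη : 0 < ε / (2 * |C| + 1) := by positivity
  obtain ⟨s, hs, hlt⟩ := exists_setLIntegral_norm_deriv_sq_lt hΩ hk hi hb s₀ (pow_pos hη 2)
  have hle : ∀ a b : ℝ, a ≤ b → (⟨s, a⟩ : ℂ) ∈ Ω → (⟨s, b⟩ : ℂ) ∈ Ω →
      dist (k ⟨s, a⟩) (k ⟨s, b⟩) ≤ ε := by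
    intro a b hab ha hb
    refine (dist_le_mul_of_setLIntegral_norm_deriv_sq_lt hΩ hk hη hlt hab
      fun θ hθ => (hord s).out ha hb hθ).trans ?_
    have haC : -C < a := (abs_lt.1 (him _ ha)).1
    have hbC : b < C := (abs_lt.1 (him _ hb)).2
    rw [div_mul_eq_mul_div, div_le_iff₀ (by positivity)]
    gcongr
    linarith [le_abs_self C]
  refine ⟨s, hs, ?_⟩
  rintro ⟨x, a⟩ ha ⟨y, b⟩ hb (rfl : x = s) (rfl : y = x)
  rcases le_total a b with h | h
  · exact hle a b h ha hb
  · exact dist_comm (k _) (k _) ▸ hle b a h hb ha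

/-- The exponential coordinate at a boundary point `ζ` of the unit disk; it takes vertical segments
to arcs of circles centred at `ζ`. -/
noncomputable def arcCoord (ζ w : ℂ) : ℂ := ζ * (1 - Complex.exp w)

lemma differentiable_arcCoord (ζ : ℂ) : Differentiable ℂ (arcCoord ζ) := by
  unfold arcCoord
  fun_prop

lemma norm_arcCoord_lt_one_iff {ζ : ℂ} (hζ : ‖ζ‖ = 1) (w : ℂ) :
    ‖arcCoord ζ w‖ < 1 ↔ Real.exp w.re < 2 * Real.cos w.im := by
  have hsq : ‖arcCoord ζ w‖ ^ 2 = 1 + Real.exp w.re * (Real.exp w.re - 2 * Real.cos w.im) := by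
    rw [arcCoord, norm_mul, hζ, one_mul, ← Complex.normSq_eq_norm_sq, Complex.normSq_apply]
    simp only [Complex.sub_re, Complex.sub_im, Complex.one_re, Complex.one_im, Complex.exp_re,
      Complex.exp_im]
    linear_combination Real.exp w.re ^ 2 * Real.sin_sq_add_cos_sq w.im
  rw [← sq_lt_one_iff₀ (norm_nonneg _), hsq, add_lt_iff_neg_left,
    ← sub_neg (a := Real.exp w.re)]
  exact smul_neg_iff_of_pos_left (Real.exp_pos _)

lemma injOn_arcCoord {ζ : ℂ} (hζ : ζ ≠ 0) : InjOn (arcCoord ζ) {w | |w.im| < Real.pi} := by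
  intro w (hw : |w.im| < Real.pi) v (hv : |v.im| < Real.pi) h
  have hexp : Complex.exp w = Complex.exp v := sub_right_injective (mul_left_cancel₀ hζ h)
  rw [abs_lt] at hw hv
  exact Complex.exp_inj_of_neg_pi_lt_of_le_pi hw.1 hw.2.le hv.1 hv.2.le hexp

lemma exists_arcCoord_eq {ζ z : ℂ} (hζ : ‖ζ‖ = 1) (hz : ‖z‖ < 1) :
    ∃ w, |w.im| < Real.pi ∧ w.re = Real.log (dist z ζ) ∧ arcCoord ζ w = z := by
  have hζ₀ : ζ ≠ 0 := norm_ne_zero_iff.1 (hζ ▸ one_ne_zero)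
  have hre : 0 < (1 - z / ζ).re := by
    have : |(z / ζ).re| < 1 := (Complex.abs_re_le_norm _).trans_lt (by rwa [norm_div, hζ, div_one])
    rw [Complex.sub_re, Complex.one_re, sub_pos]
    exact (abs_lt.1 this).2
  have hne : 1 - z / ζ ≠ 0 := fun h => by simp [h] at hre
  refine ⟨Complex.log (1 - z / ζ), ?_, ?_, ?_⟩
  · rw [Complex.log_im]
    linarith [Complex.abs_arg_lt_pi_div_two_iff.2 (Or.inl hre), Real.pi_pos]
  · have hmul : ζ * (1 - z / ζ) = ζ - z := by
      field_simp
    rw [Complex.log_re, dist_comm, dist_eq_norm, ← hmul, norm_mul, hζ, one_mul]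
  · rw [arcCoord, Complex.exp_log hne]
    field_simp
    ring

lemma ordConnected_setOf_abs_lt_pi_lt_cos (c : ℝ) :
    OrdConnected {θ : ℝ | |θ| < Real.pi ∧ c < Real.cos θ} := by
  refine ⟨fun a ha b hb θ hθ => ?_⟩
  have hmono : ∀ d : ℝ, |d| < Real.pi → c < Real.cos d → |θ| ≤ |d| →
      |θ| < Real.pi ∧ c < Real.cos θ := fun d hd hcd hle => by
    have := Real.cos_le_cos_of_nonneg_of_le_pi (abs_nonneg θ) hd.le hle
    rw [Real.cos_abs, Real.cos_abs] at this
    exact ⟨hle.trans_lt hd, hcd.trans_le this⟩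
  rcases le_max_iff.1 (abs_le_max_abs_abs hθ.1 hθ.2) with h | h
  · exact hmono a ha.1 ha.2 h
  · exact hmono b hb.1 hb.2 h

lemma exists_forall_dist_eq_dist_le {g : ℂ → ℂ} (hg : DifferentiableOn ℂ g (ball 0 1))
    (hi : InjOn g (ball 0 1)) (hb : Bornology.IsBounded (g '' ball 0 1)) {ζ : ℂ} (hζ : ‖ζ‖ = 1)
    {δ ε : ℝ} (hδ : 0 < δ) (hε : 0 < ε) :
    ∃ r ∈ Ioo 0 δ, ∀ z ∈ ball (0 : ℂ) 1, ∀ w ∈ ball (0 : ℂ) 1, dist z ζ = r → dist w ζ = r →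
      dist (g z) (g w) ≤ ε := by
  let Ω : Set ℂ := {w | |w.im| < Real.pi} ∩ arcCoord ζ ⁻¹' ball 0 1
  have hΩ : IsOpen Ω := (isOpen_lt (by fun_prop) continuous_const).inter
    (isOpen_ball.preimage (differentiable_arcCoord ζ).continuous)
  have hord : ∀ s : ℝ, OrdConnected {θ : ℝ | (⟨s, θ⟩ : ℂ) ∈ Ω} := fun s => by
    convert ordConnected_setOf_abs_lt_pi_lt_cos (Real.exp s / 2) using 3 with θ
    simp only [Ω, mem_inter_iff, mem_ofPred_eq, mem_preimage, mem_ball_zero_iff,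
      norm_arcCoord_lt_one_iff hζ, div_lt_iff₀' (zero_lt_two' ℝ)]
  have hinj : InjOn (g ∘ arcCoord ζ) Ω :=
    hi.comp ((injOn_arcCoord (norm_ne_zero_iff.1 (hζ ▸ one_ne_zero))).mono inter_subset_left)
      fun w hw => hw.2
  have hbdd : Bornology.IsBounded (g ∘ arcCoord ζ '' Ω) :=
    hb.subset (image_comp g _ Ω ▸ image_mono (image_subset_iff.2 inter_subset_right))
  obtain ⟨s, hs, hsd⟩ := exists_forall_re_eq_dist_le hΩ
    (hg.comp (differentiable_arcCoord ζ).differentiableOn fun w hw => hw.2) hinj hbdd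
    (fun z hz => hz.1) hord (Real.log δ) hε
  have hlift : ∀ z ∈ ball (0 : ℂ) 1, dist z ζ = Real.exp s → ∃ w ∈ Ω, w.re = s ∧
      arcCoord ζ w = z := fun z hz hzr => by
    obtain ⟨w, hwim, hwre, rfl⟩ := exists_arcCoord_eq hζ (mem_ball_zero_iff.1 hz)
    exact ⟨w, ⟨hwim, hz⟩, by rw [hwre, hzr, Real.log_exp], rfl⟩
  refine ⟨Real.exp s, ⟨Real.exp_pos s, (Real.lt_log_iff_exp_lt hδ).1 hs⟩,
    fun z hz w hw hzr hwr => ?_⟩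
  obtain ⟨z', hz', hzs, rfl⟩ := hlift z hz hzr
  obtain ⟨w', hw', hws, rfl⟩ := hlift w hw hwr
  exact hsd z' hz' w' hw' hzs hws

lemma IsJordanParam.exists_isPreconnected_subset_of_mem_nhds {X : Type*} [TopologicalSpace X]
    [T2Space X] {c : ℝ → X} (hc : IsJordanParam c) {x : X} {O : Set X} (hO : O ∈ 𝓝 x) :
    ∃ σ ⊆ range c ∩ O, IsClosed σ ∧ IsPreconnected σ ∧ ∃ N ∈ 𝓝 x, N ∩ range c ⊆ σ := by
  by_cases hx : x ∈ range c
  · obtain ⟨t₀, rfl⟩ := hx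
    obtain ⟨τ, hτ, hτO⟩ := nhds_basis_closedBall.mem_iff.1 (hc.continuous.continuousAt hO)
    set ρ := min τ (1 / 4)
    have hρ₀ : 0 < ρ := by positivity
    have hρτ : ρ ≤ τ := min_le_left _ _
    have hρ : ρ ≤ 1 / 4 := min_le_right _ _
    refine ⟨c '' Icc (t₀ - ρ) (t₀ + ρ), ?_, hc.isClosed_image_Icc _ _,
      hc.isPreconnected_image_Icc _ _, (c '' Icc (t₀ + ρ) (t₀ - ρ + 1))ᶜ, ?_, ?_⟩
    · rintro _ ⟨t, ht, rfl⟩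
      refine ⟨⟨t, rfl⟩, hτO ?_⟩
      rw [Real.closedBall_eq_Icc]
      exact ⟨by linarith [ht.1], by linarith [ht.2]⟩
    · refine (hc.isClosed_image_Icc _ _).isOpen_compl.mem_nhds ?_
      rintro ⟨t, ht, h⟩
      obtain ⟨n, hn⟩ := (hc.eq_iff _ _).1 h
      have hn₀ : (0 : ℝ) < n := by linarith [ht.1]
      have hn₁ : (n : ℝ) < 1 := by linarith [ht.2]
      norm_cast at hn₀ hn₁
      lia
    · rintro y ⟨hy, hyc⟩
      rw [hc.range_eq (a := t₀ - ρ) (b := t₀ + ρ) (by linarith) (by linarith)] at hyc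
      exact hyc.resolve_right hy
  · exact ⟨∅, empty_subset _, isClosed_empty, isPreconnected_empty, (range c)ᶜ,
      hc.isClosed_range.isOpen_compl.mem_nhds hx, by simp⟩

-- If `V` is bounded by `J`, adding the boundary `J` to `Λ ∪ σ` separates no further points of `V`,
-- by Janiszewski's theorem.
lemma mem_connectedComponentIn_sdiff_of_frontier_subset {V J Λ σ : Set ↥Sphere2} (hV : IsOpen V)
    (hVc : IsPreconnected V) (hJ : IsClosed J) (hVJ : Disjoint V J) (hfr : frontier V ⊆ J)
    (hΛ : IsClosed Λ) (hσ : IsClosed σ) (hσc : IsPreconnected σ) (hΛσ : Λ ∩ J ⊆ σ) (hσJ : σ ⊆ J)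
    {a b : ↥Sphere2} (ha : a ∈ V) (hb : b ∈ V) (h : b ∈ connectedComponentIn (Λ ∪ σ)ᶜ a) :
    b ∈ connectedComponentIn (V \ Λ) a := by
  have hVJ' : V ⊆ Jᶜ := hVJ.subset_compl_right
  have haΓ : a ∈ (Λ ∪ σ)ᶜ := connectedComponentIn_nonempty_iff.1 ⟨_, h⟩
  have hinter : J ∩ (Λ ∪ σ) = σ := by
    rw [inter_union_distrib_left, inter_comm J Λ, inter_eq_right.2 hσJ, union_eq_right.2 hΛσ]
  have hbX : b ∈ connectedComponentIn (J ∪ (Λ ∪ σ))ᶜ a :=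
    mem_connectedComponentIn_compl_union hJ (hΛ.union hσ) (hinter.symm ▸ hσc) (hVJ' ha) haΓ
      (hVc.subset_connectedComponentIn ha hVJ' hb) h
  set X := connectedComponentIn (J ∪ (Λ ∪ σ))ᶜ a
  have hXsub : X ⊆ (J ∪ (Λ ∪ σ))ᶜ := connectedComponentIn_subset _ _
  have haX : a ∈ X := mem_connectedComponentIn fun hmem => hmem.elim (hVJ' ha) haΓ
  have hXV : X ⊆ V := by
    refine isPreconnected_connectedComponentIn.subset_left_of_subset_union hV
      isClosed_closure.isOpen_compl (disjoint_compl_right.mono_left subset_closure) ?_ ⟨a, haX, ha⟩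
    intro y hy
    by_contra! hyV
    rw [mem_union, not_or, mem_compl_iff, not_not] at hyV
    exact hXsub hy (Or.inl (hfr (hV.frontier_eq.superset ⟨hyV.2, hyV.1⟩)))
  have hXsdiff : X ⊆ V \ Λ := fun y hy => ⟨hXV hy, fun hyΛ => hXsub hy (Or.inr (Or.inl hyΛ))⟩
  exact isPreconnected_connectedComponentIn.subset_connectedComponentIn haX hXsdiff hbX

lemma notMem_connectedComponentIn_sdiff_image_sphere {X Y : Type*} [PseudoMetricSpace X]
    [TopologicalSpace Y] {G : X → Y} {D : Set X} (hi : InjOn G D)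
    (hG : ∀ U ⊆ D, IsOpen U → IsOpen (G '' U)) (hD : IsOpen D) {ζ z w : X} {r : ℝ} (hz : z ∈ D)
    (hw : w ∈ D) (hzr : dist z ζ < r) (hwr : r < dist w ζ) {Λ : Set Y}
    (hΛ : G '' (D ∩ sphere ζ r) ⊆ Λ) : G w ∉ connectedComponentIn (G '' D \ Λ) (G z) := by
  intro h
  have hsub := connectedComponentIn_subset (G '' D \ Λ) (G z)
  have hGz := mem_connectedComponentIn (connectedComponentIn_nonempty_iff.1 ⟨_, h⟩)
  have hdisj : Disjoint (G '' (D ∩ ball ζ r)) (G '' (D \ closedBall ζ r)) := by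
    refine disjoint_image_image fun x hx y hy hxy => ?_
    rw [hi hx.1 hy.1 hxy] at hx
    exact hy.2 (ball_subset_closedBall hx.2)
  have hcover : connectedComponentIn (G '' D \ Λ) (G z) ⊆
      G '' (D ∩ ball ζ r) ∪ G '' (D \ closedBall ζ r) := by
    intro y hy
    obtain ⟨⟨x, hx, rfl⟩, hxΛ⟩ := hsub hy
    rcases lt_trichotomy (dist x ζ) r with hxr | hxr | hxr
    · exact Or.inl ⟨x, ⟨hx, hxr⟩, rfl⟩
    · exact absurd (hΛ ⟨x, ⟨hx, hxr⟩, rfl⟩) hxΛ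
    · exact Or.inr ⟨x, ⟨hx, not_le.2 hxr⟩, rfl⟩
  have hin : connectedComponentIn (G '' D \ Λ) (G z) ⊆ G '' (D ∩ ball ζ r) :=
    isPreconnected_connectedComponentIn.subset_left_of_subset_union
      (hG _ inter_subset_left (hD.inter isOpen_ball))
      (hG _ sdiff_subset (hD.sdiff isClosed_closedBall)) hdisj hcover
      ⟨G z, hGz, z, ⟨hz, hzr⟩, rfl⟩
  exact hdisj.le_bot ⟨hin h, w, ⟨hw, not_le.2 hwr⟩, rfl⟩

/-- A crosscut of small diameter cuts off a small piece of a Jordan domain. -/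
lemma mem_closedBall_of_dist_lt {q : ↥Sphere2} {J : Set ↥Sphere2} (hJ : IsClosed J) {g : ℂ → ℂ}
    (hg : DifferentiableOn ℂ g (ball 0 1)) (hi : InjOn g (ball 0 1))
    (hgJ : Disjoint ((sphereChart q).symm '' (g '' ball 0 1)) J)
    (hfr : frontier ((sphereChart q).symm '' (g '' ball 0 1)) ⊆ J) {ζ x : ℂ} (hζ : ‖ζ‖ = 1)
    {r ρ : ℝ} (hr : r < 1) {σ : Set ↥Sphere2} (hσ : IsClosed σ) (hσc : IsPreconnected σ)
    (hσJ : σ ⊆ J ∩ (sphereChart q).symm '' closedBall x ρ)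
    (hΛ : g '' (ball 0 1 ∩ sphere ζ r) ⊆ closedBall x ρ)
    (hΛσ : closure ((sphereChart q).symm '' (g '' (ball 0 1 ∩ sphere ζ r))) ∩ J ⊆ σ)
    (h₀ : g 0 ∉ closedBall x ρ) {z : ℂ} (hz : z ∈ ball (0 : ℂ) 1) (hzr : dist z ζ < r) :
    g z ∈ closedBall x ρ := by
  by_contra hzB
  set ψ := (sphereChart q).symm
  have hψc : Continuous ψ := continuous_sphereChart_symm q
  have hψi : Function.Injective ψ := injective_sphereChart_symm
  have h0 : (0 : ℂ) ∈ ball (0 : ℂ) 1 := mem_ball_self one_pos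
  have hopen : ∀ U ⊆ ball (0 : ℂ) 1, IsOpen U → IsOpen (ψ ∘ g '' U) := fun U hU hUo =>
    image_comp ψ g U ▸ isOpen_sphereChart_symm_image
      (isOpen_image_of_injOn hUo (hg.mono hU) (hi.mono hU))
  simp only [← image_comp] at hgJ hfr hΛσ
  have hVc : IsPreconnected (ψ ∘ g '' ball 0 1) := (convex_ball (0 : ℂ) 1).isPreconnected.image _
    (hψc.comp_continuousOn hg.continuousOn)
  set B := ψ '' closedBall x ρ
  have hB : IsClosed B := ((isCompact_closedBall x ρ).image hψc).isClosed
  have hBc : IsPreconnected Bᶜ := (LogAcyclic.image_of_convex (convex_closedBall x ρ)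
    (isCompact_closedBall x ρ) hψc.continuousOn hψi.injOn).isPreconnected_compl hB
  set Λ := closure (ψ ∘ g '' (ball 0 1 ∩ sphere ζ r))
  have hΓB : Λ ∪ σ ⊆ B := union_subset
    (closure_minimal (image_comp ψ g _ ▸ image_mono hΛ) hB) (hσJ.trans inter_subset_right)
  refine notMem_connectedComponentIn_sdiff_image_sphere (hψi.comp_injOn hi) hopen isOpen_ball hz h0
    hzr (by simpa [hζ] using hr) subset_closure ?_
  refine mem_connectedComponentIn_sdiff_of_frontier_subset (hopen _ Subset.rfl isOpen_ball) hVc hJ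
    hgJ hfr isClosed_closure hσ hσc hΛσ (hσJ.trans inter_subset_left) (mem_image_of_mem _ hz)
    (mem_image_of_mem _ h0) ?_
  have hcompl : ∀ y, g y ∉ closedBall x ρ → ψ (g y) ∈ Bᶜ := fun y hy hyB =>
    hy (hψi.mem_set_image.1 hyB)
  exact hBc.subset_connectedComponentIn (hcompl z hzB) (compl_subset_compl.2 hΓB) (hcompl 0 h₀)

lemma notMem_image_of_tendsto_of_injOn {X Y ι : Type*} [TopologicalSpace X] [T2Space X]
    [TopologicalSpace Y] {g : X → Y} {W : Set X} (hi : InjOn g W) (hW : IsOpen W)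
    (hg : ∀ U ⊆ W, IsOpen U → IsOpen (g '' U)) {l : Filter ι} [l.NeBot] {z : ι → X} {ζ : X} {x : Y}
    (hzW : ∀ i, z i ∈ W) (hz : Tendsto z l (𝓝 ζ)) (hζ : ζ ∉ W) (hx : Tendsto (g ∘ z) l (𝓝 x)) :
    x ∉ g '' W := by
  rintro ⟨y, hy, rfl⟩
  obtain ⟨U, V, hU, hV, hyU, hζV, hUV⟩ := t2_separation (ne_of_mem_of_not_mem hy hζ)
  have hmem : g '' (W ∩ U) ∈ 𝓝 (g y) :=
    (hg _ inter_subset_left (hW.inter hU)).mem_nhds ⟨y, ⟨hy, hyU⟩, rfl⟩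
  obtain ⟨i, ⟨w, ⟨hwW, hwU⟩, hwz⟩, hiV⟩ :=
    ((hx.eventually_mem hmem).and (hz.eventually_mem (hV.mem_nhds hζV))).exists
  exact disjoint_left.1 hUV (hi hwW (hzW i) hwz ▸ hwU) hiV

lemma exists_image_sphere_subset_ball {g : ℂ → ℂ} (hg : DifferentiableOn ℂ g (ball 0 1))
    (hi : InjOn g (ball 0 1)) (hb : Bornology.IsBounded (g '' ball 0 1)) {ζ : ℂ} (hζ : ‖ζ‖ = 1) :
    ∃ x ∉ g '' ball 0 1, ∀ ε > 0, ∃ r ∈ Ioo (0 : ℝ) 1,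
      g '' (ball 0 1 ∩ sphere ζ r) ⊆ ball x ε := by
  have hpos : ∀ n : ℕ, 0 < 1 / ((n : ℝ) + 1) := fun n => Nat.one_div_pos_of_nat
  choose r hr hrd using fun n : ℕ => exists_forall_dist_eq_dist_le hg hi hb hζ (hpos n) (hpos n)
  have hr₁ : ∀ n, r n < 1 := fun n => (hr n).2.trans_le <|
    (div_le_one (by positivity)).2 (le_add_of_nonneg_left n.cast_nonneg)
  let z : ℕ → ℂ := fun n => ζ * (1 - r n)
  have hzd : ∀ n, dist (z n) ζ = r n := fun n => by
    rw [dist_eq_norm, show z n - ζ = -(ζ * r n) by ring, norm_neg, norm_mul, hζ, one_mul,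
      Complex.norm_real, Real.norm_of_nonneg (hr n).1.le]
  have hzb : ∀ n, z n ∈ ball (0 : ℂ) 1 := fun n => by
    rw [mem_ball_zero_iff, norm_mul, hζ, one_mul, ← Complex.ofReal_one, ← Complex.ofReal_sub,
      Complex.norm_real, Real.norm_of_nonneg] <;> linarith [(hr n).1, hr₁ n]
  have hzt : Tendsto z atTop (𝓝 ζ) := by
    rw [tendsto_iff_dist_tendsto_zero, funext hzd]
    exact squeeze_zero (fun n => (hr n).1.le) (fun n => (hr n).2.le)
      tendsto_one_div_add_atTop_nhds_zero_nat
  obtain ⟨x, -, φ, hφ, hx⟩ := tendsto_subseq_of_bounded hb fun n => ⟨z n, hzb n, rfl⟩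
  refine ⟨x, ?_, fun ε hε => ?_⟩
  · exact notMem_image_of_tendsto_of_injOn hi isOpen_ball
      (fun U hU hUo => isOpen_image_of_injOn hUo (hg.mono hU) (hi.mono hU)) (fun n => hzb (φ n))
      (hzt.comp hφ.tendsto_atTop) (by simp [hζ]) hx
  · obtain ⟨n, hnx, hnε⟩ := ((Metric.tendsto_nhds.1 hx (ε / 2) (half_pos hε)).and
      ((tendsto_one_div_add_atTop_nhds_zero_nat.comp hφ.tendsto_atTop).eventually
        (gt_mem_nhds (half_pos hε)))).exists
    refine ⟨r (φ n), ⟨(hr _).1, hr₁ _⟩, ?_⟩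
    rintro _ ⟨w, ⟨hw, hwr⟩, rfl⟩
    calc dist (g w) x ≤ dist (g w) (g (z (φ n))) + dist (g (z (φ n))) x := dist_triangle _ _ _
      _ < ε / 2 + ε / 2 :=
        add_lt_add ((hrd _ w hw _ (hzb _) hwr (hzd _)).trans_lt hnε) hnx
      _ = ε := add_halves ε

theorem exists_tendsto_nhdsWithin_ball {q : ↥Sphere2} {J : Set ↥Sphere2} (hJ : IsJordanCurve J)
    {g : ℂ → ℂ} (hg : DifferentiableOn ℂ g (ball 0 1)) (hi : InjOn g (ball 0 1))
    (hb : Bornology.IsBounded (g '' ball 0 1))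
    (hgJ : Disjoint ((sphereChart q).symm '' (g '' ball 0 1)) J)
    (hfr : frontier ((sphereChart q).symm '' (g '' ball 0 1)) ⊆ J) {ζ : ℂ} (hζ : ‖ζ‖ = 1) :
    ∃ x, Tendsto g (𝓝[ball 0 1] ζ) (𝓝 x) := by
  obtain ⟨c, hc, rfl⟩ := hJ.exists_isJordanParam
  set ψ := (sphereChart q).symm
  have hψc : Continuous ψ := continuous_sphereChart_symm q
  obtain ⟨x, hx, hsmall⟩ := exists_image_sphere_subset_ball hg hi hb hζ
  have hd : 0 < dist (g 0) x := dist_pos.2 fun h => hx ⟨0, mem_ball_self one_pos, h⟩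
  refine ⟨x, Metric.tendsto_nhds.2 fun ε hε => ?_⟩
  set ρ := min (ε / 2) (dist (g 0) x / 2)
  have hρ₀ : 0 < ρ := by positivity
  have hρε : ρ < ε := (min_le_left _ _).trans_lt (half_lt_self hε)
  have hρ : g 0 ∉ closedBall x ρ := not_le.2 ((min_le_right _ _).trans_lt (half_lt_self hd))
  have hB : ψ '' closedBall x ρ ∈ 𝓝 (ψ x) :=
    mem_of_superset ((isOpen_sphereChart_symm_image isOpen_ball).mem_nhds
      ⟨x, mem_ball_self hρ₀, rfl⟩) (image_mono ball_subset_closedBall)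
  obtain ⟨σ, hσ, hσcl, hσc, N, hN, hNσ⟩ := hc.exists_isPreconnected_subset_of_mem_nhds hB
  obtain ⟨N', hN', hN'cl, hN'N⟩ := exists_mem_nhds_isClosed_subset hN
  obtain ⟨η, hη, hηN⟩ := Metric.mem_nhds_iff.1 (hψc.continuousAt hN')
  obtain ⟨r, hr, hΛ⟩ := hsmall (min η ρ) (lt_min hη hρ₀)
  have hΛσ : closure (ψ '' (g '' (ball 0 1 ∩ sphere ζ r))) ∩ range c ⊆ σ := by
    have hΛN : ψ '' (g '' (ball 0 1 ∩ sphere ζ r)) ⊆ N' :=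
      image_subset_iff.2 ((hΛ.trans (ball_subset_ball (min_le_left _ _))).trans hηN)
    exact fun y hy => hNσ ⟨hN'N (closure_minimal hΛN hN'cl hy.1), hy.2⟩
  have hΛρ : g '' (ball 0 1 ∩ sphere ζ r) ⊆ closedBall x ρ :=
    (hΛ.trans (ball_subset_ball (min_le_right _ _))).trans ball_subset_closedBall
  filter_upwards [self_mem_nhdsWithin, mem_nhdsWithin_of_mem_nhds (ball_mem_nhds ζ hr.1)]
    with w hw hwr
  exact (mem_closedBall.1 (mem_closedBall_of_dist_lt hc.isClosed_range hg hi hgJ hfr hζ hr.2 hσcl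
    hσc hσ hΛρ hΛσ hρ hw hwr)).trans_lt hρε

/-! ### The Schoenflies theorem -/

section Inverse

variable {W : Set ℂ} {f : ℂ → ℂ}

lemma continuousOn_invFunOn_of_injOn (hW : IsOpen W) (hf : DifferentiableOn ℂ f W)
    (hi : InjOn f W) : ContinuousOn (Function.invFunOn f W) (f '' W) := by
  refine IsOpenMap.continuousOn_image_of_leftInvOn (fun U hU => ?_) hi.leftInvOn_invFunOn
  have hsub : Subtype.val '' U ⊆ W := Subtype.coe_image_subset W U
  rw [domRestrict_eq, image_comp]
  exact isOpen_image_of_injOn (hW.isOpenMap_subtype_val U hU) (hf.mono hsub) (hi.mono hsub)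

lemma eventually_deriv_ne_zero_of_injOn (hW : IsOpen W) (hf : DifferentiableOn ℂ f W)
    (hi : InjOn f W) {x : ℂ} (hx : x ∈ W) : ∀ᶠ z in 𝓝[≠] x, deriv f z ≠ 0 := by
  refine (hf.analyticOnNhd hW x hx).deriv.eventually_eq_zero_or_eventually_ne_zero.resolve_left
    fun h => ?_
  obtain ⟨r, hr, hball⟩ := Metric.mem_nhds_iff.1 (inter_mem h (hW.mem_nhds hx))
  have hconst : ∀ y ∈ ball x r, f y = f x := fun y hy =>
    isOpen_ball.is_const_of_deriv_eq_zero (convex_ball x r).isPreconnected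
      (hf.mono fun z hz => (hball hz).2) (fun z hz => (hball hz).1) hy (mem_ball_self hr)
  obtain ⟨y, hy, z, hz, hyz⟩ := (infinite_of_mem_nhds x (ball_mem_nhds x hr)).nontrivial
  exact hyz (hi (hball hy).2 (hball hz).2 ((hconst y hy).trans (hconst z hz).symm))

lemma differentiableOn_invFunOn_of_injOn (hW : IsOpen W) (hf : DifferentiableOn ℂ f W)
    (hi : InjOn f W) : DifferentiableOn ℂ (Function.invFunOn f W) (f '' W) := by
  have ho := isOpen_image_of_injOn hW hf hi
  set g := Function.invFunOn f W
  have hr : RightInvOn g f (f '' W) := (surjOn_image f W).rightInvOn_invFunOn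
  have hg : MapsTo g (f '' W) W := (surjOn_image f W).mapsTo_invFunOn
  have hgc : ∀ y ∈ f '' W, ContinuousAt g y := fun y hy =>
    (continuousOn_invFunOn_of_injOn hW hf hi).continuousAt (ho.mem_nhds hy)
  have hdiff : ∀ y ∈ f '' W, deriv f (g y) ≠ 0 → DifferentiableAt ℂ g y := fun y hy h0 =>
    (HasDerivAt.of_local_left_inverse (hgc y hy)
      (hf.differentiableAt (hW.mem_nhds (hg hy))).hasDerivAt h0
      (eventually_of_mem (ho.mem_nhds hy) fun _ => @hr _)).differentiableAt
  intro y hy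
  have hpunct : ∀ᶠ w in 𝓝[≠] y, DifferentiableAt ℂ g w := by
    have h := eventually_nhdsWithin_iff.1 (eventually_deriv_ne_zero_of_injOn hW hf hi (hg hy))
    rw [eventually_nhdsWithin_iff]
    filter_upwards [(hgc y hy).eventually h, ho.mem_nhds hy] with w hw hwW hne
    exact hdiff w hwW (hw fun hgw => hne (hr.injOn hwW hy hgw))
  exact (Complex.analyticAt_of_differentiable_on_punctured_nhds_of_continuousAt hpunct
    (hgc y hy)).differentiableAt.differentiableWithinAt

end Inverse

/-- Finitely many rotations of the arc `U ∩ sphere 0 1` cover the circle, so a product of rotates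
of `F` vanishes on the whole circle, hence on the disk. -/
lemma eqOn_zero_of_eqOn_zero_arc {F : ℂ → ℂ} (hF : DiffContOnCl ℂ F (ball 0 1)) {U : Set ℂ}
    (hU : IsOpen U) (hne : (U ∩ sphere 0 1).Nonempty) (h0 : EqOn F 0 (U ∩ sphere 0 1)) :
    EqOn F 0 (ball 0 1) := by
  obtain ⟨a, haU, ha⟩ := hne
  rw [mem_sphere_zero_iff_norm] at ha
  have hnorm : ∀ x ∈ sphere (0 : ℂ) 1, ∀ z, ‖a / x * z‖ = ‖z‖ := fun x hx z => by
    rw [norm_mul, norm_div, ha, mem_sphere_zero_iff_norm.1 hx, div_one, one_mul]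
  have hne0 : ∀ x ∈ sphere (0 : ℂ) 1, x ≠ 0 := fun x hx => ne_of_mem_sphere hx one_ne_zero
  obtain ⟨t, hts, hcov⟩ := (isCompact_sphere (0 : ℂ) 1).elim_nhds_subcover
    (fun x => (fun z => a / x * z) ⁻¹' U) fun x hx =>
      (hU.preimage (by fun_prop)).mem_nhds (by rwa [mem_preimage, div_mul_cancel₀ _ (hne0 x hx)])
  have hrot : ∀ x ∈ t, DiffContOnCl ℂ (fun z => F (a / x * z)) (ball 0 1) := fun x hx =>
    hF.comp ((differentiable_fun_id.const_mul _).diffContOnCl) fun z hz => by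
      rw [mem_ball_zero_iff] at hz ⊢
      rwa [hnorm x (hts x hx)]
  have hprod : DiffContOnCl ℂ (fun z => ∏ x ∈ t, F (a / x * z)) (ball 0 1) :=
    ⟨DifferentiableOn.fun_finsetProd fun x hx => (hrot x hx).differentiableOn,
      continuousOn_finsetProd _ fun x hx => (hrot x hx).continuousOn⟩
  have hzero : ∀ z ∈ ball (0 : ℂ) 1, ∃ x ∈ t, F (a / x * z) = 0 := by
    intro z hz
    rw [← Finset.prod_eq_zero_iff, ← norm_le_zero_iff]
    refine Complex.norm_le_of_forall_mem_frontier_norm_le isBounded_ball hprod (fun y hy => ?_)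
      (subset_closure hz)
    rw [frontier_ball _ one_ne_zero] at hy
    obtain ⟨x, hx, hyx⟩ := mem_iUnion₂.1 (hcov hy)
    rw [norm_le_zero_iff]
    refine Finset.prod_eq_zero hx (h0 ⟨hyx, ?_⟩)
    rwa [mem_sphere_zero_iff_norm, hnorm x (hts x hx), ← mem_sphere_zero_iff_norm]
  have hev : ∀ᶠ z in 𝓝[≠] (0 : ℂ), ∃ x ∈ t, F (a / x * z) = 0 :=
    mem_nhdsWithin_of_mem_nhds (mem_of_superset (ball_mem_nhds 0 one_pos) hzero)
  obtain ⟨x, hx, hx0⟩ := (Finset.frequently_exists t).1 hev.frequently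
  have hrot0 : EqOn (fun z => F (a / x * z)) 0 (ball 0 1) :=
    ((hrot x hx).differentiableOn.analyticOnNhd isOpen_ball)
      |>.eqOn_zero_of_preconnected_of_frequently_eq_zero (convex_ball 0 1).isPreconnected
        (mem_ball_self one_pos) hx0
  intro z hz
  have ha0 : a ≠ 0 := norm_ne_zero_iff.1 (ha.trans_ne one_ne_zero)
  have hz' : a / x * (x / a * z) = z := by field_simp [ha0, hne0 x (hts x hx)]
  rw [← hz']
  refine hrot0 ?_
  rwa [mem_ball_zero_iff, ← hnorm x (hts x hx), hz', ← mem_ball_zero_iff]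

lemma isJordanCurve_image_Icc {X : Type*} [TopologicalSpace X] [T2Space X] {f : ℝ → X}
    (hf : ContinuousOn f (Icc 0 1)) (hi : InjOn f (Ico 0 1)) (h : f 0 = f 1) :
    IsJordanCurve (f '' Icc 0 1) := by
  let φ : UnitAddCircle → X := AddCircle.liftIco 1 0 f
  have hφ : ∀ t ∈ Ico (0 : ℝ) 1, φ t = f t := fun t ht => AddCircle.liftIco_zero_coe_apply ht
  have hsurj : ∀ x : UnitAddCircle, ∃ t ∈ Ico (0 : ℝ) 1, (t : UnitAddCircle) = x := fun x => by
    have h := mem_univ x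
    rwa [← AddCircle.coe_image_Ico_eq (1 : ℝ) 0, zero_add] at h
  have hφi : Function.Injective φ := fun x y hxy => by
    obtain ⟨s, hs, rfl⟩ := hsurj x
    obtain ⟨t, ht, rfl⟩ := hsurj y
    rw [hφ s hs, hφ t ht] at hxy
    rw [hi hs ht hxy]
  have hrange : range φ = f '' Icc 0 1 := by
    refine Subset.antisymm (range_subset_iff.2 fun x => ?_) ?_
    · obtain ⟨t, ht, rfl⟩ := hsurj x
      exact ⟨t, Ico_subset_Icc_self ht, (hφ t ht).symm⟩
    · rintro _ ⟨t, ht, rfl⟩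
      rcases ht.2.eq_or_lt with rfl | ht'
      · exact ⟨(0 : ℝ), by rw [hφ 0 (by simp), h]⟩
      · exact ⟨t, hφ t ⟨ht.1, ht'⟩⟩
  have hemb := (AddCircle.liftIco_zero_continuous h hf).isClosedEmbedding hφi
  rw [← hrange]
  exact ⟨hemb.isEmbedding.toHomeomorph.symm.trans
    ((AddCircle.homeomorphCircle one_ne_zero).trans circleHomeomorph)⟩

lemma isJordanCurve_image_segment {X E : Type*} [TopologicalSpace X] [T2Space X]
    [AddCommGroup E] [Module ℝ E] [TopologicalSpace E] [IsTopologicalAddGroup E]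
    [ContinuousSMul ℝ E]
    {Φ : E → X} {x y : E} (hΦ : ContinuousOn Φ (segment ℝ x y)) (hi : InjOn Φ (openSegment ℝ x y))
    (hne : x ≠ y) (hx : Φ x ∉ Φ '' openSegment ℝ x y) (he : Φ x = Φ y) :
    IsJordanCurve (Φ '' segment ℝ x y) := by
  rw [segment_eq_image_lineMap, openSegment_eq_image_lineMap] at *
  rw [← image_comp]
  refine isJordanCurve_image_Icc
    (hΦ.comp AffineMap.lineMap_continuous.continuousOn (mapsTo_image _ _)) ?_ ?_
  · rw [← Ioo_insert_left one_pos, injOn_insert left_notMem_Ioo]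
    refine ⟨hi.comp (AffineMap.lineMap_injective ℝ hne).injOn (mapsTo_image _ _), ?_⟩
    rw [image_comp, Function.comp_apply, AffineMap.lineMap_apply_zero]
    exact hx
  · rw [Function.comp_apply, Function.comp_apply, AffineMap.lineMap_apply_zero,
      AffineMap.lineMap_apply_one, he]

lemma IsJordanCurve.isPreconnected_sdiff_singleton {X : Type*} [TopologicalSpace X] {J : Set X}
    (hJ : IsJordanCurve J) {p : X} (hp : p ∈ J) : IsPreconnected (J \ {p}) := by
  obtain ⟨c, hc, rfl⟩ := hJ.exists_isJordanParam
  obtain ⟨t, rfl⟩ := hp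
  have himage : range c \ {c t} = c '' Ioo t (t + 1) := by
    rw [← Ico_sdiff_left, (hc.injOn_Ico t).image_sdiff_subset
      (singleton_subset_iff.2 (left_mem_Ico.2 (lt_add_one t))), image_singleton]
    congr 1
    exact Subset.antisymm (fun x => hc.exists_mem_Ico t) (image_subset_range _ _)
  rw [himage]
  exact isPreconnected_Ioo.image _ hc.continuous.continuousOn

lemma IsJordanCurve.exists_isJordanSplit_closure_inter_subset {Γ J : Set ↥Sphere2}
    (hΓ : IsJordanCurve Γ) (hJ : IsJordanCurve J) {p : ↥Sphere2} (hp : p ∈ J) (hΓJ : Γ ∩ J ⊆ {p}) :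
    ∃ V O, IsJordanSplit Γ V O ∧ closure V ∩ J ⊆ {p} := by
  obtain ⟨V, O, h, hO⟩ := hΓ.exists_isJordanSplit_of_isPreconnected
    (hJ.isPreconnected_sdiff_singleton hp)
    (disjoint_left.2 fun x hx hxΓ => hx.2 (hΓJ ⟨hxΓ, hx.1⟩))
  refine ⟨V, O, h, fun x hx => ?_⟩
  by_contra hxp
  rw [h.closure_left] at hx
  exact hx.1 (hO ⟨hx.2, hxp⟩)

lemma exists_isOpen_convex_disjoint_not_isBounded {E : Type*} [NormedAddCommGroup E]
    [NormedSpace ℝ E] {C : Set E} (hC : Convex ℝ C) (hCcl : IsClosed C) (hCne : C.Nonempty) {z : E}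
    (hz : z ∉ C) :
    ∃ U, IsOpen U ∧ Convex ℝ U ∧ z ∈ U ∧ Disjoint U C ∧ ¬ Bornology.IsBounded U := by
  obtain ⟨f, u, hfC, hfz⟩ := geometric_hahn_banach_closed_point hC hCcl hz
  obtain ⟨x, hx⟩ := hCne
  have hxz : 0 < f (z - x) := by linarith [hfC x hx, map_sub f z x]
  have hray : ∀ t : ℝ, 0 ≤ t → z + t • (z - x) ∈ {w | u < f w} := fun t ht => by
    rw [mem_ofPred_eq, map_add, map_smul, smul_eq_mul]
    linarith [mul_nonneg ht hxz.le]
  refine ⟨{w | u < f w}, isOpen_lt continuous_const f.continuous,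
    convex_halfSpace_gt f.isLinear u, hfz, disjoint_left.2 fun w hw hwC => hw.not_gt (hfC w hwC),
    fun hb => ?_⟩
  obtain ⟨R, hR⟩ := hb.exists_norm_le
  have hpos : 0 < ‖z - x‖ := norm_pos_iff.2 fun h => hxz.ne' (by rw [h, map_zero])
  have hR0 : 0 ≤ R := (norm_nonneg z).trans (hR z hfz)
  set t := (R + ‖z‖ + 1) / ‖z - x‖
  have ht : 0 ≤ t := by positivity
  have hbound := norm_sub_le (z + t • (z - x)) z
  rw [add_sub_cancel_left, norm_smul, Real.norm_of_nonneg ht, div_mul_cancel₀ _ hpos.ne'] at hbound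
  linarith [hR _ (hray t ht)]

lemma inter_sphere_nonempty_of_isPreconnected {E : Type*} [SeminormedAddCommGroup E] {U : Set E}
    (hU : IsPreconnected U) (hb : ¬ Bornology.IsBounded U) {x : E} {r : ℝ}
    (hx : (U ∩ ball x r).Nonempty) : (U ∩ sphere x r).Nonempty := by
  obtain ⟨z, hzU, hz⟩ := hx
  obtain ⟨w, hw, hwr⟩ : ∃ w ∈ U, r < dist w x := by
    by_contra! h
    exact hb (isBounded_closedBall.subset h)
  obtain ⟨y, hy, hyr⟩ := hU.intermediate_value hzU hw (by fun_prop : ContinuousOn (dist · x) U)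
    ⟨(mem_ball.1 hz).le, hwr.le⟩
  exact ⟨y, hy, hyr⟩

section BoundaryInjectivity

variable {Φ : ℂ → ↥Sphere2} {J : Set ↥Sphere2}

lemma image_mem_or_mem_openSegment {ζ₁ ζ₂ z : ℂ} (he : Φ ζ₁ = Φ ζ₂) (hz : z ∈ segment ℝ ζ₁ ζ₂) :
    Φ z = Φ ζ₁ ∨ z ∈ openSegment ℝ ζ₁ ζ₂ := by
  rw [← insert_endpoints_openSegment] at hz
  rcases hz with rfl | rfl | hz
  exacts [Or.inl rfl, Or.inl he.symm, Or.inr hz]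

lemma exists_isJordanSplit_image_segment (hΦ : ContinuousOn Φ (closedBall 0 1))
    (hi : InjOn Φ (ball 0 1)) (ho : IsOpen (Φ '' ball 0 1)) (hJ : IsJordanCurve J)
    (hd : Disjoint (Φ '' ball 0 1) J) (hs : MapsTo Φ (sphere 0 1) J) {ζ₁ ζ₂ : ℂ}
    (h₁ : ζ₁ ∈ sphere 0 1) (h₂ : ζ₂ ∈ sphere 0 1) (hne : ζ₁ ≠ ζ₂) (he : Φ ζ₁ = Φ ζ₂) :
    ∃ V O, IsJordanSplit (Φ '' segment ℝ ζ₁ ζ₂) V O ∧ closure V ∩ J ⊆ {Φ ζ₁} ∧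
      ∃ z ∈ ball 0 1, Φ z ∈ V := by
  have hopen : openSegment ℝ ζ₁ ζ₂ ⊆ ball 0 1 := openSegment_subset_ball_of_ne
    (sphere_subset_closedBall h₁) (sphere_subset_closedBall h₂) hne
  have hseg : segment ℝ ζ₁ ζ₂ ⊆ closedBall 0 1 := (convex_closedBall 0 1).segment_subset
    (sphere_subset_closedBall h₁) (sphere_subset_closedBall h₂)
  have hball : ∀ z ∈ openSegment ℝ ζ₁ ζ₂, Φ z ∉ J := fun z hz =>
    disjoint_left.1 hd ⟨z, hopen hz, rfl⟩
  have hΓ : IsJordanCurve (Φ '' segment ℝ ζ₁ ζ₂) :=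
    isJordanCurve_image_segment (hΦ.mono hseg) (hi.mono hopen) hne
      (fun ⟨z, hz, hzζ⟩ => hball z hz (hzζ ▸ hs h₁)) he
  obtain ⟨V, O, h, hVJ⟩ := hΓ.exists_isJordanSplit_closure_inter_subset hJ (hs h₁) <| by
    rintro _ ⟨⟨z, hz, rfl⟩, hzJ⟩
    exact (image_mem_or_mem_openSegment he hz).resolve_right fun hz => hball z hz hzJ
  have hmid := midpoint_mem_openSegment (𝕜 := ℝ) ζ₁ ζ₂
  have hmidV : Φ (midpoint ℝ ζ₁ ζ₂) ∈ closure V := by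
    refine frontier_subset_closure ?_
    rw [h.frontier_left]
    exact ⟨_, openSegment_subset_segment _ _ _ hmid, rfl⟩
  obtain ⟨_, ⟨z, hz, rfl⟩, hzV⟩ := mem_closure_iff.1 hmidV _ ho ⟨_, hopen hmid, rfl⟩
  exact ⟨V, O, h, hVJ, z, hz, hzV⟩

/-- The image of the chord from `ζ₁` to `ζ₂` is a Jordan curve meeting `J` in a single point, so on
one side of the chord the boundary values have no room to move. -/
lemma exists_eqOn_arc_of_eq (hΦ : ContinuousOn Φ (closedBall 0 1)) (hi : InjOn Φ (ball 0 1))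
    (ho : IsOpen (Φ '' ball 0 1)) (hJ : IsJordanCurve J) (hd : Disjoint (Φ '' ball 0 1) J)
    (hs : MapsTo Φ (sphere 0 1) J) {ζ₁ ζ₂ : ℂ} (h₁ : ζ₁ ∈ sphere 0 1) (h₂ : ζ₂ ∈ sphere 0 1)
    (hne : ζ₁ ≠ ζ₂) (he : Φ ζ₁ = Φ ζ₂) :
    ∃ U : Set ℂ, IsOpen U ∧ (U ∩ sphere 0 1).Nonempty ∧ ∀ z ∈ U ∩ sphere 0 1, Φ z = Φ ζ₁ := by
  obtain ⟨V, O, hV, hVJ, z₀, hz₀, hz₀V⟩ :=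
    exists_isJordanSplit_image_segment hΦ hi ho hJ hd hs h₁ h₂ hne he
  have hclosed : IsClosed (segment ℝ ζ₁ ζ₂) := by
    rw [segment_eq_image_lineMap]
    exact (isCompact_Icc.image AffineMap.lineMap_continuous).isClosed
  obtain ⟨U, hUo, hUc, hz₀U, hUseg, hUb⟩ := exists_isOpen_convex_disjoint_not_isBounded
    (convex_segment ζ₁ ζ₂) hclosed ⟨ζ₁, left_mem_segment ℝ ζ₁ ζ₂⟩
    fun hz => disjoint_left.1 hV.disjoint_curve hz₀V ⟨z₀, hz, rfl⟩
  have hUV : Φ '' (U ∩ ball 0 1) ⊆ V := by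
    refine (hV.subset_or_subset ((hUc.inter (convex_ball 0 1)).isPreconnected.image Φ
      (hΦ.mono fun z hz => ball_subset_closedBall hz.2)) (disjoint_left.2 ?_)).resolve_right
      fun hO => disjoint_left.1 hV.disjoint hz₀V (hO ⟨z₀, ⟨hz₀U, hz₀⟩, rfl⟩)
    rintro _ ⟨z, ⟨hzU, hz⟩, rfl⟩ ⟨w, hw, hwz⟩
    rcases image_mem_or_mem_openSegment he hw with hw' | hw'
    · exact disjoint_left.1 hd ⟨z, hz, rfl⟩ (hwz ▸ hw' ▸ hs h₁)
    · have hwball := openSegment_subset_ball_of_ne (sphere_subset_closedBall h₁)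
        (sphere_subset_closedBall h₂) hne hw'
      exact disjoint_left.1 hUseg hzU (hi hwball hz hwz ▸ hw)
  refine ⟨U, hUo, inter_sphere_nonempty_of_isPreconnected hUc.isPreconnected hUb ⟨z₀, hz₀U, hz₀⟩,
    fun z hz => hVJ ⟨?_, hs hz.2⟩⟩
  have hcl : z ∈ closure (U ∩ ball 0 1) := by
    refine hUo.inter_closure ⟨hz.1, ?_⟩
    rw [closure_ball _ one_ne_zero]
    exact sphere_subset_closedBall hz.2
  exact closure_mono hUV (((hΦ z (sphere_subset_closedBall hz.2)).mono
    fun z hz => ball_subset_closedBall hz.2).mem_closure_image hcl)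

end BoundaryInjectivity

lemma IsJordanSplit.exists_differentiableOn_image_ball {J V O : Set ↥Sphere2}
    (h : IsJordanSplit J V O) : ∃ (q : ↥Sphere2) (g : ℂ → ℂ), DifferentiableOn ℂ g (ball 0 1) ∧
      InjOn g (ball 0 1) ∧ Bornology.IsBounded (g '' ball 0 1) ∧
      (sphereChart q).symm '' (g '' ball 0 1) = V := by
  obtain ⟨q, hq⟩ := h.isConnected_right.nonempty
  have hqV : q ∉ closure V := by
    rw [h.closure_left]
    exact not_not.2 hq
  have hqV' : V ⊆ {q}ᶜ := subset_compl_singleton_iff.2 fun hV => hqV (subset_closure hV)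
  set ψ := (sphereChart q).symm
  have hW : sphereChart q '' V = ψ ⁻¹' V := sphereChart_image_eq fun hV => hqV (subset_closure hV)
  have hψW : ψ '' (sphereChart q '' V) = V := by
    have hl : LeftInvOn ψ (sphereChart q) V := fun x hx => sphereChart_left_inv (hqV' hx)
    exact hl.image_image
  have hWo : IsOpen (sphereChart q '' V) :=
    hW ▸ h.isOpen_left.preimage (continuous_sphereChart_symm q)
  obtain ⟨f, hf, hfb⟩ := exists_bijOn_ball_of_isPreconnected_compl (q := q) hWo
    (h.isConnected_left.image _ ((continuousOn_sphereChart q).mono hqV'))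
    ((isCompact_sphereChart_image isClosed_closure hqV).isBounded.subset
      (image_mono subset_closure))
    (by rw [hψW, ← h.closure_right]; exact h.isConnected_right.isPreconnected.closure)
  have hgb : BijOn (Function.invFunOn f _) (ball 0 1) (sphereChart q '' V) :=
    (bijOn_comm hfb.invOn_invFunOn).2 hfb
  refine ⟨q, Function.invFunOn f (sphereChart q '' V), ?_, hgb.injOn, ?_, ?_⟩
  · rw [← hfb.image_eq]
    exact differentiableOn_invFunOn_of_injOn hWo hf hfb.injOn
  · rw [hgb.image_eq]
    exact (isCompact_sphereChart_image isClosed_closure hqV).isBounded.subset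
      (image_mono subset_closure)
  · rw [hgb.image_eq, hψW]

/-- Carathéodory's extension theorem, up to injectivity on the boundary. -/
lemma IsJordanSplit.exists_diffContOnCl_image_ball {J V O : Set ↥Sphere2}
    (h : IsJordanSplit J V O) : ∃ (q : ↥Sphere2) (g : ℂ → ℂ), DiffContOnCl ℂ g (ball 0 1) ∧
      InjOn g (ball 0 1) ∧ (sphereChart q).symm '' (g '' ball 0 1) = V := by
  obtain ⟨q, g, hg, hi, hb, hV⟩ := h.exists_differentiableOn_image_ball
  have hlim : ∀ z ∈ closedBall (0 : ℂ) 1, ∃ x, Tendsto g (𝓝[ball 0 1] z) (𝓝 x) := by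
    intro z hz
    rcases (mem_closedBall_zero_iff.1 hz).lt_or_eq with hz | hz
    · exact ⟨g z, hg.continuousOn z (mem_ball_zero_iff.2 hz)⟩
    · exact exists_tendsto_nhdsWithin_ball h.isJordanCurve hg hi hb (hV.symm ▸ h.disjoint_curve)
        (hV.symm ▸ h.frontier_left.subset) hz
  rw [← closure_ball _ one_ne_zero] at hlim
  have heq : EqOn (extendFrom (ball 0 1) g) g (ball 0 1) := fun z hz =>
    extendFrom_eq (subset_closure hz) (hg.continuousOn z hz)
  exact ⟨q, extendFrom (ball 0 1) g,
    ⟨hg.congr heq, continuousOn_extendFrom Subset.rfl hlim⟩, hi.congr heq.symm,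
    by rw [heq.image_eq, hV]⟩

lemma notMem_image_ball_of_mem_sphere {g : ℂ → ℂ} (hg : DiffContOnCl ℂ g (ball 0 1))
    (hi : InjOn g (ball 0 1)) {ζ : ℂ} (hζ : ζ ∈ sphere 0 1) : g ζ ∉ g '' ball 0 1 := by
  have hζcl : ζ ∈ closure (ball (0 : ℂ) 1) := by
    rw [closure_ball _ one_ne_zero]
    exact sphere_subset_closedBall hζ
  have : (comap ((↑) : ball (0 : ℂ) 1 → ℂ) (𝓝 ζ)).NeBot := mem_closure_iff_comap_neBot.1 hζcl
  refine notMem_image_of_tendsto_of_injOn (l := comap ((↑) : ball (0 : ℂ) 1 → ℂ) (𝓝 ζ)) hi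
    isOpen_ball (fun U hU hUo => isOpen_image_of_injOn hUo (hg.differentiableOn.mono hU)
    (hi.mono hU)) Subtype.prop tendsto_comap (mem_sphere.1 hζ).not_lt ?_
  exact (hg.continuousOn ζ hζcl).tendsto.comp (tendsto_nhdsWithin_iff.2
    ⟨tendsto_comap, Eventually.of_forall fun z => subset_closure z.2⟩)

lemma IsJordanSplit.injOn_closedBall {J V O : Set ↥Sphere2} (h : IsJordanSplit J V O)
    {q : ↥Sphere2} {g : ℂ → ℂ} (hg : DiffContOnCl ℂ g (ball 0 1)) (hi : InjOn g (ball 0 1))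
    (hV : (sphereChart q).symm '' (g '' ball 0 1) = V) : InjOn g (closedBall 0 1) := by
  set Φ := (sphereChart q).symm ∘ g
  rw [← image_comp] at hV
  have hgc : ContinuousOn g (closedBall 0 1) := closure_ball (0 : ℂ) one_ne_zero ▸ hg.continuousOn
  have hΦ : ContinuousOn Φ (closedBall 0 1) := (continuous_sphereChart_symm q).comp_continuousOn hgc
  have hΦi : InjOn Φ (ball 0 1) := injective_sphereChart_symm.comp_injOn hi
  have hs : MapsTo Φ (sphere 0 1) J := fun z hz => by
    have hzV : Φ z ∈ closure V := by
      rw [← hV]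
      refine closure_ball (0 : ℂ) one_ne_zero ▸ hΦ |>.image_closure ⟨z, ?_, rfl⟩
      exact closure_ball (0 : ℂ) one_ne_zero ▸ sphere_subset_closedBall hz
    rw [h.closure_left_eq_union, ← hV] at hzV
    refine hzV.resolve_left fun ⟨w, hw, hwz⟩ => notMem_image_ball_of_mem_sphere hg hi hz ⟨w, hw, ?_⟩
    exact injective_sphereChart_symm hwz
  have hsphere : InjOn g (sphere 0 1) := by
    intro x hx y hy hxy
    by_contra hne
    obtain ⟨U, hU, hUne, hUx⟩ := exists_eqOn_arc_of_eq hΦ hΦi (hV ▸ h.isOpen_left) h.isJordanCurve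
      (hV ▸ h.disjoint_curve) hs hx hy hne (congrArg (sphereChart q).symm hxy)
    have hconst : EqOn (fun z => g z - g x) 0 (ball 0 1) := eqOn_zero_of_eqOn_zero_arc
      (hg.sub diffContOnCl_const) hU hUne fun z hz =>
        sub_eq_zero.2 (injective_sphereChart_symm (hUx z hz))
    have h0 : (0 : ℂ) ∈ ball (0 : ℂ) 1 := mem_ball_self one_pos
    have h2 : (1 / 2 : ℂ) ∈ ball (0 : ℂ) 1 := by norm_num [mem_ball_zero_iff]
    have h02 := hi h0 h2 (sub_left_injective ((hconst h0).trans (hconst h2).symm))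
    norm_num at h02
  rw [← ball_union_sphere, injOn_union sphere_disjoint_ball.symm]
  exact ⟨hi, hsphere, fun x hx y hy hxy => notMem_image_ball_of_mem_sphere hg hi hy ⟨x, hx, hxy⟩⟩

lemma isClosedDisk_image_closedBall {Φ : ℂ → ↥Sphere2} (hΦ : ContinuousOn Φ (closedBall 0 1))
    (hi : InjOn Φ (closedBall 0 1)) : IsClosedDisk (Φ '' closedBall 0 1) := by
  have hm : complexToPlane.symm '' UnitDisk2 = closedBall 0 1 := by
    rw [LinearIsometryEquiv.image_closedBall, map_zero]
  have hmaps : MapsTo complexToPlane.symm UnitDisk2 (closedBall 0 1) :=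
    mapsTo_iff_image_subset.2 hm.le
  exact isClosedDisk_iff.2 ⟨Φ ∘ complexToPlane.symm,
    hΦ.comp complexToPlane.symm.continuous.continuousOn hmaps,
    hi.comp complexToPlane.symm.injective.injOn hmaps, by rw [image_comp, hm]⟩

theorem IsJordanSplit.isClosedDisk_closure_left {J V O : Set ↥Sphere2} (h : IsJordanSplit J V O) :
    IsClosedDisk (closure V) := by
  obtain ⟨q, g, hg, hi, hV⟩ := h.exists_diffContOnCl_image_ball
  have hgi := h.injOn_closedBall hg hi hV
  have hΦ : ContinuousOn ((sphereChart q).symm ∘ g) (closure (ball 0 1)) :=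
    (continuous_sphereChart_symm q).comp_continuousOn hg.continuousOn
  have himage : (sphereChart q).symm ∘ g '' closedBall 0 1 = closure V := by
    rw [← hV, ← image_comp, ← image_closure_of_isCompact ?_ hΦ, closure_ball _ one_ne_zero]
    exact closure_ball (0 : ℂ) one_ne_zero ▸ isCompact_closedBall 0 1
  rw [← himage]
  exact isClosedDisk_image_closedBall (closure_ball (0 : ℂ) one_ne_zero ▸ hΦ)
    (injective_sphereChart_symm.comp_injOn hgi)

/-! ### Null sequences of sets -/

section Glue

variable {ι X Y : Type*} [TopologicalSpace X] {D : ι → Set X}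

lemma closure_sdiff_iUnion_eq_frontier (hDo : ∀ i, IsOpen (D i))
    (hd : Pairwise fun i j => Disjoint (closure (D i)) (closure (D j))) (i : ι) :
    closure (D i) \ ⋃ j, D j = frontier (D i) := by
  rw [(hDo i).frontier_eq]
  refine Subset.antisymm (sdiff_subset_sdiff_right (subset_iUnion D i)) fun x hx => ⟨hx.1, ?_⟩
  rw [mem_iUnion]
  rintro ⟨j, hj⟩
  exact hx.2 (hd.eq (not_disjoint_iff.2 ⟨x, hx.1, subset_closure hj⟩) ▸ hj)

lemma exists_eqOn_compl_iUnion_eqOn_closure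
    (hd : Pairwise fun i j => Disjoint (closure (D i)) (closure (D j))) {η : X → Y}
    {F : ι → X → Y} (hF : ∀ i, EqOn (F i) η (frontier (D i))) :
    ∃ H : X → Y, EqOn H η (⋃ i, D i)ᶜ ∧ ∀ i, EqOn H (F i) (closure (D i)) := by
  classical
  let H : X → Y := fun x => if h : ∃ i, x ∈ D i then F h.choose x else η x
  have hHη : EqOn H η (⋃ i, D i)ᶜ := fun x hx => dif_neg (by simpa using hx)
  refine ⟨H, hHη, fun i x hx => ?_⟩
  by_cases h : ∃ j, x ∈ D j
  · have hi : h.choose = i :=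
      hd.eq (not_disjoint_iff.2 ⟨x, subset_closure h.choose_spec, hx⟩)
    exact (dif_pos h).trans (by rw [hi])
  · have hxi : x ∈ frontier (D i) := ⟨hx, fun hxi => h ⟨i, interior_subset hxi⟩⟩
    exact (hHη (by simpa using h)).trans (hF i hxi).symm

end Glue

section NullSequence

variable {ι X Y : Type*} [PseudoMetricSpace X] [BoundedSpace X] [PseudoMetricSpace Y]
  {D : ι → Set X} {U : Set X}

lemma continuousOn_of_tendsto_diam {F : X → Y} (hDo : ∀ i, IsOpen (D i))
    (hDU : ∀ i, closure (D i) ⊆ U) (hne : ∀ i, (closure (D i) \ ⋃ j, D j).Nonempty)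
    (hD : Tendsto (fun i => diam (D i)) cofinite (𝓝 0)) (hFU : ContinuousOn F (U \ ⋃ i, D i))
    (hFD : ∀ i, ContinuousOn F (closure (D i)))
    (hF : ∀ ε > 0, ∀ᶠ i in cofinite, ∀ x ∈ closure (D i), ∀ y ∈ closure (D i),
      dist (F x) (F y) < ε) :
    ContinuousOn F U := by
  intro x hxU
  by_cases hx : x ∈ ⋃ i, D i
  · obtain ⟨i, hi⟩ := mem_iUnion.1 hx
    exact (((hFD i).mono subset_closure).continuousAt ((hDo i).mem_nhds hi)).continuousWithinAt
  have hcl : ∀ i, ContinuousWithinAt F (closure (D i)) x := fun i => by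
    by_cases hxi : x ∈ closure (D i)
    · exact hFD i x hxi
    · exact continuousWithinAt_of_notMem_closure (by rwa [closure_closure])
  refine Metric.tendsto_nhds.2 fun ε hε => ?_
  obtain ⟨δ, hδ, hδF⟩ := Metric.continuousWithinAt_iff.1 (hFU x ⟨hxU, hx⟩) (ε / 2) (half_pos hε)
  have hlarge := (hF (ε / 2) (half_pos hε)).and (hD.eventually (gt_mem_nhds (half_pos hδ)))
  rw [eventually_cofinite] at hlarge
  have hfinite := (eventually_all_finite hlarge).2 fun i _ =>
    eventually_nhdsWithin_iff.1 (Metric.tendsto_nhds.1 (hcl i) ε hε)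
  rw [eventually_nhdsWithin_iff]
  filter_upwards [hfinite, ball_mem_nhds x (half_pos hδ)] with y hy hyx hyU
  rw [mem_ball] at hyx
  by_cases hyD : y ∈ ⋃ i, D i
  · obtain ⟨i, hi⟩ := mem_iUnion.1 hyD
    by_cases hsmall : (∀ x ∈ closure (D i), ∀ y ∈ closure (D i), dist (F x) (F y) < ε / 2) ∧
        diam (D i) < δ / 2
    · obtain ⟨p, hp, hpD⟩ := hne i
      have hyp : dist y p < δ / 2 := by
        refine (dist_le_diam_of_mem (Bornology.IsBounded.all _) (subset_closure hi) hp).trans_lt ?_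
        rw [diam_closure]
        exact hsmall.2
      have hpx : dist (F p) (F x) < ε / 2 :=
        hδF ⟨hDU i hp, hpD⟩ (by linarith [dist_triangle_left p x y])
      linarith [dist_triangle (F y) (F p) (F x), hsmall.1 y (subset_closure hi) p hp]
    · exact hy i hsmall (subset_closure hi)
  · exact (hδF ⟨hyU, hyD⟩ (by linarith)).trans (by linarith)

lemma isPreconnected_sdiff_iUnion (hDo : ∀ i, IsOpen (D i))
    (hd : Pairwise fun i j => Disjoint (closure (D i)) (closure (D j)))
    (hDU : ∀ i, closure (D i) ⊆ U) (hD : Tendsto (fun i => diam (D i)) cofinite (𝓝 0))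
    (hU : IsPreconnected U) (hconn : ∀ i, IsConnected (frontier (D i))) :
    IsPreconnected (U \ ⋃ i, D i) := by
  have hfr := closure_sdiff_iUnion_eq_frontier hDo hd
  refine isPreconnected_of_forall_constant fun f hf => ?_
  choose p hp using fun i => (hconn i).nonempty
  have hconst : ∀ i, EqOn (fun _ => (f (p i)).toNat) (Bool.toNat ∘ f) (frontier (D i)) :=
    fun i x hx => congrArg Bool.toNat <| (hconn i).isPreconnected.constant
      (hf.mono fun y hy => ⟨hDU i (frontier_subset_closure hy), ((hfr i).ge hy).2⟩) (hp i) hx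
  obtain ⟨H, hHf, hHD⟩ := exists_eqOn_compl_iUnion_eqOn_closure hd hconst
  have hH : ContinuousOn H U := by
    refine continuousOn_of_tendsto_diam hDo hDU (fun i => hfr i ▸ (hconn i).nonempty) hD ?_
      (fun i => continuousOn_const.congr (hHD i)) fun ε hε => ?_
    · exact (continuous_of_discreteTopology.comp_continuousOn hf).congr
        (hHf.mono fun x hx => hx.2)
    · refine Eventually.of_forall fun i x hx y hy => ?_
      rwa [hHD i hx, hHD i hy, dist_self]
  intro x hx y hy
  have hxy := hU.constant hH hx.1 hy.1
  rw [hHf hx.2, hHf hy.2] at hxy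
  exact Function.LeftInverse.injective (g := (· == 1)) Bool.toNat_beq_one hxy

lemma tendsto_diam_image {l : Filter ι} {s : Set X} {f : X → Y} (hf : UniformContinuousOn f s)
    (hs : ∀ i, D i ⊆ s) (hD : Tendsto (fun i => diam (D i)) l (𝓝 0)) :
    Tendsto (fun i => diam (f '' D i)) l (𝓝 0) := by
  refine (nhds_basis_closedBall.tendsto_right_iff).2 fun ε hε => ?_
  obtain ⟨δ, hδ, hδf⟩ := Metric.uniformContinuousOn_iff.1 hf ε hε
  filter_upwards [hD.eventually (gt_mem_nhds hδ)] with i hi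
  rw [mem_closedBall_zero_iff, Real.norm_of_nonneg diam_nonneg]
  refine diam_le_of_forall_dist_le hε.le ?_
  rintro _ ⟨x, hx, rfl⟩ _ ⟨y, hy, rfl⟩
  exact (hδf x (hs i hx) y (hs i hy)
    ((dist_le_diam_of_mem (Bornology.IsBounded.all _) hx hy).trans_lt hi)).le

end NullSequence

/-! ### Peripheral circles of Sierpiński curves -/

lemma isPeriphCircleIn_iff {X : Type*} [TopologicalSpace X] {S γ : Set X} :
    IsPeriphCircleIn S γ ↔ γ ⊆ S ∧ IsJordanCurve γ ∧ IsConnected (S \ γ) := by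
  refine and_congr_right fun h => and_congr (isJordanCurve_preimage_val_iff h) ?_
  rw [IsConnected, ← IsInducing.subtypeVal.isPreconnected_image, ← image_nonempty, ← IsConnected,
    ← preimage_compl, Subtype.image_preimage_val, sdiff_eq]

namespace IsSierpinskiFamily

variable {D : ℕ → Set ↥Sphere2}

lemma isJordanSplit (hD : IsSierpinskiFamily D) (i : ℕ) :
    IsJordanSplit (frontier (D i)) (D i) (closure (D i))ᶜ := by
  obtain ⟨E, hE, hDE⟩ := hD.1 i
  obtain ⟨ψ, hψ, hi, rfl⟩ := isClosedDisk_iff.1 hE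
  have h := isJordanSplit_image_unitDisk hψ hi
  rw [interior_image_unitDisk hψ hi] at hDE
  rwa [hDE, closure_image_ball hψ hi, h.frontier_left]

lemma isOpen (hD : IsSierpinskiFamily D) (i : ℕ) : IsOpen (D i) := (hD.isJordanSplit i).isOpen_left

lemma isConnected_frontier (hD : IsSierpinskiFamily D) (i : ℕ) : IsConnected (frontier (D i)) :=
  (hD.isJordanSplit i).isJordanCurve.isConnected

lemma isClosed_compl_iUnion (hD : IsSierpinskiFamily D) : IsClosed (⋃ i, D i)ᶜ :=
  (isOpen_iUnion hD.isOpen).isClosed_compl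

lemma closure_sdiff_iUnion (hD : IsSierpinskiFamily D) (i : ℕ) :
    closure (D i) \ ⋃ j, D j = frontier (D i) :=
  closure_sdiff_iUnion_eq_frontier hD.isOpen hD.2.1 i

lemma frontier_subset (hD : IsSierpinskiFamily D) (i : ℕ) : frontier (D i) ⊆ (⋃ j, D j)ᶜ :=
  hD.closure_sdiff_iUnion i ▸ sdiff_subset_compl _ _

lemma disjoint_closure (hD : IsSierpinskiFamily D) {A : Set ↥Sphere2} (hA : A ⊆ (⋃ j, D j)ᶜ)
    {i : ℕ} (hAi : Disjoint A (frontier (D i))) : Disjoint (closure (D i)) A := by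
  rw [(hD.isJordanSplit i).closure_left_eq_union, disjoint_union_left]
  exact ⟨disjoint_compl_right.mono (subset_iUnion D i) hA, hAi.symm⟩

lemma isConnected_sdiff_frontier (hD : IsSierpinskiFamily D) (i : ℕ) :
    IsConnected ((⋃ j, D j)ᶜ \ frontier (D i)) := by
  constructor
  · obtain ⟨x, hx⟩ := (hD.isConnected_frontier (i + 1)).nonempty
    exact ⟨x, hD.frontier_subset _ hx, ((hD.2.1 i.succ_ne_self).mono frontier_subset_closure
      frontier_subset_closure).notMem_of_mem_left hx⟩
  have heq : (⋃ j, D j)ᶜ \ frontier (D i) = (closure (D i))ᶜ \ ⋃ j : {j // j ≠ i}, D j := by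
    ext x
    rw [← hD.closure_sdiff_iUnion i]
    simp only [Set.mem_sdiff, mem_compl_iff, mem_iUnion, not_exists, not_and, not_forall,
      Subtype.forall]
    exact ⟨fun h => ⟨fun hx => (h.2 hx).elim fun j hj => hj (h.1 j), fun j _ => h.1 j⟩, fun h =>
      ⟨fun j hj => h.2 j (fun hji => h.1 (subset_closure (hji ▸ hj))) hj, fun hx => (h.1 hx).elim⟩⟩
  rw [heq]
  exact isPreconnected_sdiff_iUnion (fun j => hD.isOpen j)
    (fun j k hjk => hD.2.1 (Subtype.val_injective.ne hjk))
    (fun j => (hD.2.1 j.2).subset_compl_right)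
    ((Nat.cofinite_eq_atTop ▸ hD.2.2.1).comp Subtype.val_injective.tendsto_cofinite)
    (hD.isJordanSplit i).isConnected_right.isPreconnected fun j => hD.isConnected_frontier j

lemma isPeriphCircleIn_frontier (hD : IsSierpinskiFamily D) (i : ℕ) :
    IsPeriphCircleIn (⋃ j, D j)ᶜ (frontier (D i)) :=
  isPeriphCircleIn_iff.2 ⟨hD.frontier_subset i, (hD.isJordanSplit i).isJordanCurve,
    hD.isConnected_sdiff_frontier i⟩

lemma exists_eq_frontier (hD : IsSierpinskiFamily D) {γ : Set ↥Sphere2}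
    (hγ : IsPeriphCircleIn (⋃ j, D j)ᶜ γ) : ∃ i, γ = frontier (D i) := by
  obtain ⟨hsub, hJ, hconn⟩ := isPeriphCircleIn_iff.1 hγ
  obtain ⟨V, O, h, hO⟩ :=
    hJ.exists_isJordanSplit_of_isPreconnected hconn.isPreconnected disjoint_sdiff_left
  have hVD : V ⊆ ⋃ j, D j := fun x hx => by
    by_contra hxD
    exact h.disjoint.notMem_of_mem_left hx (hO ⟨hxD, h.disjoint_curve.notMem_of_mem_left hx⟩)
  obtain ⟨x, hx⟩ := h.isConnected_left.nonempty
  obtain ⟨i, hi⟩ := mem_iUnion.1 (hVD hx)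
  have hVi : V ⊆ D i := ((hD.isJordanSplit i).subset_or_subset h.isConnected_left.isPreconnected
    (disjoint_compl_right.mono hVD (hD.frontier_subset i))).resolve_right
      fun hV => hV hx (subset_closure hi)
  have hiV : D i ⊆ V := (h.subset_or_subset (hD.isJordanSplit i).isConnected_left.isPreconnected
    (disjoint_compl_right.mono (subset_iUnion D i) hsub)).resolve_right
      fun hiO => h.disjoint.notMem_of_mem_left hx (hiO hi)
  exact ⟨i, by rw [← hVi.antisymm hiV, h.frontier_left]⟩

end IsSierpinskiFamily

/-! ### Extending embeddings of Jordan curves -/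

section Cone

variable {E : Type*} [NormedAddCommGroup E] [NormedSpace ℝ E] {φ : E → E}

/-- The radial extension to `E` of a self-map `φ` of the unit sphere of `E`. -/
noncomputable def cone (φ : E → E) (x : E) : E := ‖x‖ • φ (‖x‖⁻¹ • x)

lemma inv_norm_smul_mem_sphere {x : E} (hx : x ≠ 0) : ‖x‖⁻¹ • x ∈ sphere (0 : E) 1 := by
  rw [mem_sphere_zero_iff_norm, norm_smul, norm_inv, norm_norm,
    inv_mul_cancel₀ (norm_ne_zero_iff.2 hx)]

lemma cone_eq {x : E} (hx : x ∈ sphere (0 : E) 1) : cone φ x = φ x := by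
  rw [cone, mem_sphere_zero_iff_norm.1 hx, inv_one, one_smul, one_smul]

lemma norm_cone (hm : MapsTo φ (sphere 0 1) (sphere 0 1)) (x : E) : ‖cone φ x‖ = ‖x‖ := by
  by_cases hx : x = 0
  · rw [cone, hx, norm_zero, zero_smul, norm_zero]
  · rw [cone, norm_smul, mem_sphere_zero_iff_norm.1 (hm (inv_norm_smul_mem_sphere hx)), norm_norm,
      mul_one]

lemma continuous_cone (hφ : ContinuousOn φ (sphere 0 1))
    (hm : MapsTo φ (sphere 0 1) (sphere 0 1)) : Continuous (cone φ) := by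
  refine continuous_iff_continuousAt.2 fun x => ?_
  by_cases hx : x = 0
  · rw [ContinuousAt, hx, cone, norm_zero, zero_smul, tendsto_zero_iff_norm_tendsto_zero]
    simpa only [norm_cone hm] using tendsto_norm_zero
  · have hdir : ContinuousOn (fun y : E => ‖y‖⁻¹ • y) {0}ᶜ :=
      (continuousOn_id.norm.inv₀ fun y hy => norm_ne_zero_iff.2 hy).smul continuousOn_id
    exact (continuousOn_id.norm.smul (hφ.comp hdir fun y hy =>
      inv_norm_smul_mem_sphere hy)).continuousAt (isOpen_compl_singleton.mem_nhds hx)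

lemma injective_cone (hm : MapsTo φ (sphere 0 1) (sphere 0 1)) (hi : InjOn φ (sphere 0 1)) :
    Function.Injective (cone φ) := by
  intro x y hxy
  have hnorm : ‖x‖ = ‖y‖ := by rw [← norm_cone hm x, ← norm_cone hm y, hxy]
  by_cases hx : x = 0
  · rw [hx, norm_zero] at hnorm
    rw [hx, norm_eq_zero.1 hnorm.symm]
  have hx0 := norm_ne_zero_iff.2 hx
  have hy : y ≠ 0 := norm_ne_zero_iff.1 (hnorm ▸ hx0)
  rw [cone, cone, ← hnorm] at hxy
  exact smul_right_injective E (inv_ne_zero hx0) (hi (inv_norm_smul_mem_sphere hx)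
    (hnorm ▸ inv_norm_smul_mem_sphere hy) (smul_right_injective E hx0 hxy))

end Cone

namespace IsJordanSplit

variable {J V O J' V' O' : Set ↥Sphere2}

lemma exists_image_ball_eq (h : IsJordanSplit J V O) :
    ∃ ψ : EuclideanSpace ℝ (Fin 2) → ↥Sphere2, ContinuousOn ψ UnitDisk2 ∧ InjOn ψ UnitDisk2 ∧
      ψ '' ball 0 1 = V ∧ ψ '' UnitCircle = J := by
  obtain ⟨ψ, hψ, hi, hE⟩ := isClosedDisk_iff.1 h.isClosedDisk_closure_left
  have hV : ψ '' ball 0 1 = V := by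
    rw [← interior_image_unitDisk hψ hi, hE, h.interior_closure_left]
  exact ⟨ψ, hψ, hi, hV, by
    rw [← (isJordanSplit_image_unitDisk hψ hi).frontier_left, hV, h.frontier_left]⟩

lemma exists_extension (h : IsJordanSplit J V O) {f : ↥Sphere2 → ↥Sphere2}
    (h' : IsJordanSplit (f '' J) V' O') (hf : ContinuousOn f J) (hfi : InjOn f J) :
    ∃ F : ↥Sphere2 → ↥Sphere2, ContinuousOn F (closure V) ∧ InjOn F (closure V) ∧ EqOn F f J ∧
      MapsTo F V V' := by
  obtain ⟨ψ, hψ, hi, rfl, rfl⟩ := h.exists_image_ball_eq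
  obtain ⟨ψ', hψ', hi', rfl, hJ'⟩ := h'.exists_image_ball_eq
  have hcd : UnitCircle ⊆ UnitDisk2 := sphere_subset_closedBall
  obtain ⟨φ, hφc, hφm, hφ⟩ := exists_continuousOn_lift (isCompact_sphere _ _) (hψ'.mono hcd)
    (hi'.mono hcd) (hf.comp (hψ.mono hcd) (mapsTo_image _ _))
    fun z hz => hJ'.ge (mem_image_of_mem f (mem_image_of_mem ψ hz))
  have hφi : InjOn φ UnitCircle := fun z hz w hw hzw => by
    refine hi (hcd hz) (hcd hw) (hfi (mem_image_of_mem ψ hz) (mem_image_of_mem ψ hw) ?_)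
    exact (hφ hz).symm.trans ((congrArg ψ' hzw).trans (hφ hw))
  let u := Function.invFunOn ψ UnitDisk2
  have hu : LeftInvOn u ψ UnitDisk2 := hi.leftInvOn_invFunOn
  have hcone : MapsTo (cone φ) UnitDisk2 UnitDisk2 := fun z hz =>
    mem_closedBall_zero_iff.2 ((norm_cone hφm z).trans_le (mem_closedBall_zero_iff.1 hz))
  have hF : ∀ z ∈ UnitDisk2, (ψ' ∘ cone φ ∘ u) (ψ z) = ψ' (cone φ z) := fun z hz =>
    congrArg (ψ' ∘ cone φ) (hu hz)
  rw [closure_image_ball hψ hi]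
  refine ⟨ψ' ∘ cone φ ∘ u, ?_, ?_, ?_, ?_⟩
  · refine hψ'.comp ((continuous_cone hφc hφm).comp_continuousOn
      (continuousOn_invFunOn_of_isCompact (isCompact_closedBall _ _) hψ hi)) ?_
    exact hcone.comp (hu.mapsTo (surjOn_image ψ UnitDisk2))
  · rintro _ ⟨z, hz, rfl⟩ _ ⟨w, hw, rfl⟩ hzw
    rw [hF z hz, hF w hw] at hzw
    rw [injective_cone hφm hφi (hi' (hcone hz) (hcone hw) hzw)]
  · rintro _ ⟨z, hz, rfl⟩
    rw [hF z (hcd hz), cone_eq hz, ← Function.comp_apply (f := ψ'), hφ hz,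
      Function.comp_apply]
  · rintro _ ⟨z, hz, rfl⟩
    rw [hF z (ball_subset_closedBall hz)]
    refine mem_image_of_mem ψ' (mem_ball_zero_iff.2 ?_)
    rw [norm_cone hφm]
    exact mem_ball_zero_iff.1 hz

end IsJordanSplit

/-! ### Small Jordan curves -/

lemma exists_mem_nhds_isPreconnected_compl {ε : ℝ} (hε : 0 < ε) (x : ↥Sphere2) :
    ∃ K ∈ 𝓝 x, diam K ≤ ε ∧ IsPreconnected Kᶜ := by
  have hq : x ≠ -x := ne_neg_of_mem_unit_sphere ℝ x
  have hc := (continuous_sphereChart_symm (-x)).continuousAt (x := sphereChart (-x) x)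
  rw [ContinuousAt, sphereChart_left_inv hq] at hc
  obtain ⟨r, hr, hrx⟩ := nhds_basis_closedBall.mem_iff.1 (hc (closedBall_mem_nhds x (half_pos hε)))
  refine ⟨(sphereChart (-x)).symm '' closedBall (sphereChart (-x) x) r, ?_, ?_, ?_⟩
  · exact mem_of_superset ((isOpen_sphereChart_symm_image isOpen_ball).mem_nhds
      ⟨_, mem_ball_self hr, sphereChart_left_inv hq⟩) (image_mono ball_subset_closedBall)
  · calc diam ((sphereChart (-x)).symm '' closedBall (sphereChart (-x) x) r)
        ≤ diam (closedBall x (ε / 2)) := diam_mono (image_subset_iff.2 hrx) isBounded_closedBall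
      _ ≤ 2 * (ε / 2) := diam_closedBall (half_pos hε).le
      _ = ε := by ring
  · exact (LogAcyclic.image_of_convex (convex_closedBall _ _) (isCompact_closedBall _ _)
      (continuous_sphereChart_symm _).continuousOn
        injective_sphereChart_symm.injOn).isPreconnected_compl
      ((isCompact_closedBall _ _).image (continuous_sphereChart_symm _)).isClosed

lemma exists_forall_ball_subset_isPreconnected_compl {ε : ℝ} (hε : 0 < ε) :
    ∃ δ > 0, ∀ x : ↥Sphere2, ∃ K, ball x δ ⊆ K ∧ diam K ≤ ε ∧ IsPreconnected Kᶜ := by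
  choose K hKx hKd hKp using exists_mem_nhds_isPreconnected_compl hε
  obtain ⟨δ, hδ, hδK⟩ := lebesgue_number_lemma_of_metric (isCompact_univ (X := ↥Sphere2))
    (fun x => isOpen_interior (s := K x)) fun x _ => mem_iUnion.2 ⟨x, mem_interior_iff_mem_nhds.2
      (hKx x)⟩
  refine ⟨δ, hδ, fun x => ?_⟩
  obtain ⟨y, hy⟩ := hδK x (mem_univ x)
  exact ⟨K y, hy.trans interior_subset, hKd y, hKp y⟩

lemma exists_forall_isJordanSplit_diam_le {ε c : ℝ} (hε : 0 < ε) (hc : 0 < c) :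
    ∃ δ > 0, ∀ J V O, IsJordanSplit J V O → diam J < δ → c ≤ diam Vᶜ → diam V ≤ ε := by
  obtain ⟨δ, hδ, hK⟩ :=
    exists_forall_ball_subset_isPreconnected_compl (lt_min hε (half_pos hc))
  refine ⟨δ, hδ, fun J V O h hJ hV => ?_⟩
  obtain ⟨x, hx⟩ := h.isJordanCurve.isConnected.nonempty
  obtain ⟨K, hxK, hKd, hKp⟩ := hK x
  have hJK : J ⊆ K := fun y hy => hxK <|
    (dist_le_diam_of_mem (Bornology.IsBounded.all J) hy hx).trans_lt hJ
  rcases h.subset_or_subset hKp (disjoint_compl_left_iff_subset.2 hJK) with hKV | hKO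
  · have := diam_mono (compl_subset_comm.1 hKV) (Bornology.IsBounded.all K)
    linarith [min_le_right ε (c / 2)]
  · have hVK : V ⊆ K := (h.disjoint.mono_right hKO).subset_compl_right.trans_eq (compl_compl K)
    exact (diam_mono hVK (Bornology.IsBounded.all K)).trans (hKd.trans (min_le_left _ _))

/-! ### Embeddings of Sierpiński curves -/

section Image

variable {X Y : Type*} [TopologicalSpace X] [TopologicalSpace Y] [T2Space Y] {K A : Set X}
  {η : X → Y}

lemma isConnected_image_iff (hK : IsCompact K) (hη : ContinuousOn η K) (hi : InjOn η K)
    (hA : A ⊆ K) : IsConnected (η '' A) ↔ IsConnected A := by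
  have himage : η '' A = K.domRestrict η '' (Subtype.val ⁻¹' A) := by
    rw [image_domRestrict, inter_eq_left.2 hA]
  rw [IsConnected, IsConnected, image_nonempty, himage,
    (isClosedEmbedding_domRestrict hK hη hi).isEmbedding.isInducing.isPreconnected_image,
    ← IsInducing.subtypeVal.isPreconnected_image, Subtype.image_preimage_val, inter_eq_right.2 hA]

lemma isPeriphCircleIn_image_iff (hK : IsCompact K) (hη : ContinuousOn η K) (hi : InjOn η K)
    (hA : A ⊆ K) : IsPeriphCircleIn (η '' K) (η '' A) ↔ IsPeriphCircleIn K A := by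
  rw [isPeriphCircleIn_iff, isPeriphCircleIn_iff, isJordanCurve_image_iff_of_isCompact hK hη hi hA,
    ← hi.image_sdiff_subset hA, isConnected_image_iff hK hη hi sdiff_subset]
  exact and_congr_left fun _ => ⟨fun _ => hA, fun _ => image_mono hA⟩

end Image

lemma IsSierpinskiFamily.isPeriphCircleIn_image_iff_exists {X : Type*} [TopologicalSpace X]
    [T2Space X] {D : ℕ → Set ↥Sphere2} (hD : IsSierpinskiFamily D) {η : ↥Sphere2 → X}
    (hη : ContinuousOn η (⋃ i, D i)ᶜ) (hi : InjOn η (⋃ i, D i)ᶜ) {γ : Set X} :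
    IsPeriphCircleIn (η '' (⋃ i, D i)ᶜ) γ ↔ ∃ k, γ = η '' frontier (D k) := by
  have hK := hD.isClosed_compl_iUnion.isCompact
  constructor
  · intro h
    obtain ⟨A, hA, rfl⟩ := subset_image_iff.1 h.1
    obtain ⟨k, rfl⟩ := hD.exists_eq_frontier ((isPeriphCircleIn_image_iff hK hη hi hA).1 h)
    exact ⟨k, rfl⟩
  · rintro ⟨k, rfl⟩
    exact (isPeriphCircleIn_image_iff hK hη hi (hD.frontier_subset k)).2
      (hD.isPeriphCircleIn_frontier k)

lemma surjective_of_continuous_of_injective {H : ↥Sphere2 → ↥Sphere2} (hH : Continuous H)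
    (hi : Function.Injective H) : Function.Surjective H := by
  have hopen : IsOpen (range H) := by
    refine isOpen_iff_mem_nhds.2 ?_
    rintro _ ⟨x, rfl⟩
    let χ : EuclideanSpace ℝ (Fin 2) → ↥Sphere2 := fun z =>
      (sphereChart (-x)).symm (complexToPlane.symm z + sphereChart (-x) x)
    have hχ : Continuous χ := (continuous_sphereChart_symm _).comp
      (complexToPlane.symm.continuous.add_const _)
    have hχi : Function.Injective χ := injective_sphereChart_symm.comp
      ((add_left_injective _).comp complexToPlane.symm.injective)
    have hχ0 : χ 0 = x := by
      simp only [χ, map_zero, zero_add, sphereChart_left_inv (ne_neg_of_mem_unit_sphere ℝ x)]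
    refine mem_of_superset ((isJordanSplit_image_unitDisk (hH.comp hχ).continuousOn
      (hi.comp hχi).injOn).isOpen_left.mem_nhds ⟨0, mem_ball_self one_pos, ?_⟩) ?_
    · rw [Function.comp_apply, hχ0]
    · rintro _ ⟨z, -, rfl⟩
      exact mem_range_self _
  intro y
  have hclopen : IsClopen (range H) := ⟨(isCompact_range hH).isClosed, hopen⟩
  exact (hclopen.eq_univ ⟨H y, mem_range_self y⟩).ge (mem_univ y)

/-! ### Sides of an embedded Sierpiński curve -/

/-- `η` embeds the Sierpiński curve `(⋃ i, D i)ᶜ` in the sphere, and `V k` and `O k` are the two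
sides of the Jordan curve `η '' frontier (D k)`, of which `O k` is the one that contains the rest of
the embedded curve. -/
structure IsSideFamily (D : ℕ → Set ↥Sphere2) (η : ↥Sphere2 → ↥Sphere2)
    (V O : ℕ → Set ↥Sphere2) : Prop where
  isSierpinskiFamily : IsSierpinskiFamily D
  continuousOn : ContinuousOn η (⋃ i, D i)ᶜ
  injOn : InjOn η (⋃ i, D i)ᶜ
  isJordanSplit (k : ℕ) : IsJordanSplit (η '' frontier (D k)) (V k) (O k)
  sdiff_subset (k : ℕ) : η '' (⋃ i, D i)ᶜ \ η '' frontier (D k) ⊆ O k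

lemma IsSierpinskiFamily.exists_isSideFamily {D : ℕ → Set ↥Sphere2} (hD : IsSierpinskiFamily D)
    {η : ↥Sphere2 → ↥Sphere2} (hη : ContinuousOn η (⋃ i, D i)ᶜ) (hi : InjOn η (⋃ i, D i)ᶜ) :
    ∃ V O, IsSideFamily D η V O := by
  have hγ : ∀ k, ∃ V O, IsJordanSplit (η '' frontier (D k)) V O ∧
      η '' (⋃ i, D i)ᶜ \ η '' frontier (D k) ⊆ O := fun k => by
    obtain ⟨-, hJ, hconn⟩ := isPeriphCircleIn_iff.1
      ((hD.isPeriphCircleIn_image_iff_exists hη hi).2 ⟨k, rfl⟩)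
    exact hJ.exists_isJordanSplit_of_isPreconnected hconn.isPreconnected disjoint_sdiff_left
  choose V O hsplit hO using hγ
  exact ⟨V, O, hD, hη, hi, hsplit, hO⟩

namespace IsSideFamily

variable {D V O : ℕ → Set ↥Sphere2} {η : ↥Sphere2 → ↥Sphere2}

lemma image_frontier_subset (h : IsSideFamily D η V O) (k : ℕ) :
    η '' frontier (D k) ⊆ η '' (⋃ i, D i)ᶜ :=
  image_mono (h.isSierpinskiFamily.frontier_subset k)

lemma disjoint_image_frontier (h : IsSideFamily D η V O) {k l : ℕ} (hkl : k ≠ l) :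
    Disjoint (η '' frontier (D k)) (η '' frontier (D l)) := by
  have hD := h.isSierpinskiFamily
  rw [disjoint_iff_inter_eq_empty, ← h.injOn.image_inter (hD.frontier_subset k)
    (hD.frontier_subset l), ((hD.2.1 hkl).mono frontier_subset_closure
    frontier_subset_closure).inter_eq, image_empty]

lemma disjoint_image (h : IsSideFamily D η V O) (k : ℕ) :
    Disjoint (V k) (η '' (⋃ i, D i)ᶜ) := by
  rw [← union_sdiff_cancel (h.image_frontier_subset k), disjoint_union_right]
  exact ⟨(h.isJordanSplit k).disjoint_curve, (h.isJordanSplit k).disjoint.mono_right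
    (h.sdiff_subset k)⟩

lemma disjoint_closure_image_frontier (h : IsSideFamily D η V O) {k l : ℕ} (hkl : k ≠ l) :
    Disjoint (closure (V k)) (η '' frontier (D l)) := by
  rw [(h.isJordanSplit k).closure_left_eq_union, disjoint_union_left]
  exact ⟨(h.disjoint_image k).mono_right (h.image_frontier_subset l),
    h.disjoint_image_frontier hkl⟩

lemma disjoint_closure (h : IsSideFamily D η V O) {k l : ℕ} (hkl : k ≠ l) :
    Disjoint (closure (V k)) (closure (V l)) := by
  rcases (h.isJordanSplit l).subset_or_subset
    (h.isJordanSplit k).isConnected_left.closure.isPreconnected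
    (h.disjoint_closure_image_frontier hkl) with hV | hO
  · obtain ⟨x, hx⟩ := (h.isJordanSplit k).isJordanCurve.isConnected.nonempty
    rw [(h.isJordanSplit k).closure_left_eq_union] at hV
    exact absurd (h.image_frontier_subset k hx)
      ((h.disjoint_image l).notMem_of_mem_left (hV (Or.inr hx)))
  · rw [(h.isJordanSplit l).closure_left]
    exact disjoint_compl_right_iff_subset.2 hO

lemma closure_inter_inter_image (h : IsSideFamily D η V O) {T : Set ↥Sphere2}
    (hT : η '' (⋃ i, D i)ᶜ ⊆ T) (k : ℕ) :
    closure (V k) ∩ T ∩ η '' (⋃ i, D i)ᶜ = η '' frontier (D k) := by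
  rw [inter_assoc, inter_eq_right.2 hT, (h.isJordanSplit k).closure_left_eq_union,
    union_inter_distrib_right, (h.disjoint_image k).inter_eq, empty_union,
    inter_eq_left.2 (h.image_frontier_subset k)]

lemma tendsto_diam (h : IsSideFamily D η V O) : Tendsto (fun k => diam (V k)) atTop (𝓝 0) := by
  have hD := h.isSierpinskiFamily
  have hfr : Tendsto (fun k => diam (frontier (D k))) atTop (𝓝 0) :=
    squeeze_zero (fun _ => diam_nonneg) (fun k => (diam_mono frontier_subset_closure
      (Bornology.IsBounded.all _)).trans_eq (diam_closure _)) hD.2.2.1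
  have hJ : Tendsto (fun k => diam (η '' frontier (D k))) atTop (𝓝 0) :=
    tendsto_diam_image
      (hD.isClosed_compl_iUnion.isCompact.uniformContinuousOn_of_continuous h.continuousOn)
      hD.frontier_subset hfr
  have hpos : 0 < diam (η '' (⋃ i, D i)ᶜ) := by
    obtain ⟨x, hx⟩ := (h.isJordanSplit 0).isJordanCurve.isConnected.nonempty
    obtain ⟨y, hy⟩ := (h.isJordanSplit 1).isJordanCurve.isConnected.nonempty
    exact (dist_pos.2 ((h.disjoint_image_frontier zero_ne_one).ne_of_mem hx hy)).trans_le
      (dist_le_diam_of_mem (Bornology.IsBounded.all _) (h.image_frontier_subset 0 hx)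
        (h.image_frontier_subset 1 hy))
  refine nhds_basis_closedBall.tendsto_right_iff.2 fun ε hε => ?_
  obtain ⟨δ, hδ, hsmall⟩ := exists_forall_isJordanSplit_diam_le hε hpos
  filter_upwards [hJ.eventually (gt_mem_nhds hδ)] with k hk
  rw [mem_closedBall_zero_iff, Real.norm_of_nonneg diam_nonneg]
  exact hsmall _ _ _ (h.isJordanSplit k) hk
    (diam_mono (h.disjoint_image k).subset_compl_left (Bornology.IsBounded.all _))

lemma exists_continuous_extension (h : IsSideFamily D η V O) :
    ∃ H : ↥Sphere2 → ↥Sphere2, Continuous H ∧ EqOn H η (⋃ i, D i)ᶜ ∧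
      ∀ k, InjOn H (D k) ∧ MapsTo H (D k) (V k) := by
  have hD := h.isSierpinskiFamily
  choose F hFc hFi hFη hFV using fun k => (hD.isJordanSplit k).exists_extension (h.isJordanSplit k)
    (h.continuousOn.mono (hD.frontier_subset k)) (h.injOn.mono (hD.frontier_subset k))
  obtain ⟨H, hHη, hHF⟩ := exists_eqOn_compl_iUnion_eqOn_closure hD.2.1 hFη
  have hHFD : ∀ k, EqOn H (F k) (D k) := fun k => (hHF k).mono subset_closure
  refine ⟨H, ?_, hHη, fun k => ⟨((hFi k).mono subset_closure).congr (hHFD k).symm,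
    (hFV k).congr (hHFD k).symm⟩⟩
  rw [← continuousOn_univ]
  refine continuousOn_of_tendsto_diam hD.isOpen (fun _ => subset_univ _)
    (fun i => hD.closure_sdiff_iUnion i ▸ (hD.isConnected_frontier i).nonempty)
    (Nat.cofinite_eq_atTop ▸ hD.2.2.1) ?_ (fun i => (hFc i).congr (hHF i)) fun ε hε => ?_
  · rw [← compl_eq_univ_sdiff]
    exact h.continuousOn.congr hHη
  · rw [Nat.cofinite_eq_atTop]
    filter_upwards [h.tendsto_diam.eventually (gt_mem_nhds hε)] with k hk x hx y hy
    have hHV : MapsTo H (closure (D k)) (closure (V k)) :=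
      (((hFV k).closure_of_continuousOn (hFc k))).congr (hHF k).symm
    rw [← diam_closure] at hk
    exact (dist_le_diam_of_mem (Bornology.IsBounded.all _) (hHV hx) (hHV hy)).trans_lt hk

lemma image_union_iUnion_eq_univ (h : IsSideFamily D η V O) :
    η '' (⋃ i, D i)ᶜ ∪ ⋃ k, V k = univ := by
  obtain ⟨H, hHc, hHη, hHV⟩ := h.exists_continuous_extension
  have hmaps : MapsTo H (⋃ k, D k) (⋃ k, V k) := mapsTo_iUnion_iUnion fun k => (hHV k).2
  have hmapsc : MapsTo H (⋃ i, D i)ᶜ (η '' (⋃ i, D i)ᶜ) := (mapsTo_image η _).congr hHη.symm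
  have hinj : Function.Injective H := by
    have hcompl : InjOn H (⋃ i, D i)ᶜ := h.injOn.congr hHη.symm
    have hunion : InjOn H (⋃ i, D i) := by
      intro x hx y hy hxy
      obtain ⟨k, hk⟩ := mem_iUnion.1 hx
      obtain ⟨l, hl⟩ := mem_iUnion.1 hy
      have hkl : k = l := by
        by_contra hkl
        exact ((h.disjoint_closure hkl).mono subset_closure subset_closure).ne_of_mem
          ((hHV k).2 hk) ((hHV l).2 hl) hxy
      exact (hHV k).1 hk (hkl ▸ hl) hxy
    rw [← injOn_univ, ← union_compl_self (⋃ i, D i), injOn_union disjoint_compl_right]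
    exact ⟨hunion, hcompl, fun x hx y hy =>
      (disjoint_iUnion_left.2 h.disjoint_image).ne_of_mem (hmaps hx) (hmapsc hy)⟩
  refine eq_univ_of_forall fun y => ?_
  obtain ⟨x, rfl⟩ := surjective_of_continuous_of_injective hHc hinj y
  by_cases hx : x ∈ ⋃ i, D i
  exacts [Or.inr (hmaps hx), Or.inl (hmapsc hx)]

lemma eq_union_iUnion_closure_inter (h : IsSideFamily D η V O) {T : Set ↥Sphere2}
    (hT : η '' (⋃ i, D i)ᶜ ⊆ T) : T = η '' (⋃ i, D i)ᶜ ∪ ⋃ k, closure (V k) ∩ T := by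
  have hcover := h.image_union_iUnion_eq_univ.ge.trans
    (union_subset_union_right _ (iUnion_mono fun k => subset_closure (s := V k)))
  rw [← iUnion_inter]
  exact Subset.antisymm (fun x hx => (hcover (mem_univ x)).imp_right fun hxV => ⟨hxV, hx⟩)
    (union_subset hT inter_subset_right)

end IsSideFamily

/-! ### Cutting a Sierpiński curve along a Jordan curve -/

/-- The complementary disks of the part of the Sierpiński curve `(⋃ i, D i)ᶜ` on the side opposite
to `O` of a Jordan curve: the side `O` itself, and the disks `D (ν n)`. -/
def sideFamily (D : ℕ → Set ↥Sphere2) (O : Set ↥Sphere2) (ν : ℕ → ℕ) : ℕ → Set ↥Sphere2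
  | 0 => O
  | n + 1 => D (ν n)

namespace IsSierpinskiFamily

variable {D : ℕ → Set ↥Sphere2} {J V O : Set ↥Sphere2} {ν : ℕ → ℕ}

lemma subset_closure_biUnion (hD : IsSierpinskiFamily D) (h : IsJordanSplit J V O)
    (hJ : ∀ i, Disjoint (closure (D i)) J) :
    V ⊆ closure (⋃ i ∈ {i | closure (D i) ⊆ V}, closure (D i)) := by
  refine (hD.2.2.2.open_subset_closure_inter h.isOpen_left).trans (closure_mono ?_)
  rintro x ⟨hxV, hx⟩
  obtain ⟨i, hi⟩ := mem_iUnion.1 hx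
  refine mem_biUnion (x := i) ?_ hi
  exact (h.subset_or_subset (hD.isJordanSplit i).isConnected_left.closure.isPreconnected
    (hJ i)).resolve_right fun hO => h.disjoint.notMem_of_mem_left hxV (hO hi)

lemma infinite_setOf_closure_subset (hD : IsSierpinskiFamily D) (h : IsJordanSplit J V O)
    (hJ : ∀ i, Disjoint (closure (D i)) J) : {i | closure (D i) ⊆ V}.Infinite := by
  intro hfin
  have hVc : IsClosed V := by
    have hclosed := hfin.isClosed_biUnion fun i _ => isClosed_closure (s := D i)
    have hsub := hD.subset_closure_biUnion h hJ
    rw [hclosed.closure_eq] at hsub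
    exact (hsub.antisymm (iUnion₂_subset fun i hi => hi)) ▸ hclosed
  have hV : V = univ := IsClopen.eq_univ ⟨hVc, h.isOpen_left⟩ h.isConnected_left.nonempty
  obtain ⟨x, hx⟩ := h.isConnected_right.nonempty
  exact h.disjoint.notMem_of_mem_right hx (hV ▸ mem_univ x)

lemma isSierpinskiFamily_sideFamily (hD : IsSierpinskiFamily D) (h : IsJordanSplit J V O)
    (hJ : ∀ i, Disjoint (closure (D i)) J) (hν : StrictMono ν)
    (hνV : range ν = {i | closure (D i) ⊆ V}) : IsSierpinskiFamily (sideFamily D O ν) := by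
  have hO : ∀ n, Disjoint (closure O) (closure (D (ν n))) := fun n => by
    rw [h.closure_right]
    exact disjoint_compl_left_iff_subset.2 (hνV.le (mem_range_self n))
  refine ⟨?_, ?_, ?_, fun x => ?_⟩
  · rintro (_ | n)
    · exact ⟨closure O, h.symm.isClosedDisk_closure_left, h.symm.interior_closure_left.symm⟩
    · exact hD.1 _
  · rintro (_ | n) (_ | m) hnm
    · exact absurd rfl hnm
    · exact hO m
    · exact (hO n).symm
    · exact hD.2.1 (hν.injective.ne fun hnm' => hnm (congrArg _ hnm'))
  · exact (tendsto_add_atTop_iff_nat 1).1 (hD.2.2.1.comp hν.tendsto_atTop)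
  · have hV : closure V ⊆ closure (⋃ n, closure (D (ν n))) := by
      rw [← biUnion_range (g := fun i => closure (D i)), hνV]
      exact closure_minimal (hD.subset_closure_biUnion h hJ) isClosed_closure
    by_cases hx : x ∈ closure V
    · exact closure_mono (iUnion_subset fun n =>
        subset_iUnion (fun m => closure (sideFamily D O ν m)) (n + 1)) (hV hx)
    · rw [h.closure_left, notMem_compl_iff] at hx
      exact subset_closure (mem_iUnion.2 ⟨0, subset_closure hx⟩)

lemma compl_iUnion_sideFamily (hD : IsSierpinskiFamily D) (h : IsJordanSplit J V O)
    (hJ : ∀ i, Disjoint (closure (D i)) J) (hνV : range ν = {i | closure (D i) ⊆ V}) :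
    (⋃ n, sideFamily D O ν n)ᶜ = closure V ∩ (⋃ i, D i)ᶜ := by
  rw [h.closure_left, ← compl_union, compl_inj_iff]
  refine Subset.antisymm (iUnion_subset ?_) (union_subset (subset_iUnion (sideFamily D O ν) 0)
    (iUnion_subset fun i => ?_))
  · rintro (_ | n)
    exacts [subset_union_left, (subset_iUnion D (ν n)).trans subset_union_right]
  · rcases h.subset_or_subset (hD.isJordanSplit i).isConnected_left.closure.isPreconnected (hJ i)
      with hV | hO
    · obtain ⟨n, rfl⟩ := hνV.ge hV
      exact subset_iUnion (sideFamily D O ν) (n + 1)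
    · exact (subset_closure.trans hO).trans (subset_iUnion (sideFamily D O ν) 0)

lemma exists_compl_iUnion_eq_closure_inter (hD : IsSierpinskiFamily D) (h : IsJordanSplit J V O)
    (hJ : ∀ i, Disjoint (closure (D i)) J) :
    ∃ D', IsSierpinskiFamily D' ∧ D' 0 = O ∧ (⋃ n, D' n)ᶜ = closure V ∩ (⋃ i, D i)ᶜ := by
  have hinf := hD.infinite_setOf_closure_subset h hJ
  have hrange := Nat.range_nth_of_infinite hinf
  exact ⟨sideFamily D O _, hD.isSierpinskiFamily_sideFamily h hJ (Nat.nth_strictMono hinf) hrange,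
    rfl, hD.compl_iUnion_sideFamily h hJ hrange⟩

lemma isSierpinskiCurve_closure_inter (hD : IsSierpinskiFamily D) (h : IsJordanSplit J V O)
    (hJ : ∀ i, Disjoint (closure (D i)) J) : IsSierpinskiCurve ↥(closure V ∩ (⋃ i, D i)ᶜ) := by
  obtain ⟨D', hD', -, hD'V⟩ := hD.exists_compl_iUnion_eq_closure_inter h hJ
  exact ⟨D', hD', ⟨Homeomorph.setCongr hD'V.symm⟩⟩

lemma isPeriphCircleIn_closure_inter (hD : IsSierpinskiFamily D) (h : IsJordanSplit J V O)
    (hJ : ∀ i, Disjoint (closure (D i)) J) :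
    IsPeriphCircleIn (closure V ∩ (⋃ i, D i)ᶜ) J := by
  obtain ⟨D', hD', rfl, hD'V⟩ := hD.exists_compl_iUnion_eq_closure_inter h hJ
  rw [← hD'V, ← h.frontier_right]
  exact hD'.isPeriphCircleIn_frontier 0

end IsSierpinskiFamily

theorem stmt6 (D : ℕ → Set ↥Sphere2) (hD : IsSierpinskiFamily D)
    (T : Set ↥Sphere2) (hT : T = (⋃ i, D i)ᶜ)
    (S : Set ↥Sphere2) (hST : S ⊆ T) (hS : IsSierpinskiCurve ↥S)
    (hentwined : ∀ γ δ : Set ↥Sphere2,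
      IsPeriphCircleIn S γ → IsPeriphCircleIn T δ → Disjoint γ δ) :
    ∃ Sk : ℕ → Set ↥Sphere2,
      (∀ i, Sk i ⊆ T) ∧
      (∀ i, IsSierpinskiCurve ↥(Sk i)) ∧
      T = S ∪ ⋃ i, Sk i ∧
      (∀ i, IsPeriphCircleIn S (Sk i ∩ S) ∧ IsPeriphCircleIn (Sk i) (Sk i ∩ S)) ∧
      (∀ γ : Set ↥Sphere2, IsPeriphCircleIn S γ → ∃ i, γ = Sk i ∩ S) ∧
      (Pairwise fun i j => Disjoint (Sk i) (Sk j)) ∧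
      Tendsto (fun i => Metric.diam (Sk i)) atTop (𝓝 0) := by
  subst hT
  obtain ⟨C, hC, ⟨g⟩⟩ := hS
  have : Nonempty ↥Sphere2 := ⟨(hC.isConnected_frontier 0).nonempty.some⟩
  obtain ⟨η, hη, hi, rfl⟩ := exists_continuousOn_injOn_image_eq g.symm
  obtain ⟨V, O, h⟩ := hC.exists_isSideFamily hη hi
  have hper : ∀ k, IsPeriphCircleIn (η '' (⋃ i, C i)ᶜ) (η '' frontier (C k)) := fun k =>
    (hC.isPeriphCircleIn_image_iff_exists hη hi).2 ⟨k, rfl⟩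
  have hJ : ∀ k i, Disjoint (closure (D i)) (η '' frontier (C k)) := fun k i =>
    hD.disjoint_closure ((h.image_frontier_subset k).trans hST)
      (hentwined _ _ (hper k) (hD.isPeriphCircleIn_frontier i))
  have hinter := h.closure_inter_inter_image hST
  refine ⟨fun k => closure (V k) ∩ (⋃ i, D i)ᶜ, fun k => inter_subset_right,
    fun k => hD.isSierpinskiCurve_closure_inter (h.isJordanSplit k) (hJ k),
    h.eq_union_iUnion_closure_inter hST, fun k => ?_, fun γ hγ => ?_,
    fun k l hkl => (h.disjoint_closure hkl).mono inter_subset_left inter_subset_left, ?_⟩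
  · simp only [hinter]
    exact ⟨hper k, hD.isPeriphCircleIn_closure_inter (h.isJordanSplit k) (hJ k)⟩
  · obtain ⟨k, rfl⟩ := (hC.isPeriphCircleIn_image_iff_exists hη hi).1 hγ
    exact ⟨k, (hinter k).symm⟩
  · exact squeeze_zero (fun _ => diam_nonneg) (fun k => (diam_mono inter_subset_left
      (Bornology.IsBounded.all _)).trans_eq (diam_closure _)) h.tendsto_diam
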